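/- arXiv:1912.10365 — 3 statements merged into one kernel-verified Lean document; each statement's English description precedes it below -/
import Mathlib

section
/- Let q = p^f be a power of a prime p, let v ∈ F_q[t] be a monic irreducible polynomial of degree e, let k > 0 and d ≥ 0. Then the restricted power sum S̃_d(-k) = Σ_{a monic of degree d, v ∤ a} a^k is zero if and only if either d > L_k + e, or e > d > ⌊L_k⌋. -/
/-!
Write `S_d` for the full power sum `powerSum F d k` and `q = p ^ f`. Writing a monic polynomial of
degree `d + 1` as `X b + x` and using that `∑ x ^ j` is `-1` or `0`, together with the theorem of
Lucas on binomial coefficients, one expands `S_d` as a signed sum over digit paths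
`0 ⊏ N₁ ⊏ ⋯ ⊏ N_d ⊑ k`. Here `⊑` compares base `p` digits, and all `N_s` are multiples of `q - 1`.
A path contributes a nonzero multiple of `X ^ ∑ (k - N_s)`. The central combinatorial fact,
`exists_optimal_path`, says that among the paths of length `d` exactly one has the largest weight
`∑ (k - N_s)`. Hence `S_d ≠ 0` exactly when a path of length `d` exists, and its degree is then this
weight (`powerSum_degree`, `powerSum_eq_zero`). Paths of length `d` exist if and only if `d ≤ L_k`
(`exists_chain`, `IsPath.length_le`, `le_Lval_iff`).

If `d < e` the restricted sum is `S_d`. If `d ≥ e` it is `S_d - v ^ k S_{d-e}`. Dropping the first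
`e` members of a path shows that `deg S_d < e k + deg S_{d-e}` as soon as `S_{d-e} ≠ 0`, so the
difference vanishes only if `S_{d-e} = 0` (`IsPath.drop`, `rPowerSum_ne_zero`).

For `exists_optimal_path`, the digits of `k` are regarded as a stock of units `p ^ j`, where `j`
modulo `f` determines the color of the unit. A multiple `N ⊑ k` of `q - 1` is recorded by the vector
`Y(N)`, indexed by `ZMod f`, of the digit sums of `N p ^ c` divided by `q - 1`. Then `N` uses
`p Y_c - Y_{c+1}` units of color `c`, and the cheapest `N` with a given vector takes the smallest
units of each color. Its value is the `cost` of the vector. A path of largest weight is thus a chain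
of vectors of least total cost. The cost is injective on feasible vectors (`cost_inj`), submodular
(`lattice`), and has a finer exchange property (`exchange`). It follows that a chain of least total
cost is greedy from the top: each member is the cheapest vector allowed by its predecessor
(`minimal_isGreedy`). The point is that deviating from the greedy choice costs at least `2 p ^ J`
at once (`gain_ge`) and can recover less than `2 p ^ J` later (`greedy_compare`). Greedy chains are
unique, and their costs do form a path (`isPath_of_greedy`).
-/

open Polynomial

open scoped Classical

/-- The monic polynomial `X^d + c_{d-1} X^{d-1} + ... + c_0` determined by its lower
coefficients `c : Fin d → F`; these parametrize the monic polynomials of degree `d`. -/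
noncomputable def monicPoly (F : Type) [Field F] (d : ℕ) (c : Fin d → F) : F[X] :=
  X ^ d + ∑ i : Fin d, C (c i) * X ^ (i : ℕ)

/-- `S_d(-k) = Σ_{a monic of degree d} a^k`. -/
noncomputable def powerSum (F : Type) [Field F] [Fintype F] (d k : ℕ) : F[X] :=
  ∑ c : Fin d → F, monicPoly F d c ^ k

/-- `S̃_d(-k) = Σ_{a monic of degree d, v ∤ a} a^k`. -/
noncomputable def rPowerSum (F : Type) [Field F] [Fintype F] (v : F[X]) (d k : ℕ) : F[X] :=
  ∑ c : Fin d → F, if v ∣ monicPoly F d c then 0 else monicPoly F d c ^ k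

/-- `∑ i, m i = k` with no carrying of base-`p` digits. -/
def NoCarry (p : ℕ) {n : ℕ} (m : Fin n → ℕ) (k : ℕ) : Prop :=
  (∑ i, m i = k) ∧
    ∀ j : ℕ, (∑ i, (Nat.digits p (m i)).getD j 0) = (Nat.digits p k).getD j 0

/-- `U_d(k)`. -/
def Uset (p q d k : ℕ) : Set (Fin (d + 1) → ℕ) :=
  {m | NoCarry p m k ∧ ∀ i : Fin (d + 1), 0 < (i : ℕ) → 0 < m i ∧ (q - 1) ∣ m i}

/-- `V_d(k)`. -/
def Vset (p q d k : ℕ) : Set (Fin (d + 1) → ℕ) :=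
  {m | m ∈ Uset p q d k ∧ 0 < m 0}

/-- `W_d(k)`, the index set for the restricted power sum at `v = t`. -/
def Wset (p q d k : ℕ) : Set (Fin (d + 1) → ℕ) :=
  {m | NoCarry p m k ∧
      (∀ i : Fin (d + 1), 0 < (i : ℕ) → (i : ℕ) < d → 0 < m i ∧ (q - 1) ∣ m i) ∧
      (q - 1) ∣ m (Fin.last d)}

/-- the weight `d·m_0 + (d-1)·m_1 + ⋯ + 1·m_{d-1}`. -/
def wt {d : ℕ} (m : Fin (d + 1) → ℕ) : ℕ := ∑ i : Fin (d + 1), (d - (i : ℕ)) * m i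

/-- `L_k = min_{0 ≤ i ≤ f-1} l(k·p^i)/(q-1)` where `l` is the base-`q` digit sum. -/
noncomputable def Lval (q p f k : ℕ) : ℚ :=
  (Finset.Icc 0 (f - 1)).inf' ⟨0, by simp⟩
    (fun i => ((Nat.digits q (k * p ^ i)).sum : ℚ) / ((q : ℚ) - 1))

/-- the `v`-adic multiple zeta value at negative integers `s_1, …, s_r`. -/
noncomputable def zetaV (F : Type) [Field F] [Fintype F] (v : F[X]) {r : ℕ}
    (s : Fin r → ℤ) : F[X] :=
  ∑ᶠ d ∈ {d : Fin r → ℕ | StrictAnti d}, ∏ i, rPowerSum F v (d i) (-(s i)).toNat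

/-- the multiple zeta value at negative integers `s_1, …, s_r`. -/
noncomputable def zetaMZV (F : Type) [Field F] [Fintype F] {r : ℕ} (s : Fin r → ℤ) : F[X] :=
  ∑ᶠ d ∈ {d : Fin r → ℕ | StrictAnti d}, ∏ i, powerSum F (d i) (-(s i)).toNat

/-- the trivial-zero condition for a prime of degree `e`. -/
def TrivialZeroCond (q p f : ℕ) {r : ℕ} (s : Fin r → ℤ) (e : ℕ) : Prop :=
  (∃ i : Fin r, s i < 0 ∧
      Lval q p f (-(s i)).toNat + (e : ℚ) < ((r - 1 - (i : ℕ) : ℕ) : ℚ)) ∨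
  (∃ i j : Fin r, j < i ∧ s i < 0 ∧ s j < 0 ∧
      (r - 1 - (i : ℕ) : ℕ) < e ∧
      Lval q p f (-(s i)).toNat < ((r - 1 - (i : ℕ) : ℕ) : ℚ) ∧
      Lval q p f (-(s j)).toNat < (((i : ℕ) - (j : ℕ) : ℕ) : ℚ))

namespace PS

/-! ### Unit systems and their cost -/


/-- An abstract multiset of powers of `p`, called units, split into `f` colors. There are `M c` units
of color `c`; the `i`-th smallest of them is `p ^ u c i` for `i < M c` (later values of `u c` are
irrelevant). Units of color `c` have exponent `-1 - c` modulo `f`, no exponent carries more than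
`p - 1` units of its color (`gap`), and the units of exponent less than `J` add up to less than
`p ^ J` (`small`). The digits of an integer `k` in base `p` give the example `kSystem`. -/
structure UnitSystem (f p : ℕ) [NeZero f] where
  M : ZMod f → ℕ
  u : ZMod f → ℕ → ℕ
  two_le : 2 ≤ p
  mono : ∀ c, Monotone (u c)
  gap : ∀ c i, i + (p - 1) < M c → u c i + f ≤ u c (i + (p - 1))
  color : ∀ c i, i < M c → (u c i : ZMod f) = -1 - c
  small : ∀ J : ℕ, (∑ c, ∑ i ∈ (Finset.range (M c)).filter (fun i => u c i < J),
    (p : ℤ) ^ u c i) < (p : ℤ) ^ J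

variable {f p : ℕ} [NeZero f]

/-- The number `p y_c - y_{c+1}` of units of color `c` used by the vector `y`. -/
def cnt (p : ℕ) (y : ZMod f → ℤ) (c : ZMod f) : ℤ := p * y c - y (c + 1)

lemma cnt_add {f p : ℕ} (y z : ZMod f → ℤ) (c : ZMod f) : cnt p (y + z) c = cnt p y c + cnt p z c := by
  simp only [cnt, Pi.add_apply]; ring

lemma cnt_sub {f p : ℕ} (y z : ZMod f → ℤ) (c : ZMod f) : cnt p (y - z) c = cnt p y c - cnt p z c := by
  simp only [cnt, Pi.sub_apply]; ring

/-- Induction once around the cycle `ZMod f`, starting just after `r`. -/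
lemma cyc_ind (P : ZMod f → Prop) (r : ZMod f) (h0 : P (r + 1))
    (hs : ∀ c, c ≠ r → P c → P (c + 1)) (c : ZMod f) : P c := by
  have key : ∀ i : ℕ, i < f → P (r + 1 + (i : ZMod f)) := by
    intro i
    induction i with
    | zero => intro _; simpa using h0
    | succ i ih =>
      intro hi
      have h1 := ih (by omega)
      have h2 : r + 1 + (i : ZMod f) ≠ r := by
        intro h
        have h3 : ((i + 1 : ℕ) : ZMod f) = 0 := by
          push_cast
          linear_combination h
        rw [ZMod.natCast_eq_zero_iff] at h3
        exact absurd (Nat.le_of_dvd (by omega) h3) (by omega)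
      have h4 := hs _ h2 h1
      have h5 : r + 1 + (i : ZMod f) + 1 = r + 1 + ((i + 1 : ℕ) : ZMod f) := by
        push_cast; ring
      rwa [h5] at h4
  have := key (c - (r + 1)).val (ZMod.val_lt _)
  rw [ZMod.natCast_zmod_val] at this
  simpa using this

lemma cyc_ind' (P : ZMod f → Prop) (r : ZMod f) (h0 : P r)
    (hs : ∀ c, P c → P (c + 1)) (c : ZMod f) : P c :=
  cyc_ind P r (hs r h0) (fun c _ => hs c) c

/-- A vector is determined by its counts: the map `y ↦ cnt p y` has trivial kernel. -/
lemma eq_zero_of_cnt (hp : 2 ≤ p) (y : ZMod f → ℤ) (h : ∀ c, cnt p y c = 0) : y = 0 := by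
  have hstep : ∀ c, |y (c + 1)| = p * |y c| := by
    intro c
    have h1 : y (c + 1) = p * y c := by have := h c; unfold cnt at this; linarith
    rw [h1, abs_mul, Nat.abs_cast]
  -- a coordinate of largest absolute value cannot be followed by a larger one
  obtain ⟨c, -, hc⟩ := Finset.exists_max_image Finset.univ (fun c => |y c|)
    ⟨(0 : ZMod f), Finset.mem_univ _⟩
  have h2 := hc (c + 1) (Finset.mem_univ _)
  have hp' : (2 : ℤ) ≤ p := by exact_mod_cast hp
  have h3 : |y c| = 0 := by
    rw [hstep] at h2
    nlinarith [abs_nonneg (y c)]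
  funext d
  have := hc d (Finset.mem_univ _)
  simp only [h3] at this
  exact abs_nonpos_iff.mp this

lemma eq_of_cnt (hp : 2 ≤ p) (y z : ZMod f → ℤ) (h : ∀ c, cnt p y c = cnt p z c) : y = z := by
  have := eq_zero_of_cnt hp (y - z) (fun c => by rw [cnt_sub, h, sub_self])
  exact sub_eq_zero.mp this

namespace UnitSystem
variable (S : UnitSystem f p)

/-- The total of the `z` smallest units of color `c`. -/
def phi (c : ZMod f) (z : ℤ) : ℤ := ∑ i ∈ Finset.range z.toNat, (p : ℤ) ^ S.u c i

/-- The unit system has enough units of every color to realise the counts of `y`. -/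
def Feas (y : ZMod f → ℤ) : Prop := ∀ c, 0 ≤ cnt p y c ∧ cnt p y c ≤ S.M c

/-- The least total of a collection of units with the counts of `y`. -/
def cost (y : ZMod f → ℤ) : ℤ := ∑ c, S.phi c (cnt p y c)

/-- The number of units of color `c` of exponent less than `J`. -/
def below (c : ZMod f) (J : ℕ) : ℕ :=
  ((Finset.range (S.M c)).filter (fun i => S.u c i < J)).card

lemma p_pos (S : UnitSystem f p) : 0 < p := lt_of_lt_of_le (by norm_num) S.two_le
lemma two_le' (S : UnitSystem f p) : (2 : ℤ) ≤ p := by exact_mod_cast S.two_le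
lemma pow_pos' (S : UnitSystem f p) (n : ℕ) : (0 : ℤ) < (p : ℤ) ^ n := pow_pos (by have := S.p_pos; exact_mod_cast this) n

lemma lt_below_iff {c : ZMod f} {J i : ℕ} (hi : i < S.M c) : i < S.below c J ↔ S.u c i < J := by
  have hT : ∀ j, j ∈ (Finset.range (S.M c)).filter (fun i => S.u c i < J) →
      ∀ l ≤ j, l ∈ (Finset.range (S.M c)).filter (fun i => S.u c i < J) := by
    intro j hj l hl
    simp only [Finset.mem_filter, Finset.mem_range] at hj ⊢
    exact ⟨by omega, lt_of_le_of_lt (S.mono c hl) hj.2⟩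
  constructor
  · intro h
    by_contra hcon
    have : (Finset.range (S.M c)).filter (fun i => S.u c i < J) ⊆ Finset.range i := by
      intro j hj
      by_contra hji
      have := hT j hj i (by simpa using hji)
      simp only [Finset.mem_filter] at this
      exact hcon this.2
    have := Finset.card_le_card this
    rw [Finset.card_range] at this
    unfold below at h
    omega
  · intro h
    have : Finset.range (i + 1) ⊆ (Finset.range (S.M c)).filter (fun i => S.u c i < J) := by
      intro j hj
      refine hT i (by simp [hi, h]) j ?_
      have := Finset.mem_range.mp hj
      omega
    have := Finset.card_le_card this
    rw [Finset.card_range] at this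
    unfold below
    omega

lemma below_le (c : ZMod f) (J : ℕ) : S.below c J ≤ S.M c := by
  have := Finset.card_filter_le (Finset.range (S.M c)) (fun i => S.u c i < J)
  rwa [Finset.card_range] at this

lemma phi_nonneg (c : ZMod f) (z : ℤ) : 0 ≤ S.phi c z :=
  Finset.sum_nonneg fun _ _ => (S.pow_pos' _).le

lemma phi_mono (c : ZMod f) {z w : ℤ} (h : z ≤ w) : S.phi c z ≤ S.phi c w := by
  unfold phi
  refine Finset.sum_le_sum_of_subset_of_nonneg ?_ fun i _ _ => (S.pow_pos' _).le
  intro i hi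
  simp only [Finset.mem_range] at hi ⊢
  omega

lemma phi_succ (c : ZMod f) {z : ℤ} (h : 0 ≤ z) :
    S.phi c (z + 1) = S.phi c z + (p : ℤ) ^ S.u c z.toNat := by
  unfold phi
  rw [show (z + 1).toNat = z.toNat + 1 by omega, Finset.sum_range_succ]

lemma phi_gain (c : ZMod f) {z w : ℤ} (hz : 0 ≤ z) (h : z < w) :
    S.phi c z + (p : ℤ) ^ S.u c (w - 1).toNat ≤ S.phi c w := by
  have h1 := S.phi_succ c (z := w - 1) (by omega)
  rw [sub_add_cancel] at h1
  have h2 := S.phi_mono c (z := z) (w := w - 1) (by omega)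
  linarith

lemma phi_small (c : ZMod f) {z : ℤ} {J : ℕ} (hM : z ≤ S.M c) (h : 0 < z → S.u c (z - 1).toNat < J) :
    S.phi c z ≤ ∑ i ∈ (Finset.range (S.M c)).filter (fun i => S.u c i < J), (p : ℤ) ^ S.u c i := by
  unfold phi
  refine Finset.sum_le_sum_of_subset_of_nonneg ?_ fun i _ _ => (S.pow_pos' _).le
  intro i hi
  simp only [Finset.mem_range, Finset.mem_filter] at hi ⊢
  refine ⟨by omega, lt_of_le_of_lt (S.mono c ?_) (h (by omega))⟩
  omega

lemma phi_add (c : ZMod f) {z : ℤ} (hz : 0 ≤ z) (t : ℕ) :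
    S.phi c (z + t) = S.phi c z + ∑ i ∈ Finset.range t, (p : ℤ) ^ S.u c (z.toNat + i) := by
  unfold phi
  rw [show (z + t).toNat = z.toNat + t by omega, Finset.sum_range_add]

lemma phi_convex_aux (c : ZMod f) {a b t : ℤ} (ha : 0 ≤ a) (ht : 0 ≤ t) (htb : t ≤ b - a) :
    S.phi c (a + t) + S.phi c (b - t) ≤ S.phi c a + S.phi c b := by
  obtain ⟨n, rfl⟩ := Int.eq_ofNat_of_zero_le ht
  have h1 := S.phi_add c ha n
  have h2 := S.phi_add c (z := b - n) (by omega) n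
  rw [sub_add_cancel] at h2
  have h3 : ∑ i ∈ Finset.range n, (p : ℤ) ^ S.u c (a.toNat + i) ≤
      ∑ i ∈ Finset.range n, (p : ℤ) ^ S.u c ((b - n).toNat + i) := by
    refine Finset.sum_le_sum fun i _ => ?_
    refine pow_le_pow_right₀ (by have := S.two_le'; omega) (S.mono c ?_)
    omega
  linarith

/-- `t` lies between `0` and `d`. -/
def Between (t d : ℤ) : Prop := (0 ≤ t ∧ t ≤ d) ∨ (d ≤ t ∧ t ≤ 0)

/-- Convexity of `phi`: moving two arguments towards each other does not increase the sum. -/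
lemma phi_convex (c : ZMod f) {a b t : ℤ} (ha : 0 ≤ a) (hb : 0 ≤ b) (h : Between t (b - a)) :
    S.phi c (a + t) + S.phi c (b - t) ≤ S.phi c a + S.phi c b := by
  rcases h with ⟨h1, h2⟩ | ⟨h1, h2⟩
  · exact S.phi_convex_aux c ha h1 h2
  · have := S.phi_convex_aux c (a := b) (b := a) (t := -t) hb (by omega) (by omega)
    rw [← sub_eq_add_neg, sub_neg_eq_add] at this
    linarith

/-- If `b` uses a unit beyond `a` whose exponent exceeds that of every unit used by `a` beyond `b`,
then `b` is more expensive: all the smaller units together do not outweigh that one. -/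
lemma cost_lt_of_dom {a b : ZMod f → ℤ} (ha : S.Feas a)
    (c : ZMod f) (hc : cnt p a c < cnt p b c)
    (h : ∀ c', c' ≠ c → cnt p b c' < cnt p a c' →
      S.u c' (cnt p a c' - 1).toNat < S.u c (cnt p b c - 1).toNat) :
    S.cost a < S.cost b := by
  set J := S.u c (cnt p b c - 1).toNat with hJ
  have key : ∀ c', S.phi c' (cnt p a c') + (if c' = c then (p : ℤ) ^ J else 0) ≤
      S.phi c' (cnt p b c') + ∑ i ∈ (Finset.range (S.M c')).filter (fun i => S.u c' i < J),
        (p : ℤ) ^ S.u c' i := by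
    intro c'
    have hnn : 0 ≤ ∑ i ∈ (Finset.range (S.M c')).filter (fun i => S.u c' i < J),
        (p : ℤ) ^ S.u c' i := Finset.sum_nonneg fun _ _ => (S.pow_pos' _).le
    split_ifs with hcc
    · subst hcc
      have := S.phi_gain c' (ha c').1 hc
      linarith
    · by_cases hlt : cnt p b c' < cnt p a c'
      · have h1 := S.phi_small c' (ha c').2 (J := J) (fun _ => h c' hcc hlt)
        have h2 := S.phi_nonneg c' (cnt p b c')
        linarith
      · have h1 := S.phi_mono c' (not_lt.mp hlt)
        linarith
  have hsum := Finset.sum_le_sum fun c' (_ : c' ∈ Finset.univ) => key c'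
  rw [Finset.sum_add_distrib, Finset.sum_add_distrib, Finset.sum_ite_eq' Finset.univ c] at hsum
  simp only [Finset.mem_univ, if_true] at hsum
  have := S.small J
  unfold cost
  linarith

/-- The exponent of the largest unit of color `c` in which `a` and `b` differ. It is meaningful only
when the counts of `a` and `b` at `c` are different. -/
def dexp (a b : ZMod f → ℤ) (c : ZMod f) : ℕ := S.u c (max (cnt p a c) (cnt p b c) - 1).toNat

lemma dexp_color {a b : ZMod f → ℤ} (ha : S.Feas a) (hb : S.Feas b) {c : ZMod f}
    (h : cnt p a c ≠ cnt p b c) : (S.dexp a b c : ZMod f) = -1 - c := by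
  refine S.color c _ ?_
  have h1 := ha c
  have h2 := hb c
  rcases max_cases (cnt p a c) (cnt p b c) with h3 | h3 <;> omega

/-- Distinct vectors have a color in which they differ by a largest unit. It is unique because units
of different colors have different exponents. -/
lemma exists_maxdiff {a b : ZMod f → ℤ} (ha : S.Feas a) (hb : S.Feas b) (hab : a ≠ b) :
    ∃ c, cnt p a c ≠ cnt p b c ∧ ∀ c', c' ≠ c → cnt p a c' ≠ cnt p b c' →
      S.dexp a b c' < S.dexp a b c := by
  have hne : (Finset.univ.filter fun c => cnt p a c ≠ cnt p b c).Nonempty := by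
    by_contra hcon
    rw [Finset.not_nonempty_iff_eq_empty, Finset.filter_eq_empty_iff] at hcon
    exact hab (eq_of_cnt S.two_le a b fun c => by simpa using hcon (Finset.mem_univ c))
  obtain ⟨c, hc, hmax⟩ := Finset.exists_max_image _ (fun c => S.dexp a b c) hne
  simp only [Finset.mem_filter, Finset.mem_univ, true_and] at hc hmax
  refine ⟨c, hc, fun c' hc' hd => lt_of_le_of_ne (hmax c' hd) fun heq => hc' ?_⟩
  have h1 := S.dexp_color ha hb hc
  have h2 := S.dexp_color ha hb hd
  rw [heq, h1] at h2
  linear_combination h2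

lemma dexp_comm (a b : ZMod f → ℤ) (c : ZMod f) : S.dexp a b c = S.dexp b a c := by
  unfold dexp; rw [max_comm]

lemma cost_lt_of_maxdiff {a b : ZMod f → ℤ} (ha : S.Feas a) {c : ZMod f}
    (hc : cnt p a c < cnt p b c)
    (h : ∀ c', c' ≠ c → cnt p a c' ≠ cnt p b c' → S.dexp a b c' < S.dexp a b c) :
    S.cost a < S.cost b := by
  refine S.cost_lt_of_dom ha c hc fun c' hcc hlt => ?_
  have := h c' hcc hlt.ne'
  unfold dexp at this
  rwa [max_eq_left hlt.le, max_eq_right hc.le] at this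

/-- Distinct feasible vectors have distinct costs. -/
lemma cost_inj {a b : ZMod f → ℤ} (ha : S.Feas a) (hb : S.Feas b) (h : S.cost a = S.cost b) :
    a = b := by
  by_contra hab
  obtain ⟨c, hc, hm⟩ := S.exists_maxdiff ha hb hab
  rcases lt_or_gt_of_ne hc with hlt | hlt
  · exact (S.cost_lt_of_maxdiff ha hlt hm).ne h
  · refine (S.cost_lt_of_maxdiff hb hlt fun c' h1 h2 => ?_).ne h.symm
    rw [S.dexp_comm b a, S.dexp_comm b a]
    exact hm c' h1 h2.symm

/-- Exchange property: moving `a` and `b` towards each other by `ε`, in the sense that all counts move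
towards each other, preserves feasibility and does not increase the total cost. -/
lemma exchange {a b ε : ZMod f → ℤ} (ha : S.Feas a) (hb : S.Feas b)
    (h : ∀ c, Between (cnt p ε c) (cnt p (b - a) c)) :
    S.Feas (a + ε) ∧ S.Feas (b - ε) ∧ S.cost (a + ε) + S.cost (b - ε) ≤ S.cost a + S.cost b := by
  refine ⟨fun c => ?_, fun c => ?_, ?_⟩
  · have h1 := ha c; have h2 := hb c; have h3 := h c
    rw [cnt_sub] at h3; rw [cnt_add]
    unfold Between at h3
    omega
  · have h1 := ha c; have h2 := hb c; have h3 := h c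
    rw [cnt_sub] at h3; rw [cnt_sub]
    unfold Between at h3
    omega
  · unfold cost
    rw [← Finset.sum_add_distrib, ← Finset.sum_add_distrib]
    refine Finset.sum_le_sum fun c _ => ?_
    rw [cnt_add, cnt_sub]
    refine S.phi_convex c (ha c).1 (hb c).1 ?_
    rw [← cnt_sub]; exact h c

/-- The feasible vectors form a lattice, on which the cost is submodular. -/
lemma lattice {a b : ZMod f → ℤ} (ha : S.Feas a) (hb : S.Feas b) :
    S.Feas (a ⊔ b) ∧ S.Feas (a ⊓ b) ∧ S.cost (a ⊔ b) + S.cost (a ⊓ b) ≤ S.cost a + S.cost b := by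
  have h := S.exchange (ε := (b - a) ⊔ 0) ha hb (fun c => ?_)
  · have h1 : a + (b - a) ⊔ 0 = a ⊔ b := by
      funext c; simp only [Pi.add_apply, Pi.sup_apply, Pi.sub_apply, Pi.zero_apply]; omega
    have h2 : b - (b - a) ⊔ 0 = a ⊓ b := by
      funext c
      simp only [Pi.sub_apply, Pi.sup_apply, Pi.inf_apply, Pi.zero_apply]; omega
    rwa [h1, h2] at h
  · unfold Between cnt
    simp only [Pi.sup_apply, Pi.sub_apply, Pi.zero_apply]
    have hp := S.two_le'
    rcases le_total 0 (b c - a c) with h1 | h1 <;>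
    rcases le_total 0 (b (c + 1) - a (c + 1)) with h2 | h2 <;>
    simp only [h1, h2, sup_of_le_left, sup_of_le_right]
    · rcases le_total 0 (p * (b c - a c) - (b (c + 1) - a (c + 1))) with h3 | h3
      · left; exact ⟨h3, le_refl _⟩
      · right; exact ⟨le_refl _, h3⟩
    · left; constructor <;> nlinarith
    · right; constructor <;> nlinarith
    · rcases le_total 0 (p * (b c - a c) - (b (c + 1) - a (c + 1))) with h3 | h3
      · left; constructor <;> linarith
      · right; constructor <;> linarith

end UnitSystem
end PS

namespace PS

/-! ### Exchange steps and rounding -/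

variable {f p : ℕ} [NeZero f]

/-- A nonempty set of vectors bounded below contains a vector none of whose
coordinates can be decreased. -/
lemma exists_minimal (T : (ZMod f → ℤ) → Prop) (l w : ZMod f → ℤ) (hT : ∀ x, T x → l ≤ x)
    (hw : T w) : ∃ x, T x ∧ x ≤ w ∧ ∀ c, ¬ T (Function.update x c (x c - 1)) := by
  let m : (ZMod f → ℤ) → ℕ := fun x => (∑ c, (x c - l c)).toNat
  have hex : ∃ n, ∃ x, T x ∧ x ≤ w ∧ m x = n := ⟨_, w, hw, le_refl _, rfl⟩
  obtain ⟨x, hx, hxw, hn⟩ := Nat.find_spec hex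
  refine ⟨x, hx, hxw, fun c hc => ?_⟩
  have hle : Function.update x c (x c - 1) ≤ w := by
    intro d
    by_cases hd : d = c
    · subst hd; simp only [Function.update_self]; have : x d ≤ w d := hxw d; omega
    · rw [Function.update_of_ne hd]; exact hxw d
  refine Nat.find_min hex (m := m (Function.update x c (x c - 1))) ?_ ⟨_, hc, hle, rfl⟩
  rw [← hn]
  have h1 : ∑ d, (Function.update x c (x c - 1) d - l d) < ∑ d, (x d - l d) := by
    refine Finset.sum_lt_sum (fun d _ => ?_) ⟨c, Finset.mem_univ _, ?_⟩
    · by_cases hd : d = c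
      · subst hd; simp
      · rw [Function.update_of_ne hd]
    · simp
  have h2 : 0 ≤ ∑ d, (Function.update x c (x c - 1) d - l d) :=
    Finset.sum_nonneg fun d _ => sub_nonneg.mpr (hT _ hc d)
  simp only [m]
  omega

namespace UnitSystem
variable (S : UnitSystem f p)

/-- If `δ` has a negative count at `r` and is at least `2` just after `r`, some nonzero step `ε ≤ δ / 2`
has all its counts between `0` and those of `δ`. It is a minimal vector satisfying the inequalities
`p ε_c - max (cnt δ_c) 0 ≤ ε_{c+1}`, which the rounded half of `δ` satisfies. -/
lemma toward (S : UnitSystem f p) {δ : ZMod f → ℤ} (hδ : 0 ≤ δ) {r : ZMod f}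
    (hr : cnt p δ r < 0) (hr2 : 2 ≤ δ (r + 1)) :
    ∃ ε : ZMod f → ℤ, ε ≠ 0 ∧ 0 ≤ ε ∧ (∀ c, 2 * ε c ≤ δ c) ∧
      ∀ c, Between (cnt p ε c) (cnt p δ c) := by
  have hp := S.two_le'
  let T : (ZMod f → ℤ) → Prop := fun ε => 0 ≤ ε ∧ 1 ≤ ε (r + 1) ∧
    ∀ c, p * ε c - max (cnt p δ c) 0 ≤ ε (c + 1)
  have hw : T (fun c => δ c / 2) := by
    refine ⟨fun c => ?_, ?_, fun c => ?_⟩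
    · have := hδ c; simp only [Pi.zero_apply] at *; omega
    · show 1 ≤ δ (r + 1) / 2; omega
    · show p * (δ c / 2) - max (cnt p δ c) 0 ≤ δ (c + 1) / 2
      have h1 : δ (c + 1) = p * δ c - cnt p δ c := by unfold cnt; ring
      have h2 : (p : ℤ) * (2 * (δ c / 2)) ≤ p * δ c :=
        mul_le_mul_of_nonneg_left (by omega) (by omega)
      have h3 : (p : ℤ) * (2 * (δ c / 2)) = 2 * (p * (δ c / 2)) := by ring
      rcases max_cases (cnt p δ c) 0 with h4 | h4 <;> omega
  obtain ⟨ε, ⟨h0, h1, h2⟩, hle, hmin⟩ := exists_minimal T 0 _ (fun x hx => hx.1) hw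
  have hup : ∀ c, ε (c + 1) ≤ max (max (if c = r then 1 else 0) (p * ε c - max (cnt p δ c) 0)) 0 := by
    intro c
    by_contra hcon
    rw [not_le, max_lt_iff, max_lt_iff] at hcon
    obtain ⟨⟨ha, hb⟩, hc⟩ := hcon
    refine hmin (c + 1) ⟨fun d => ?_, ?_, fun d => ?_⟩
    · by_cases hd : d = c + 1
      · subst hd; simp only [Function.update_self, Pi.zero_apply]; omega
      · rw [Function.update_of_ne hd]; exact h0 d
    · by_cases hd : r + 1 = c + 1
      · rw [hd]; simp only [Function.update_self]
        rw [if_pos (by simpa using hd.symm)] at ha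
        omega
      · rw [Function.update_of_ne hd]; exact h1
    · have h5 : Function.update ε (c + 1) (ε (c + 1) - 1) d ≤ ε d := by
        by_cases hd : d = c + 1
        · subst hd; simp
        · rw [Function.update_of_ne hd]
      have h6 := mul_le_mul_of_nonneg_left h5 (show (0 : ℤ) ≤ p by omega)
      by_cases hd : d + 1 = c + 1
      · have hd' : d = c := by simpa using hd
        subst hd'
        simp only [Function.update_self]
        omega
      · rw [Function.update_of_ne hd]
        have := h2 d
        omega
  refine ⟨ε, ?_, h0, fun c => ?_, fun c => ?_⟩
  · rintro rfl; simp at h1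
  · have := hle c; simp only at this; omega
  · have h3 := hup c
    have h4 := h2 c
    have h5 := h0 c
    have h6 : cnt p ε c = p * ε c - ε (c + 1) := rfl
    have h8 : 0 ≤ p * ε c := mul_nonneg (by omega) h5
    unfold Between
    by_cases hcr : c = r
    · subst hcr
      rw [if_pos rfl] at h3
      right
      omega
    · rw [if_neg hcr] at h3
      have h7 := h0 (c + 1)
      simp only [Pi.zero_apply] at h7 h5
      rcases le_total 0 (cnt p δ c) with h9 | h9
      · left; omega
      · right; omega

/-- Suppose that every feasible step of at most half the way from `a` to `b` makes `a` more expensive, and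
its reverse makes `b` no cheaper. Then a count of `a` can
exceed that of `b` only by `1`, and only in the special position `b_c = a_c`, `b_{c+1} = a_{c+1} + 1`.
Otherwise `toward` and `exchange` would produce a profitable step. -/
lemma local_cond {a b : ZMod f → ℤ} (ha : S.Feas a) (hb : S.Feas b) (hab : a ≤ b)
    (h : ∀ ε : ZMod f → ℤ, ε ≠ 0 → 0 ≤ ε → (∀ c, 2 * ε c ≤ b c - a c) → S.Feas (a + ε) →
      S.Feas (b - ε) → S.cost a < S.cost (a + ε) ∧ S.cost b ≤ S.cost (b - ε)) (c : ZMod f) :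
    cnt p a c ≤ cnt p b c ∨ (b c = a c ∧ b (c + 1) = a (c + 1) + 1) := by
  by_contra hcon
  push Not at hcon
  obtain ⟨h1, h2⟩ := hcon
  have hp := S.two_le'
  have hδ : 0 ≤ b - a := sub_nonneg.mpr hab
  have hneg : cnt p (b - a) c < 0 := by rw [cnt_sub]; omega
  have h3 : cnt p (b - a) c = p * (b c - a c) - (b (c + 1) - a (c + 1)) := rfl
  have h4 : a c ≤ b c := hab c
  have h5 : a (c + 1) ≤ b (c + 1) := hab (c + 1)
  by_cases h2' : 2 ≤ (b - a) (c + 1)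
  · obtain ⟨ε, hne, h0, h2ε, hbt⟩ := S.toward hδ hneg h2'
    obtain ⟨e1, e2, e3⟩ := S.exchange ha hb hbt
    have := h ε hne h0 h2ε e1 e2
    linarith
  · simp only [Pi.sub_apply] at h2'
    by_cases h6 : b c = a c
    · have := h2 h6
      rw [h6] at h3
      simp at h3
      omega
    · have : (p : ℤ) * 1 ≤ p * (b c - a c) := mul_le_mul_of_nonneg_left (by omega) (by omega)
      omega

/-- Rounding into the feasible cone: a vector whose counts are at most `M`, possibly negative, can be
lowered to one whose counts lie between `0` and `M`, without falling below a lower bound `l ≥ 0`. -/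
lemma exists_feas (hp : 2 ≤ p) {l : ℤ} (hl : 0 ≤ l) {B : ZMod f → ℤ} (hB : ∀ c, l ≤ B c)
    {M : ZMod f → ℤ} (hM : ∀ c, cnt p B c ≤ M c) (hM0 : ∀ c, 0 ≤ M c) :
    ∃ y : ZMod f → ℤ, (∀ c, l ≤ y c) ∧ y ≤ B ∧ ∀ c, 0 ≤ cnt p y c ∧ cnt p y c ≤ M c := by
  have hp' : (2 : ℤ) ≤ p := by exact_mod_cast hp
  -- a maximal vector, obtained as the negative of a minimal one
  let T : (ZMod f → ℤ) → Prop := fun z => (∀ c, l ≤ -z c) ∧ (∀ c, - z c ≤ B c) ∧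
    ∀ c, - z (c + 1) ≤ p * (- z c)
  have hw : T (fun _ => -l) := by
    refine ⟨fun c => by simp, fun c => by simpa using hB c, fun c => ?_⟩
    simp only [neg_neg]; nlinarith
  obtain ⟨z, ⟨h1, h2, h3⟩, -, hmin⟩ := exists_minimal T (-B) _
    (fun x hx c => by have := hx.2.1 c; simp only [Pi.neg_apply]; omega) hw
  refine ⟨-z, h1, h2, fun c => ⟨?_, ?_⟩⟩
  · have := h3 c; simp only [cnt, Pi.neg_apply]; omega
  · by_contra hcon
    rw [not_le] at hcon
    have h4 : cnt p (-z) c = p * (- z c) - (- z (c + 1)) := rfl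
    have h5 := hM0 c
    have h6 : (p : ℤ) * (- z c) ≤ p * B c := mul_le_mul_of_nonneg_left (h2 c) (by omega)
    have h7 : cnt p B c = p * B c - B (c + 1) := rfl
    have h8 := hM c
    refine hmin (c + 1) ⟨fun d => ?_, fun d => ?_, fun d => ?_⟩
    · by_cases hd : d = c + 1
      · subst hd; simp only [Function.update_self]; have := h1 (c + 1); omega
      · rw [Function.update_of_ne hd]; exact h1 d
    · by_cases hd : d = c + 1
      · subst hd; simp only [Function.update_self]; omega
      · rw [Function.update_of_ne hd]; exact h2 d
    · have h9 : - z d ≤ - Function.update z (c + 1) (z (c + 1) - 1) d := by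
        by_cases hd : d = c + 1
        · subst hd; simp
        · rw [Function.update_of_ne hd]
      have h10 := mul_le_mul_of_nonneg_left h9 (show (0 : ℤ) ≤ p by omega)
      by_cases hd : d + 1 = c + 1
      · have hd' : d = c := by simpa using hd
        subst hd'
        simp only [Function.update_self]
        omega
      · rw [Function.update_of_ne hd]
        have := h3 d
        omega

/-- The least vector `ε` which is `1` just after `r` and whose counts off `r` do not exceed the caps `K`:
going around the cycle, `ε_{c+1} = max (p ε_c - K_c) 0`. It stays below any vector `w` satisfying
the same caps. -/
lemma propagate (hp : 2 ≤ p) {w : ZMod f → ℤ} (hw0 : 0 ≤ w) {r : ZMod f} (hw1 : 1 ≤ w (r + 1))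
    {K : ZMod f → ℤ} (hK : ∀ c, 0 ≤ K c) (hw : ∀ c, c ≠ r → cnt p w c ≤ K c) :
    ∃ ε : ZMod f → ℤ, 0 ≤ ε ∧ ε ≤ w ∧ ε (r + 1) = 1 ∧
      ∀ c, c ≠ r → 0 ≤ cnt p ε c ∧ cnt p ε c ≤ K c ∧ (ε (c + 1) = 0 ∨ cnt p ε c = K c) := by
  have hp' : (2 : ℤ) ≤ p := by exact_mod_cast hp
  let T : (ZMod f → ℤ) → Prop := fun ε => 0 ≤ ε ∧ 1 ≤ ε (r + 1) ∧
    ∀ c, c ≠ r → p * ε c - K c ≤ ε (c + 1)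
  have hwT : T w := by
    refine ⟨hw0, hw1, fun c hc => ?_⟩
    have := hw c hc
    unfold cnt at this
    omega
  obtain ⟨ε, ⟨h0, h1, h2⟩, hle, hmin⟩ := exists_minimal T 0 _ (fun x hx => hx.1) hwT
  have hup : ∀ c, ε (c + 1) ≤ if c = r then 1 else max (p * ε c - K c) 0 := by
    intro c
    by_contra hcon
    rw [not_le] at hcon
    have hpos : 1 ≤ ε (c + 1) := by split_ifs at hcon <;> omega
    refine hmin (c + 1) ⟨fun d => ?_, ?_, fun d hdr => ?_⟩
    · by_cases hd : d = c + 1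
      · subst hd; simp only [Function.update_self, Pi.zero_apply]; omega
      · rw [Function.update_of_ne hd]; exact h0 d
    · by_cases hd : r + 1 = c + 1
      · rw [hd]; simp only [Function.update_self]
        rw [if_pos (by simpa using hd.symm)] at hcon
        omega
      · rw [Function.update_of_ne hd]; exact h1
    · have h5 : Function.update ε (c + 1) (ε (c + 1) - 1) d ≤ ε d := by
        by_cases hd : d = c + 1
        · subst hd; simp
        · rw [Function.update_of_ne hd]
      have h6 := mul_le_mul_of_nonneg_left h5 (show (0 : ℤ) ≤ p by omega)
      by_cases hd : d + 1 = c + 1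
      · have hd' : d = c := by simpa using hd
        subst hd'
        rw [if_neg hdr] at hcon
        simp only [Function.update_self]
        omega
      · rw [Function.update_of_ne hd]
        have := h2 d hdr
        omega
  refine ⟨ε, h0, hle, ?_, fun c hc => ?_⟩
  · have := hup r; rw [if_pos rfl] at this; omega
  · have h3 := hup c
    rw [if_neg hc] at h3
    have h4 := h2 c hc
    have h6 : cnt p ε c = p * ε c - ε (c + 1) := rfl
    have h7 := h0 (c + 1)
    have h8 : 0 ≤ p * ε c := mul_nonneg (by omega) (h0 c)
    have h9 := hK c
    simp only [Pi.zero_apply] at h7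
    omega

end UnitSystem
end PS

namespace PS

/-! ### Cheapest vectors below a bound -/

variable {f p : ℕ} [NeZero f]
namespace UnitSystem
variable (S : UnitSystem f p)

/-- `x` is a cheapest feasible vector with `s ≤ x_c < B_c` for all `c`. -/
structure IsArg (s : ℤ) (B x : ZMod f → ℤ) : Prop where
  feas : S.Feas x
  lo : ∀ c, s ≤ x c
  hi : ∀ c, x c + 1 ≤ B c
  min : ∀ z, S.Feas z → (∀ c, s ≤ z c) → (∀ c, z c + 1 ≤ B c) → S.cost x ≤ S.cost z

variable {S}

lemma IsArg.lt {s : ℤ} {B x : ZMod f → ℤ} (h : S.IsArg s B x) {z : ZMod f → ℤ} (hz : S.Feas z)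
    (h1 : ∀ c, s ≤ z c) (h2 : ∀ c, z c + 1 ≤ B c) (hne : z ≠ x) : S.cost x < S.cost z :=
  lt_of_le_of_ne (h.min z hz h1 h2) fun heq => hne (S.cost_inj h.feas hz heq).symm

lemma IsArg.unique {s : ℤ} {B x y : ZMod f → ℤ} (h : S.IsArg s B x) (h' : S.IsArg s B y) :
    x = y := by
  by_contra hne
  have h1 := h.lt h'.feas h'.lo h'.hi (Ne.symm hne)
  have h2 := h'.min x h.feas h.lo h.hi
  omega

lemma cost_nonneg (y : ZMod f → ℤ) : 0 ≤ S.cost y :=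
  Finset.sum_nonneg fun c _ => S.phi_nonneg c _

lemma exists_arg {s : ℤ} {B z : ZMod f → ℤ} (hz : S.Feas z)
    (h1 : ∀ c, s ≤ z c) (h2 : ∀ c, z c + 1 ≤ B c) : ∃ x, S.IsArg s B x := by
  have hex : ∃ n, ∃ x, (S.Feas x ∧ (∀ c, s ≤ x c) ∧ (∀ c, x c + 1 ≤ B c)) ∧
    (S.cost x).toNat = n := ⟨_, z, ⟨hz, h1, h2⟩, rfl⟩
  obtain ⟨x, ⟨hx1, hx2, hx3⟩, hn⟩ := Nat.find_spec hex
  refine ⟨x, hx1, hx2, hx3, fun w hw1 hw2 hw3 => ?_⟩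
  have := Nat.find_min' hex ⟨w, ⟨hw1, hw2, hw3⟩, rfl⟩
  rw [← hn] at this
  have h3 := S.cost_nonneg x
  have h4 := S.cost_nonneg w
  omega

/-- Cheapest vectors grow with the upper bound, by submodularity. -/
lemma IsArg.le_of_le {s : ℤ} {b b' x x' : ZMod f → ℤ} (hbb : b ≤ b') (hx : S.IsArg s b x)
    (hx' : S.IsArg s b' x') : x ≤ x' := by
  obtain ⟨h1, h2, h3⟩ := S.lattice hx.feas hx'.feas
  have h4 := hx.min _ h2 (fun c => le_inf (hx.lo c) (hx'.lo c)) (fun c => by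
    have := hx.hi c
    have h : (x ⊓ x') c ≤ x c := inf_le_left
    omega)
  have h5 := hx'.min _ h1 (fun c => le_trans (hx.lo c) le_sup_left) (fun c => by
    have h6 := hx.hi c
    have h7 := hx'.hi c
    have h8 : b c ≤ b' c := hbb c
    simp only [Pi.sup_apply]
    omega)
  have h6 : S.cost x = S.cost (x ⊓ x') := by omega
  have := S.cost_inj hx.feas h2 h6
  exact inf_eq_left.mp this.symm

/-- The cheapest vector of level `s` below `b' ≤ B` stays below the cheapest vector `b` of level
`s + 1` below `B`. -/
lemma IsArg.le_upper {s : ℤ} {b b' B x' : ZMod f → ℤ} (hb : S.IsArg (s + 1) B b) (hB : b' ≤ B)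
    (hx' : S.IsArg s b' x') : x' ≤ b := by
  obtain ⟨h1, h2, h3⟩ := S.lattice hx'.feas hb.feas
  have h4 := hx'.min _ h2 (fun c => le_inf (hx'.lo c) (by have := hb.lo c; omega)) (fun c => by
    have := hx'.hi c
    have h : (x' ⊓ b) c ≤ x' c := inf_le_left
    omega)
  have h5 := hb.min _ h1 (fun c => le_trans (hb.lo c) le_sup_right) (fun c => by
    have h6 := hb.hi c
    have h7 := hx'.hi c
    have h8 : b' c ≤ B c := hB c
    simp only [Pi.sup_apply]
    omega)
  have h6 : S.cost x' = S.cost (x' ⊓ b) := by omega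
  have := S.cost_inj hx'.feas h2 h6
  exact inf_eq_left.mp this.symm

/-- Giving up the largest unit of color `r` in exchange for units of other colors of smaller exponent
lowers the cost. -/
lemma swap_lt {a ε : ZMod f → ℤ} (ha : S.Feas a) {r : ZMod f} (hr : 1 ≤ cnt p a r)
    (hεr : cnt p ε r = -1)
    (hε : ∀ c, c ≠ r → 0 ≤ cnt p ε c ∧
      cnt p ε c ≤ max ((S.below c (S.u r (cnt p a r - 1).toNat) : ℤ) - cnt p a c) 0) :
    S.Feas (a + ε) ∧ S.cost (a + ε) < S.cost a := by
  have hfe : S.Feas (a + ε) := by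
    intro c
    rw [cnt_add]
    have h1 := ha c
    by_cases hc : c = r
    · subst hc; omega
    · have h2 := hε c hc
      have h3 := S.below_le c (S.u r (cnt p a r - 1).toNat)
      omega
  refine ⟨hfe, S.cost_lt_of_dom hfe r (by rw [cnt_add]; omega) fun c hc hlt => ?_⟩
  have h1 := hfe c
  have h0 := ha c
  have h2 := hε c hc
  rw [cnt_add] at hlt h1 ⊢
  rw [← S.lt_below_iff (by omega)]
  omega

/-- Let `b` be cheapest below `B` and let `b ≤ b' ≤ B` exceed it at `κ + 1`. Then `b` and `b'` differ in
some unit at least as large as the largest unit of color `κ` in `b`. Otherwise that unit could be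
exchanged for smaller ones by a step `ε ≤ b' - b` built with `propagate`. -/
lemma IsArg.diff_ge {s : ℤ} {b b' B : ZMod f → ℤ} (hb : S.IsArg s B b) (hbb : b ≤ b')
    (hB : b' ≤ B) (hb' : S.Feas b') {κ : ZMod f} (hκ : b (κ + 1) < b' (κ + 1))
    (hn : 1 ≤ cnt p b κ) :
    ∃ c, cnt p b c ≠ cnt p b' c ∧ S.u κ (cnt p b κ - 1).toNat ≤ S.dexp b b' c := by
  by_contra hcon
  push Not at hcon
  set j := S.u κ (cnt p b κ - 1).toNat with hj
  have hp := S.two_le'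
  have heq : cnt p b κ = cnt p b' κ := by
    by_contra hne
    have h1 := hcon κ hne
    have h2 : j ≤ S.dexp b b' κ := S.mono κ (by omega)
    omega
  set δ := b' - b with hδ
  have hδ0 : 0 ≤ δ := sub_nonneg.mpr hbb
  have hcδ : ∀ c, cnt p δ c = cnt p b' c - cnt p b c := fun c => cnt_sub _ _ _
  have hδκ : δ (κ + 1) = p * δ κ := by
    have h1 := hcδ κ
    have h2 : cnt p δ κ = p * δ κ - δ (κ + 1) := rfl
    omega
  have hκ1 : 1 ≤ δ (κ + 1) := by simp only [hδ, Pi.sub_apply]; omega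
  have hκ0 : 1 ≤ δ κ := by
    have h1 : 0 ≤ δ κ := hδ0 κ
    by_contra h
    have h2 : δ κ = 0 := by omega
    rw [h2] at hδκ
    omega
  let K : ZMod f → ℤ := fun c => max ((S.below c j : ℤ) - cnt p b c) 0
  have hcap : ∀ c, c ≠ κ → cnt p δ c ≤ K c := by
    intro c _
    rw [hcδ]
    by_cases hlt : cnt p b c < cnt p b' c
    · have h1 := hcon c hlt.ne
      unfold dexp at h1
      rw [max_eq_right hlt.le] at h1
      have h2 := hb' c
      have h3 := hb.feas c
      rw [← S.lt_below_iff (by omega)] at h1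
      simp only [K]
      omega
    · simp only [K]; omega
  obtain ⟨ε, h0, hle, he1, hε⟩ := propagate S.two_le hδ0 hκ1 (fun c => le_max_right _ _) hcap
  -- once a coordinate of `ε` falls short of `δ` by `δ κ`, so do all later ones
  have hP : ∀ c, ε c = 0 ∨ δ κ ≤ δ c - ε c := by
    refine cyc_ind _ κ ?_ fun c hc hPc => ?_
    · right
      rw [he1, hδκ]
      nlinarith
    · obtain ⟨h1, h2, h3⟩ := hε c hc
      have h4 : cnt p ε c = p * ε c - ε (c + 1) := rfl
      have h7 : 0 ≤ ε (c + 1) := h0 (c + 1)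
      rcases h3 with h3 | h3
      · exact Or.inl h3
      · rcases hPc with h5 | h5
        · left
          rw [h5] at h4
          omega
        · right
          have h6 := hcap c hc
          have h3' : cnt p ε c = K c := h3
          have h8 : cnt p δ c = p * δ c - δ (c + 1) := rfl
          have h9 : (δ c - ε c) * 1 ≤ (δ c - ε c) * p :=
            mul_le_mul_of_nonneg_left (by omega) (by omega)
          have h10 : (δ c - ε c) * p = p * δ c - p * ε c := by ring
          omega
  have hεκ : ε κ = 0 := by
    have h1 : 0 ≤ ε κ := h0 κ
    rcases hP κ with h | h <;> omega
  have hcκ : cnt p ε κ = -1 := by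
    have h4 : cnt p ε κ = p * ε κ - ε (κ + 1) := rfl
    rw [hεκ, he1] at h4
    omega
  obtain ⟨hf1, hf2⟩ := swap_lt hb.feas hn hcκ (fun c hc => ⟨(hε c hc).1, (hε c hc).2.1⟩)
  have := hb.min _ hf1 (fun c => by
    have h1 : 0 ≤ ε c := h0 c
    have h2 := hb.lo c
    simp only [Pi.add_apply]; omega) (fun c => by
    have h1 := hb.hi c
    have h2 : b' c ≤ B c := hB c
    simp only [Pi.add_apply]
    have h3 : δ c = b' c - b c := rfl
    rcases hP c with h | h <;> omega)
  omega

/-- The counts of `a` are at most those of `b`, except at dips: colors `c` with `b_c = a_c` and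
`b_{c+1} = a_{c+1} + 1`, where `a` uses exactly one unit more than `b`. -/
def DipCond (p : ℕ) (a b : ZMod f → ℤ) : Prop :=
  ∀ c, cnt p a c ≤ cnt p b c ∨ (b c = a c ∧ b (c + 1) = a (c + 1) + 1)

/-- Cheapest vectors for two comparable upper bounds satisfy the dip condition. -/
lemma IsArg.dipCond {s : ℤ} {b b' B x x' : ZMod f → ℤ} (hb : S.IsArg (s + 1) B b) (hbb : b ≤ b')
    (hB : b' ≤ B) (hx : S.IsArg s b x) (hx' : S.IsArg s b' x') : DipCond p x x' := by
  have hxx := hx.le_of_le hbb hx'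
  have hxb := hb.le_upper hB hx'
  refine S.local_cond hx.feas hx'.feas hxx fun ε hne h0 h2 hf1 hf2 => ⟨?_, ?_⟩
  · refine hx.lt hf1 (fun c => ?_) (fun c => ?_) (by simpa using hne)
    · have h3 : 0 ≤ ε c := h0 c
      have := hx.lo c
      simp only [Pi.add_apply]; omega
    · have h3 : 0 ≤ ε c := h0 c
      have h4 := h2 c
      have h5 := hx.hi c
      have h6 : x' c ≤ b c := hxb c
      simp only [Pi.add_apply]; omega
  · refine hx'.min _ hf2 (fun c => ?_) (fun c => ?_)
    · have h3 : 0 ≤ ε c := h0 c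
      have h4 := h2 c
      have := hx.lo c
      simp only [Pi.sub_apply]; omega
    · have h3 : 0 ≤ ε c := h0 c
      have := hx'.hi c
      simp only [Pi.sub_apply]; omega

/-- The counts of consecutive members of a greedy chain increase. -/
lemma IsArg.cnt_mono {s : ℤ} {b B x : ZMod f → ℤ} (hb : S.IsArg (s + 1) B b)
    (hx : S.IsArg s b x) (c : ZMod f) : cnt p x c ≤ cnt p b c := by
  have hxb : x ≤ b := fun c => by have := hx.hi c; show x c ≤ b c; omega
  have key : DipCond p x b := by
    refine S.local_cond hx.feas hb.feas hxb fun ε hne h0 h2 hf1 hf2 => ⟨?_, ?_⟩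
    · refine hx.lt hf1 (fun c => ?_) (fun c => ?_) (by simpa using hne)
      · have h3 : 0 ≤ ε c := h0 c
        have := hx.lo c
        simp only [Pi.add_apply]; omega
      · have h3 : 0 ≤ ε c := h0 c
        have h4 := h2 c
        have h5 := hx.hi c
        simp only [Pi.add_apply]; omega
    · refine hb.min _ hf2 (fun c => ?_) (fun c => ?_)
      · have h3 : 0 ≤ ε c := h0 c
        have h4 := h2 c
        have := hx.lo c
        have := hb.lo c
        simp only [Pi.sub_apply]; omega
      · have h3 : 0 ≤ ε c := h0 c
        have := hb.hi c
        simp only [Pi.sub_apply]; omega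
  rcases key c with h | h
  · exact h
  · have := hx.hi c; omega

/-- Suppose that relaxing the upper bound from `b` to `b'` changes the cheapest vector from `x` to `x'`.
Then the largest unit in which `x` and `x'` differ is given up by `x'`, and `b` and `b'` differ in a
unit at least `f` positions higher. -/
lemma IsArg.descent {s : ℤ} {b b' B x x' : ZMod f → ℤ} (hb : S.IsArg (s + 1) B b) (hbb : b ≤ b')
    (hB : b' ≤ B) (hb' : S.Feas b') (hx : S.IsArg s b x) (hx' : S.IsArg s b' x') (hne : x ≠ x') :
    ∃ r, cnt p x' r < cnt p x r ∧
      (∀ c, c ≠ r → cnt p x c ≠ cnt p x' c → S.dexp x x' c < S.dexp x x' r) ∧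
      ∃ c, cnt p b c ≠ cnt p b' c ∧ S.dexp x x' r + f ≤ S.dexp b b' c := by
  have hp := S.two_le'
  have hxx := hx.le_of_le hbb hx'
  have hxb := hb.le_upper hB hx'
  have hdip := hb.dipCond hbb hB hx hx'
  have hlt : S.cost x' < S.cost x := hx'.lt hx.feas hx.lo (fun c => by
    have h1 := hx.hi c
    have h2 : b c ≤ b' c := hbb c
    omega) hne
  obtain ⟨r, hr, hmax⟩ := S.exists_maxdiff hx.feas hx'.feas hne
  have hrlt : cnt p x' r < cnt p x r := by
    by_contra hcon
    have := S.cost_lt_of_maxdiff hx.feas (lt_of_le_of_ne (not_lt.mp hcon) hr) hmax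
    omega
  refine ⟨r, hrlt, hmax, ?_⟩
  have hJ : S.dexp x x' r = S.u r (cnt p x r - 1).toNat := by
    unfold dexp; rw [max_eq_left hrlt.le]
  rw [hJ] at hmax ⊢
  set J := S.u r (cnt p x r - 1).toNat with hJdef
  obtain ⟨hd1, hd2⟩ := (hdip r).resolve_left (by omega)
  set δ := x' - x with hδ
  have hδ0 : 0 ≤ δ := sub_nonneg.mpr hxx
  have hcδ : ∀ c, cnt p δ c = cnt p x' c - cnt p x c := fun c => cnt_sub _ _ _
  let K : ZMod f → ℤ := fun c => max ((S.below c J : ℤ) - cnt p x c) 0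
  have hcap : ∀ c, c ≠ r → cnt p δ c ≤ K c := by
    intro c hc
    rw [hcδ]
    by_cases hlt : cnt p x c < cnt p x' c
    · have h1 := hmax c hc hlt.ne
      unfold dexp at h1
      rw [max_eq_right hlt.le] at h1
      have h2 := hx'.feas c
      have h3 := hx.feas c
      rw [← S.lt_below_iff (by omega)] at h1
      simp only [K]
      omega
    · simp only [K]; omega
  obtain ⟨ε, h0, hle, he1, hε⟩ := propagate S.two_le hδ0 (r := r)
    (by simp only [hδ, Pi.sub_apply]; omega) (fun c => le_max_right _ _) hcap
  have hεr : ε r = 0 := by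
    have h1 : 0 ≤ ε r := h0 r
    have h2 : ε r ≤ x' r - x r := hle r
    omega
  have hcr : cnt p ε r = -1 := by
    have h4 : cnt p ε r = p * ε r - ε (r + 1) := rfl
    rw [hεr, he1] at h4
    omega
  have hxr1 : 1 ≤ cnt p x r := by have := (hx'.feas r).1; omega
  obtain ⟨hf1, hf2⟩ := swap_lt hx.feas hxr1 hcr (fun c hc => ⟨(hε c hc).1, (hε c hc).2.1⟩)
  -- `x + ε` is cheaper than `x`, so it must leave the box: `ε` catches up with `b - x` somewhere
  have hκ : ∃ κ, ε κ < b κ - x κ ∧ b (κ + 1) - x (κ + 1) ≤ ε (κ + 1) := by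
    by_contra hcon
    push Not at hcon
    have hall := cyc_ind' (fun c => ε c < b c - x c) r
      (by have := hx.hi r; omega) hcon
    have := hx.min _ hf1 (fun c => by
      have h1 : 0 ≤ ε c := h0 c
      have h2 := hx.lo c
      simp only [Pi.add_apply]; omega) (fun c => by
      have := hall c
      simp only [Pi.add_apply] at *; omega)
    omega
  obtain ⟨κ, hκ1, hκ2⟩ := hκ
  have hle1 : ε (κ + 1) ≤ x' (κ + 1) - x (κ + 1) := hle (κ + 1)
  have hxb1 : x' (κ + 1) ≤ b (κ + 1) := hxb (κ + 1)
  have hbκ : b (κ + 1) < b' (κ + 1) := by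
    have := hx'.hi (κ + 1); omega
  have hxhi := hx.hi (κ + 1)
  have hxhi0 := hx.hi κ
  have hcb : cnt p b κ = cnt p x κ + p * (b κ - x κ) - (b (κ + 1) - x (κ + 1)) := by
    unfold cnt; ring
  have hbM := hb.feas κ
  -- the largest unit of color `κ` in `b` lies at least `f` above `J`
  have hbig : 1 ≤ cnt p b κ ∧ J + f ≤ S.u κ (cnt p b κ - 1).toNat := by
    by_cases hκr : κ = r
    · subst hκr
      have h2 : (p : ℤ) * 1 ≤ p * (b κ - x κ) := mul_le_mul_of_nonneg_left (by omega) (by omega)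
      refine ⟨by omega, ?_⟩
      have h1 := S.gap κ (cnt p x κ - 1).toNat (by omega)
      refine le_trans h1 (S.mono κ ?_)
      omega
    · obtain ⟨h1, h2, h3⟩ := hε κ hκr
      have h4 : cnt p ε κ = K κ := h3.resolve_left (by omega)
      have h5 : cnt p ε κ = p * ε κ - ε (κ + 1) := rfl
      have h6 : (p : ℤ) * 1 ≤ p * (b κ - x κ - ε κ) :=
        mul_le_mul_of_nonneg_left (by omega) (by omega)
      have h7 : (p : ℤ) * (b κ - x κ - ε κ) = p * (b κ - x κ) - p * ε κ := by ring
      have h8 : (S.below κ J : ℤ) - cnt p x κ ≤ K κ := le_max_left _ _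
      have h9 : (S.below κ J : ℤ) + p ≤ cnt p b κ := by omega
      refine ⟨by omega, ?_⟩
      have h10 := S.gap κ (S.below κ J) (by omega)
      have h11 : J ≤ S.u κ (S.below κ J) := by
        rw [← not_lt, ← S.lt_below_iff (by omega)]
        exact lt_irrefl _
      have h12 := S.mono κ (show S.below κ J + (p - 1) ≤ (cnt p b κ - 1).toNat by omega)
      omega
  obtain ⟨c, hc1, hc2⟩ := hb.diff_ge hbb hB hb' hbκ hbig.1
  exact ⟨c, hc1, le_trans hbig.2 hc2⟩

end UnitSystem
end PS

namespace PS

/-! ### Chains of least cost are greedy -/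

variable {f p : ℕ} [NeZero f]
namespace UnitSystem
variable {S : UnitSystem f p}

/-- The exponents `dexp a b c` of different colors are distinct, so the corresponding powers of `p`
below `p ^ n` add up to less than `p ^ n`. -/
lemma sum_dexp_lt {a b : ZMod f → ℤ} (ha : S.Feas a) (hb : S.Feas b) (D : Finset (ZMod f))
    (hD : ∀ c ∈ D, cnt p a c ≠ cnt p b c) {n : ℕ} (h : ∀ c ∈ D, S.dexp a b c < n) :
    ∑ c ∈ D, (p : ℤ) ^ S.dexp a b c < (p : ℤ) ^ n := by
  have hinj : Set.InjOn (S.dexp a b) D := by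
    intro c hc c' hc' heq
    have h1 := S.dexp_color ha hb (hD c hc)
    have h2 := S.dexp_color ha hb (hD c' hc')
    rw [heq, h2] at h1
    linear_combination h1
  have := Nat.geomSum_lt (m := p) (n := n) (s := D.image (S.dexp a b)) S.two_le (by
    intro k hk
    obtain ⟨c, hc, rfl⟩ := Finset.mem_image.mp hk
    exact h c hc)
  rw [Finset.sum_image hinj] at this
  exact_mod_cast this

lemma DipCond.phi_le {a b : ZMod f → ℤ} (hb : S.Feas b) (h : DipCond p a b)
    (c : ZMod f) : S.phi c (cnt p a c) ≤ S.phi c (cnt p b c) +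
      if cnt p b c < cnt p a c then (p : ℤ) ^ S.dexp a b c else 0 := by
  split_ifs with hlt
  · obtain ⟨h1, h2⟩ := (h c).resolve_left (by omega)
    have h3 : cnt p a c = cnt p b c + 1 := by unfold cnt; rw [h1, h2]; ring
    have h4 := S.phi_succ c (hb c).1
    unfold dexp
    rw [max_eq_left hlt.le, h3, h4, add_sub_cancel_right]
  · have := S.phi_mono c (not_lt.mp hlt)
    omega

/-- The cost of `a` exceeds that of `b` by at most the units of `a` lost at the dips. -/
lemma DipCond.loss {a b : ZMod f → ℤ} (ha : S.Feas a) (hb : S.Feas b) (h : DipCond p a b) :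
    S.cost a ≤ S.cost b +
      ∑ c ∈ Finset.univ.filter (fun c => cnt p b c < cnt p a c), (p : ℤ) ^ S.dexp a b c := by
  unfold cost
  rw [Finset.sum_filter, ← Finset.sum_add_distrib]
  exact Finset.sum_le_sum fun c _ => h.phi_le hb c

/-- A color in which `b` uses more units than `a` contributes its largest unit to the difference of the
costs, up to the units lost at the dips. -/
lemma DipCond.gain {a b : ZMod f → ℤ} (ha : S.Feas a) (hb : S.Feas b) (h : DipCond p a b)
    {σ : ZMod f} (hσ : cnt p a σ < cnt p b σ) :
    S.cost a + (p : ℤ) ^ S.dexp a b σ ≤ S.cost b +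
      ∑ c ∈ Finset.univ.filter (fun c => cnt p b c < cnt p a c), (p : ℤ) ^ S.dexp a b c := by
  unfold cost
  rw [Finset.sum_filter, ← Finset.sum_add_distrib]
  rw [← Finset.add_sum_erase _ _ (Finset.mem_univ σ), ← Finset.add_sum_erase (a := σ) _
    (fun c => S.phi c (cnt p b c) + if cnt p b c < cnt p a c then (p : ℤ) ^ S.dexp a b c else 0)
    (Finset.mem_univ σ)]
  have h1 := Finset.sum_le_sum (s := Finset.univ.erase σ) fun c _ => h.phi_le hb c
  have h2 := S.phi_gain σ (ha σ).1 hσ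
  have h3 : S.dexp a b σ = S.u σ (cnt p b σ - 1).toNat := by
    unfold dexp; rw [max_eq_right hσ.le]
  rw [h3, if_neg (by omega)]
  linarith

/-- Two dips are neither at consecutive colors nor at consecutive exponents. -/
lemma DipCond.not_adjacent {a b : ZMod f → ℤ} (ha : S.Feas a) (hb : S.Feas b) (h : DipCond p a b)
    {r c : ZMod f} (hr : cnt p b r < cnt p a r) (hc : cnt p b c < cnt p a c) :
    S.dexp a b c + 1 ≠ S.dexp a b r ∧ c ≠ r + 1 := by
  have hadj : c ≠ r + 1 := by
    rintro rfl
    have h1 := (h r).resolve_left (by omega)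
    have h2 := (h (r + 1)).resolve_left (by omega)
    omega
  refine ⟨fun heq => hadj ?_, hadj⟩
  have h1 := S.dexp_color ha hb hr.ne'
  have h2 := S.dexp_color ha hb hc.ne'
  rw [← heq] at h1
  push_cast at h1
  rw [h2] at h1
  linear_combination -h1

lemma DipCond.two_le {a b : ZMod f → ℤ} (h : DipCond p a b) {r : ZMod f}
    (hr : cnt p b r < cnt p a r) : 2 ≤ f := by
  by_contra hcon
  have h0 : f ≠ 0 := NeZero.ne f
  have h1 : f = 1 := by omega
  subst h1
  have h2 := (h r).resolve_left (by omega)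
  rw [Subsingleton.elim (r + 1) r] at h2
  omega

/-- If the largest difference of `a` and `b` is a dip of exponent `J`, then
`cost a - cost b ≤ (3 / 2) p ^ J`, because the next dip has exponent at most `J - 2`. -/
lemma DipCond.loss_le {a b : ZMod f → ℤ} (ha : S.Feas a) (hb : S.Feas b) (h : DipCond p a b)
    {r : ZMod f} (hr : cnt p b r < cnt p a r)
    (hmax : ∀ c, c ≠ r → cnt p a c ≠ cnt p b c → S.dexp a b c < S.dexp a b r) :
    2 * (S.cost a - S.cost b) ≤ 3 * (p : ℤ) ^ S.dexp a b r := by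
  have h1 := h.loss ha hb
  have hp := S.two_le'
  rw [← Finset.add_sum_erase _ _ (show r ∈ Finset.univ.filter
    (fun c => cnt p b c < cnt p a c) by simpa using hr)] at h1
  set D := (Finset.univ.filter (fun c => cnt p b c < cnt p a c)).erase r with hD
  have hmem : ∀ c ∈ D, c ≠ r ∧ cnt p b c < cnt p a c := by
    intro c hc; simpa [hD] using hc
  have hlt : ∀ c ∈ D, S.dexp a b c + 1 < S.dexp a b r := by
    intro c hc
    obtain ⟨h2, h3⟩ := hmem c hc
    have h4 := hmax c h2 h3.ne'
    have h5 := (h.not_adjacent ha hb hr h3).1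
    omega
  rcases Nat.eq_zero_or_pos (S.dexp a b r) with h0 | h0
  · have hDe : D = ∅ := Finset.eq_empty_of_forall_notMem fun c hc => by
      have := hlt c hc; omega
    rw [hDe, Finset.sum_empty] at h1
    have := S.pow_pos' (S.dexp a b r)
    omega
  · obtain ⟨m, hm⟩ : ∃ m, S.dexp a b r = m + 1 := ⟨S.dexp a b r - 1, by omega⟩
    have h2 := sum_dexp_lt ha hb D (fun c hc => (hmem c hc).2.ne') (n := m) (fun c hc => by
      have := hlt c hc; omega)
    rw [hm] at h1 ⊢
    rw [pow_succ] at h1 ⊢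
    have := S.pow_pos' m
    nlinarith

/-- Let `f ≥ 2`. If `a` is cheaper than `b` and they differ in a unit of exponent at least `J + f`, then `b` costs at
least `2 p ^ J` more than `a`. -/
lemma DipCond.gain_ge {a b : ZMod f → ℤ} (ha : S.Feas a) (hb : S.Feas b) (h : DipCond p a b)
    (hlt : S.cost a < S.cost b) (hf : 2 ≤ f) {J : ℕ} {c₁ : ZMod f} (hc₁ : cnt p a c₁ ≠ cnt p b c₁)
    (hJ : J + f ≤ S.dexp a b c₁) : 2 * (p : ℤ) ^ J ≤ S.cost b - S.cost a := by
  have hp := S.two_le'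
  have hab : a ≠ b := by rintro rfl; exact hc₁ rfl
  obtain ⟨σ, hσ, hmax⟩ := S.exists_maxdiff ha hb hab
  have hσlt : cnt p a σ < cnt p b σ := by
    by_contra hcon
    have := S.cost_lt_of_maxdiff hb (lt_of_le_of_ne (not_lt.mp hcon) hσ.symm) (fun c h1 h2 => by
      rw [S.dexp_comm b a, S.dexp_comm b a]
      exact hmax c h1 h2.symm)
    omega
  have hτ : J + f ≤ S.dexp a b σ := by
    by_cases h1 : c₁ = σ
    · rwa [h1] at hJ
    · have := hmax c₁ h1 hc₁; omega
  have h1 := h.gain ha hb hσlt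
  obtain ⟨m, hm⟩ : ∃ m, S.dexp a b σ = m + 2 := ⟨S.dexp a b σ - 2, by omega⟩
  set D := Finset.univ.filter (fun c => cnt p b c < cnt p a c) with hD
  have hmem : ∀ c ∈ D, cnt p b c < cnt p a c := by
    intro c hc; simpa [hD] using hc
  have hltD : ∀ c ∈ D, S.dexp a b c < m + 2 := by
    intro c hc
    have h2 := hmem c hc
    rw [← hm]
    exact hmax c (by rintro rfl; omega) h2.ne'
  rw [hm] at h1
  have hm0 := S.pow_pos' m
  have hone : (1 : ℤ) ≤ p := by omega
  have hJm : (p : ℤ) ^ J ≤ (p : ℤ) ^ m := pow_le_pow_right₀ hone (by omega)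
  have e1 : (p : ℤ) ^ (m + 1) = p * (p : ℤ) ^ m := by ring
  have e2 : (p : ℤ) ^ (m + 2) = p * (p : ℤ) ^ (m + 1) := by ring
  have i1 : 2 * (p : ℤ) ^ m ≤ (p : ℤ) ^ (m + 1) := by rw [e1]; nlinarith
  have i2 : 2 * (p : ℤ) ^ (m + 1) ≤ (p : ℤ) ^ (m + 2) := by rw [e2]; nlinarith
  -- the worst case is a dip directly below the top difference; no further dip is adjacent to it
  by_cases hex : ∃ c₀ ∈ D, S.dexp a b c₀ = m + 1
  · obtain ⟨c₀, hc₀, he₀⟩ := hex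
    rw [← Finset.add_sum_erase _ _ hc₀, he₀] at h1
    have hrest : ∀ c ∈ D.erase c₀, S.dexp a b c < m := by
      intro c hc
      obtain ⟨h2, h3⟩ := Finset.mem_erase.mp hc
      have h4 := hltD c h3
      have h5 := (h.not_adjacent ha hb (hmem c₀ hc₀) (hmem c h3)).1
      have h6 : S.dexp a b c ≠ m + 1 := by
        intro heq
        have e1 := S.dexp_color ha hb (hmem c h3).ne'
        have e2 := S.dexp_color ha hb (hmem c₀ hc₀).ne'
        rw [heq, ← he₀, e2] at e1
        exact h2 (by linear_combination e1)
      omega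
    -- for `f = 2` every other color is adjacent to `c₀`
    rcases Nat.lt_or_ge 2 f with hf3 | hf2
    · have h2 := sum_dexp_lt ha hb (D.erase c₀)
        (fun c hc => (hmem c (Finset.mem_of_mem_erase hc)).ne') hrest
      have h3 : (p : ℤ) ^ (J + 1) ≤ (p : ℤ) ^ m := pow_le_pow_right₀ hone (by omega)
      have h4 : 2 * (p : ℤ) ^ J ≤ (p : ℤ) ^ (J + 1) := by
        have := S.pow_pos' J
        rw [pow_succ]; nlinarith
      linarith
    · have hf2 : f = 2 := by omega
      have hDe : D.erase c₀ = ∅ := by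
        refine Finset.eq_empty_of_forall_notMem fun c hc => ?_
        obtain ⟨h2, h3⟩ := Finset.mem_erase.mp hc
        have h5 := (h.not_adjacent ha hb (hmem c₀ hc₀) (hmem c h3)).2
        subst hf2
        have key : ∀ x y : ZMod 2, x ≠ y → x = y + 1 := by decide
        exact h5 (key c c₀ h2)
      rw [hDe, Finset.sum_empty] at h1
      linarith
  · push Not at hex
    have h2 := sum_dexp_lt ha hb D (fun c hc => (hmem c hc).ne') (n := m + 1) (fun c hc => by
      have h3 := hltD c hc
      have h4 := hex c hc
      omega)
    linarith

variable (S)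

/-- `IsChain B [y_n, …, y_1]`: feasible vectors with `B > y_n > ⋯ > y_1`, every inequality being strict
in all coordinates, and `y_i ≥ i` in all coordinates. -/
def IsChain : (ZMod f → ℤ) → List (ZMod f → ℤ) → Prop
  | _, [] => True
  | B, y :: l => S.Feas y ∧ (∀ c, (l.length : ℤ) + 1 ≤ y c) ∧ (∀ c, y c + 1 ≤ B c) ∧ IsChain y l

/-- A chain `[y_n, …, y_1]` in which every `y_i` is a cheapest vector below its predecessor with all
coordinates at least `i`. -/
def IsGreedy : (ZMod f → ℤ) → List (ZMod f → ℤ) → Prop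
  | _, [] => True
  | B, y :: l => S.IsArg ((l.length : ℤ) + 1) B y ∧ IsGreedy y l

/-- The total cost of a chain. -/
def total (l : List (ZMod f → ℤ)) : ℤ := (l.map S.cost).sum

variable {S}

lemma total_cons (y : ZMod f → ℤ) (l : List (ZMod f → ℤ)) :
    S.total (y :: l) = S.cost y + S.total l := by simp [total]

lemma IsGreedy.isChain : ∀ {l : List (ZMod f → ℤ)} {B : ZMod f → ℤ}, S.IsGreedy B l → S.IsChain B l
  | [], _, _ => trivial
  | _ :: _, _, h => ⟨h.1.feas, h.1.lo, h.1.hi, IsGreedy.isChain h.2⟩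

lemma IsGreedy.unique : ∀ {l l' : List (ZMod f → ℤ)} {B : ZMod f → ℤ}, l.length = l'.length →
    S.IsGreedy B l → S.IsGreedy B l' → l = l'
  | [], [], _, _, _, _ => rfl
  | [], _ :: _, _, h, _, _ => by simp at h
  | _ :: _, [], _, h, _, _ => by simp at h
  | y :: l, y' :: l', B, hlen, h, h' => by
    have hl : l.length = l'.length := by simpa using hlen
    obtain ⟨h1, h2⟩ := h
    obtain ⟨h3, h4⟩ := h'
    rw [← hl] at h3
    have := h1.unique h3
    subst this
    rw [IsGreedy.unique hl h2 h4]

/-- Below a cheapest vector of level `n + 1` there are feasible vectors of level `n`, so greedy chains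
can be continued downwards. -/
lemma IsArg.exists_below {n : ℕ} {B b : ZMod f → ℤ} (hb : S.IsArg ((n : ℤ) + 1) B b) :
    ∃ x, S.IsArg (n : ℤ) b x := by
  have hp := S.two_le'
  obtain ⟨β, h1, h2, h3⟩ := exists_feas S.two_le (l := 1) (by norm_num)
    (B := fun c => b c - n) (M := fun c => cnt p b c) (fun c => by have := hb.lo c; omega)
    (fun c => by
      have : cnt p (fun c => b c - n) c = cnt p b c - (p - 1) * n := by unfold cnt; ring
      rw [this]
      have : 0 ≤ ((p : ℤ) - 1) * n := mul_nonneg (by omega) (by omega)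
      omega) (fun c => (hb.feas c).1)
  refine exists_arg (z := b - β) (fun c => ?_) (fun c => ?_) (fun c => ?_)
  · rw [cnt_sub]
    have h4 := h3 c
    have h5 := hb.feas c
    omega
  · have h4 : β c ≤ b c - n := h2 c
    simp only [Pi.sub_apply]; omega
  · have := h1 c
    simp only [Pi.sub_apply]; omega

lemma IsArg.exists_greedy : ∀ (n : ℕ) {B b : ZMod f → ℤ}, S.IsArg ((n : ℤ) + 1) B b →
    ∃ l, l.length = n ∧ S.IsGreedy b l
  | 0, _, _, _ => ⟨[], rfl, trivial⟩
  | n + 1, B, b, hb => by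
    obtain ⟨x, hx⟩ := hb.exists_below
    push_cast at hx
    obtain ⟨l, hl, hg⟩ := IsArg.exists_greedy n hx
    exact ⟨x :: l, by simp [hl], by rw [hl]; exact hx, hg⟩

/-- Let `b` be cheapest below `B` and `b ≤ b' ≤ B`, and let `h` and `l` be greedy chains of the same
length below `b` and below `b'`. Then the relaxation from `b` to `b'` gains nothing, or less than
`2 p ^ J` for some `J` such that `b` and `b'` differ in a unit of exponent at least `J + f`. -/
lemma greedy_compare : ∀ (h l : List (ZMod f → ℤ)) {B b b' : ZMod f → ℤ}, h.length = l.length →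
    S.IsArg ((l.length : ℤ) + 1) B b → b ≤ b' → b' ≤ B → S.Feas b' → S.IsGreedy b h →
    S.IsGreedy b' l → S.total h = S.total l ∨ ∃ J : ℕ, 2 ≤ f ∧
      S.total h - S.total l < 2 * (p : ℤ) ^ J ∧
      ∃ c, cnt p b c ≠ cnt p b' c ∧ J + f ≤ S.dexp b b' c
  | [], [], _, _, _, _, _, _, _, _, _, _ => Or.inl rfl
  | [], _ :: _, _, _, _, hlen, _, _, _, _, _, _ => by simp at hlen
  | _ :: _, [], _, _, _, hlen, _, _, _, _, _, _ => by simp at hlen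
  | x :: h, x' :: l, B, b, b', hlen, hb, hbb, hB, hb', hg, hg' => by
    have hl : h.length = l.length := by simpa using hlen
    obtain ⟨hx, hh⟩ := hg
    obtain ⟨hx', hh'⟩ := hg'
    rw [hl] at hx
    push_cast [List.length_cons] at hb
    by_cases hne : x = x'
    · subst hne
      rw [hh.unique hl hh']
      exact Or.inl rfl
    · right
      obtain ⟨r, hr, hmax, hc⟩ := hb.descent hbb hB hb' hx hx' hne
      have hdip := hb.dipCond hbb hB hx hx'
      have hf := hdip.two_le hr
      have hloss := hdip.loss_le hx.feas hx'.feas hr hmax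
      refine ⟨S.dexp x x' r, hf, ?_, hc⟩
      rw [total_cons, total_cons]
      have hpos := S.pow_pos' (S.dexp x x' r)
      rcases greedy_compare h l hl hx (hx.le_of_le hbb hx') (hb.le_upper hB hx') hx'.feas hh hh'
        with heq | ⟨J, -, hJ, c, hc1, hc2⟩
      · omega
      -- later gains are geometrically smaller: `3 / 2 p ^ (J + 2) + 2 p ^ J ≤ 2 p ^ (J + 2)`
      · have hJr : J + 2 ≤ S.dexp x x' r := by
          by_cases hcr : c = r
          · subst hcr; omega
          · have := hmax c hcr hc1; omega
        have hp := S.two_le'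
        have h1 : (p : ℤ) ^ (J + 2) ≤ (p : ℤ) ^ S.dexp x x' r :=
          pow_le_pow_right₀ (by omega) hJr
        have h2 : 4 * (p : ℤ) ^ J ≤ (p : ℤ) ^ (J + 2) := by
          have := S.pow_pos' J
          have h3 : (4 : ℤ) ≤ (p : ℤ) ^ 2 := by nlinarith
          rw [pow_add]; nlinarith
        omega

/-- A chain of least total cost is greedy. If its top `y` were not the cheapest possible vector `g`,
then `g ≤ y`, and replacing `y` by `g` would save at least `2 p ^ J` (`gain_ge`), whereas the rest of
the chain below the tighter bound `g` costs less than `2 p ^ J` more (`greedy_compare`). -/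
theorem minimal_isGreedy : ∀ (l : List (ZMod f → ℤ)) {B : ZMod f → ℤ}, S.IsChain B l →
    (∀ l', l'.length = l.length → S.IsChain B l' → S.total l ≤ S.total l') → S.IsGreedy B l
  | [], _, _, _ => trivial
  | y :: l, B, ⟨hy, hlo, hhi, hl⟩, hmin => by
    have hgl : S.IsGreedy y l := minimal_isGreedy l hl fun l' hlen hl' => by
      have := hmin (y :: l') (by simp [hlen]) ⟨hy, by rwa [hlen], hhi, hl'⟩
      rw [total_cons, total_cons] at this
      omega
    obtain ⟨g, hg⟩ := exists_arg hy hlo hhi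
    by_cases hyg : y = g
    · subst hyg; exact ⟨hg, hgl⟩
    exfalso
    -- replacing the head `y` by another admissible head cannot lower the cost
    have hhead : ∀ z, S.Feas z → (∀ c, (l.length : ℤ) + 1 ≤ z c) → (∀ c, z c + 1 ≤ B c) →
        S.IsChain z l → S.cost y ≤ S.cost z := by
      intro z h1 h2 h3 h4
      have := hmin (z :: l) rfl ⟨h1, h2, h3, h4⟩
      rw [total_cons, total_cons] at this
      omega
    have hchain : ∀ {m : List (ZMod f → ℤ)} {b b' : ZMod f → ℤ}, b ≤ b' → S.IsChain b m →
        S.IsChain b' m := by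
      intro m b b' hbb hm
      cases m with
      | nil => trivial
      | cons x m =>
        exact ⟨hm.1, hm.2.1, fun c => le_trans (hm.2.2.1 c) (hbb c), hm.2.2.2⟩
    -- uncrossing: `y ⊔ g` is an admissible head, so `y ⊓ g` is no more expensive than `g`
    have hgy : g ≤ y := by
      obtain ⟨h1, h2, h3⟩ := S.lattice hy hg.feas
      have h4 := hhead _ h1 (fun c => le_trans (hlo c) le_sup_left)
        (fun c => by
          have := hhi c; have := hg.hi c; simp only [Pi.sup_apply]; omega)
        (hchain le_sup_left hl)
      have h5 := hg.min _ h2 (fun c => le_inf (hlo c) (hg.lo c)) (fun c => by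
          have := hhi c; have := hg.hi c; simp only [Pi.inf_apply]; omega)
      have h6 : S.cost g = S.cost (y ⊓ g) := by omega
      have := S.cost_inj hg.feas h2 h6
      exact inf_eq_right.mp this.symm
    have hyB : y ≤ B := fun c => by
      have := hhi c; show y c ≤ B c; omega
    have hlt : S.cost g < S.cost y := hg.lt hy hlo hhi hyg
    have hdip : DipCond p g y := by
      refine S.local_cond hg.feas hy hgy fun ε hne h0 h2 hf1 hf2 => ⟨?_, ?_⟩
      · refine hg.lt hf1 (fun c => ?_) (fun c => ?_) (by simpa using hne)
        · have h3 : 0 ≤ ε c := h0 c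
          have := hg.lo c
          simp only [Pi.add_apply]; omega
        · have h3 : 0 ≤ ε c := h0 c
          have h4 := h2 c
          have h5 := hhi c
          simp only [Pi.add_apply]; omega
      · refine hhead _ hf2 (fun c => ?_) (fun c => ?_) ?_
        · have h3 : 0 ≤ ε c := h0 c
          have h4 := h2 c
          have := hg.lo c
          simp only [Pi.sub_apply]; omega
        · have h3 : 0 ≤ ε c := h0 c
          have := hhi c
          simp only [Pi.sub_apply]; omega
        · cases l with
          | nil => trivial
          | cons x l =>
            refine ⟨hl.1, hl.2.1, fun c => ?_, hl.2.2.2⟩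
            have hga : S.IsArg ((l.length : ℤ) + 1 + 1) B g := by
              have := hg; push_cast [List.length_cons] at this; exact this
            have h6 : x c ≤ g c := hga.le_upper hyB hgl.1 c
            have h7 := hl.2.2.1 c
            have h3 : 0 ≤ ε c := h0 c
            have h4 := h2 c
            simp only [Pi.sub_apply]; omega
    obtain ⟨h, hhl, hh⟩ := hg.exists_greedy
    have hfin := hmin (g :: h) (by simp [hhl]) ⟨hg.feas, by rw [hhl]; exact hg.lo, hg.hi,
      hh.isChain⟩
    rw [total_cons, total_cons] at hfin
    rcases greedy_compare h l hhl hg hgy hyB hy hh hgl with heq | ⟨J, hf, hJ, c, hc1, hc2⟩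
    · omega
    · have := hdip.gain_ge hg.feas hy hlt hf hc1 hc2
      omega

/-- If there are chains of length `d` at all, exactly one of them has least total cost, and it is greedy. -/
theorem exists_optimal {d : ℕ} {B : ZMod f → ℤ} (hex : ∃ l, l.length = d ∧ S.IsChain B l) :
    ∃ l, l.length = d ∧ S.IsGreedy B l ∧ ∀ l', l'.length = d → S.IsChain B l' →
      S.total l ≤ S.total l' ∧ (S.total l = S.total l' → l' = l) := by
  have htot : ∀ l : List (ZMod f → ℤ), 0 ≤ S.total l := fun l => by
    induction l with
    | nil => simp [total]
    | cons y l ih => rw [total_cons]; have := S.cost_nonneg y; omega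
  have hex' : ∃ n, ∃ l, (l.length = d ∧ S.IsChain B l) ∧ (S.total l).toNat = n := by
    obtain ⟨l, hl⟩ := hex; exact ⟨_, l, hl, rfl⟩
  obtain ⟨l, ⟨hl1, hl2⟩, hn⟩ := Nat.find_spec hex'
  have hmin : ∀ l', l'.length = d → S.IsChain B l' → S.total l ≤ S.total l' := by
    intro l' h1 h2
    have := Nat.find_min' hex' ⟨l', ⟨h1, h2⟩, rfl⟩
    rw [← hn] at this
    have h3 := htot l
    have h4 := htot l'
    omega
  have hgr := minimal_isGreedy l hl2 (by rw [hl1]; exact hmin)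
  refine ⟨l, hl1, hgr, fun l' h1 h2 => ⟨hmin l' h1 h2, fun heq => ?_⟩⟩
  have hgr' := minimal_isGreedy l' h2 (by rw [h1, ← heq]; exact hmin)
  exact hgr'.unique (by rw [h1, hl1]) hgr

end UnitSystem
end PS

namespace PS

/-! ### Base `p` digits -/


/-- The `j`-th base `p` digit of `n`. -/
def dig (p n j : ℕ) : ℕ := n / p ^ j % p

lemma dig_lt {p : ℕ} (hp : 2 ≤ p) (n j : ℕ) : dig p n j < p := Nat.mod_lt _ (by omega)

lemma sum_dig (p n m : ℕ) : ∑ j ∈ Finset.range m, p ^ j * dig p n j = n % p ^ m := by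
  induction m with
  | zero => simp [Nat.mod_one]
  | succ m ih => rw [Finset.sum_range_succ, ih, Nat.mod_pow_succ]; rfl

lemma sum_dig_eq {p n m : ℕ} (h : n < p ^ m) : ∑ j ∈ Finset.range m, p ^ j * dig p n j = n := by
  rw [sum_dig, Nat.mod_eq_of_lt h]

lemma dig_succ (p n j : ℕ) : dig p n (j + 1) = dig p (n / p) j := by
  unfold dig
  rw [Nat.div_div_eq_div_mul, pow_succ']

lemma sum_digits_lt {p : ℕ} (D : ℕ → ℕ) (hD : ∀ j, D j < p) (m : ℕ) :
    ∑ j ∈ Finset.range m, p ^ j * D j < p ^ m := by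
  induction m with
  | zero => simp
  | succ m ih =>
    rw [Finset.sum_range_succ, pow_succ]
    have h1 : p ^ m * (D m + 1) ≤ p ^ m * p := Nat.mul_le_mul_left _ (hD m)
    rw [mul_add, mul_one] at h1
    omega

lemma dig_sum {p : ℕ} (hp : 2 ≤ p) (m : ℕ) : ∀ (D : ℕ → ℕ), (∀ j, D j < p) → ∀ i,
    dig p (∑ j ∈ Finset.range m, p ^ j * D j) i = if i < m then D i else 0 := by
  induction m with
  | zero => intro D _ i; simp [dig]
  | succ m ih =>
    intro D hD i
    have hsum : ∑ j ∈ Finset.range (m + 1), p ^ j * D j =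
        D 0 + p * ∑ j ∈ Finset.range m, p ^ j * D (j + 1) := by
      rw [Finset.sum_range_succ', Finset.mul_sum, add_comm]
      congr 1
      · simp
      · refine Finset.sum_congr rfl fun j _ => ?_
        ring
    rw [hsum]
    cases i with
    | zero =>
      simp only [dig, pow_zero, Nat.div_one, Nat.add_mul_mod_self_left]
      simp [Nat.mod_eq_of_lt (hD 0)]
    | succ i =>
      rw [dig_succ, Nat.add_mul_div_left _ _ (by omega), Nat.div_eq_of_lt (hD 0), zero_add,
        ih (fun j => D (j + 1)) (fun j => hD _)]
      simp

lemma dig_eq_zero {p n j : ℕ} (h : n < p ^ j) : dig p n j = 0 := by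
  unfold dig
  rw [Nat.div_eq_of_lt h, Nat.zero_mod]

/-- The digitwise order `a ⊑ b`: each base `p` digit of `a` is at most that of `b`. -/
def Dle (p a b : ℕ) : Prop := ∀ j, dig p a j ≤ dig p b j

lemma lt_pow_of_le {p : ℕ} (hp : 2 ≤ p) {n k : ℕ} (h : n ≤ k) : n < p ^ k :=
  lt_of_le_of_lt h (Nat.lt_pow_self (by omega))

lemma Dle.le {p a b : ℕ} (hp : 2 ≤ p) (h : Dle p a b) : a ≤ b := by
  have h1 := sum_dig_eq (lt_pow_of_le hp (le_max_left a b))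
  have h2 := sum_dig_eq (lt_pow_of_le hp (le_max_right a b))
  calc a = _ := h1.symm
    _ ≤ _ := Finset.sum_le_sum fun j _ => Nat.mul_le_mul_left _ (h j)
    _ = b := h2

lemma Dle.refl (p a : ℕ) : Dle p a a := fun _ => le_refl _

lemma Dle.zero (p a : ℕ) : Dle p 0 a := fun j => by simp [dig]

lemma Dle.trans {p a b c : ℕ} (h : Dle p a b) (h' : Dle p b c) : Dle p a c :=
  fun j => (h j).trans (h' j)

lemma Dle.dig_sub {p a b : ℕ} (hp : 2 ≤ p) (h : Dle p a b) (j : ℕ) :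
    dig p (b - a) j = dig p b j - dig p a j := by
  have hb : b < p ^ b := lt_pow_of_le hp le_rfl
  have ha : a < p ^ b := lt_pow_of_le hp (h.le hp)
  have h1 : b - a = ∑ j ∈ Finset.range b, p ^ j * (dig p b j - dig p a j) := by
    rw [← Nat.add_right_inj (n := a), Nat.add_sub_cancel' (h.le hp)]
    conv_lhs => rw [← sum_dig_eq hb]
    conv_rhs => lhs; rw [← sum_dig_eq ha]
    rw [← Finset.sum_add_distrib]
    refine Finset.sum_congr rfl fun j _ => ?_
    rw [← mul_add, Nat.add_sub_cancel' (h j)]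
  rw [h1, dig_sum hp b _ (fun j => by have := dig_lt hp b j; omega)]
  split_ifs with hj
  · rfl
  · have : b < p ^ j := lt_of_lt_of_le hb (Nat.pow_le_pow_right (by omega) (by omega))
    rw [dig_eq_zero this, Nat.zero_sub]

lemma dig_add {p a b : ℕ} (hp : 2 ≤ p) (h : ∀ j, dig p a j + dig p b j < p) (j : ℕ) :
    dig p (a + b) j = dig p a j + dig p b j := by
  have ha : a < p ^ (a + b + j + 1) := lt_pow_of_le hp (by omega)
  have hb : b < p ^ (a + b + j + 1) := lt_pow_of_le hp (by omega)
  have h1 : a + b = ∑ i ∈ Finset.range (a + b + j + 1), p ^ i * (dig p a i + dig p b i) := by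
    simp only [mul_add, Finset.sum_add_distrib]
    rw [sum_dig_eq ha, sum_dig_eq hb]
  conv_lhs => rw [h1]
  rw [dig_sum hp _ _ h, if_pos (by omega)]

/-- If `P ⊑ k` and `j ⊑ k - P`, then `P ⊑ P + j ⊑ k`. -/
lemma Dle.add_of_sub {p P j k : ℕ} (hp : 2 ≤ p) (hP : Dle p P k) (hj : Dle p j (k - P)) :
    Dle p P (P + j) ∧ Dle p (P + j) k := by
  have h1 : ∀ i, dig p P i + dig p j i ≤ dig p k i := by
    intro i
    have h2 := hj i
    rw [hP.dig_sub hp] at h2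
    have h3 := hP i
    omega
  have h4 := dig_add hp (fun i => lt_of_le_of_lt (h1 i) (dig_lt hp k i))
  exact ⟨fun i => by rw [h4]; omega, fun i => by rw [h4]; exact h1 i⟩

lemma Dle.sub_sub {p P N k : ℕ} (hp : 2 ≤ p) (hPN : Dle p P N) (hNk : Dle p N k) :
    Dle p (N - P) (k - P) := by
  intro j
  rw [hPN.dig_sub hp, (hPN.trans hNk).dig_sub hp]
  exact Nat.sub_le_sub_right (hNk j) _

/-! ### Digit sums -/

variable {f p : ℕ} [NeZero f]

/-- The number of units of color `c` of `N`: the sum of the base `p` digits of `N` at the positions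
`j < L` with `j = -1 - c` modulo `f`. -/
def dcnt (p L N : ℕ) (c : ZMod f) : ℕ :=
  ∑ j ∈ Finset.range L, if (j : ZMod f) = -1 - c then dig p N j else 0

/-- The twisted digit sum of `N`: the base `p` digit at position `j < L` has weight
`p ^ ((j + c) mod f)`. It is the base `p ^ f` digit sum of `N p ^ c`, see `digits_sum_eq_zsum`. -/
def zsum (p L N : ℕ) (c : ZMod f) : ℕ :=
  ∑ j ∈ Finset.range L, dig p N j * p ^ ((j : ZMod f) + c).val

lemma val_add_one' (x : ZMod f) (hx : x ≠ -1) : (x + 1).val = x.val + 1 := by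
  have h0 : f ≠ 0 := NeZero.ne f
  have hlt := ZMod.val_lt x
  have h1 : x.val + 1 < f := by
    by_contra hcon
    apply hx
    have h2 : ((x.val + 1 : ℕ) : ZMod f) = 0 := by
      rw [ZMod.natCast_eq_zero_iff, show x.val + 1 = f by omega]
    push_cast at h2
    rw [ZMod.natCast_zmod_val] at h2
    linear_combination h2
  have h2 : x + 1 = ((x.val + 1 : ℕ) : ZMod f) := by
    push_cast; rw [ZMod.natCast_zmod_val]
  rw [h2, ZMod.val_natCast, Nat.mod_eq_of_lt h1]

lemma val_neg_one' : (-1 : ZMod f).val + 1 = f := by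
  have h0 : f ≠ 0 := NeZero.ne f
  have h2 : (-1 : ZMod f) = ((f - 1 : ℕ) : ZMod f) := by
    rw [Nat.cast_sub (by omega)]; simp
  rw [h2, ZMod.val_natCast, Nat.mod_eq_of_lt (by omega)]
  omega

/-- `p Z_c - Z_{c+1} = (q-1) n_c`. -/
lemma zsum_rec (L N : ℕ) (c : ZMod f) :
    (p : ℤ) * zsum p L N c - zsum p L N (c + 1) = ((p : ℤ) ^ f - 1) * dcnt p L N c := by
  unfold zsum dcnt
  push_cast
  rw [Finset.mul_sum, Finset.mul_sum, ← Finset.sum_sub_distrib]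
  refine Finset.sum_congr rfl fun j _ => ?_
  split_ifs with h
  · have h1 : (j : ZMod f) + c = -1 := by rw [h]; ring
    rw [← add_assoc, h1, neg_add_cancel, ZMod.val_zero]
    have h2 : (p : ℤ) ^ f = (p : ℤ) ^ (-1 : ZMod f).val * p := by
      rw [← pow_succ, val_neg_one']
    rw [h2]; ring
  · have h1 : (j : ZMod f) + c ≠ -1 := fun h' => h (by linear_combination h')
    rw [← add_assoc, val_add_one' _ h1, pow_succ]
    ring

lemma zsum_zero_modEq {L N : ℕ} (hN : N < p ^ L) :
    ((p : ℤ) ^ f - 1) ∣ (zsum p L N (0 : ZMod f) : ℤ) - N := by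
  have hN' : (N : ℤ) = ∑ j ∈ Finset.range L, (p : ℤ) ^ j * dig p N j := by
    exact_mod_cast (sum_dig_eq hN).symm
  have e : (zsum p L N (0 : ZMod f) : ℤ) - N =
      ∑ j ∈ Finset.range L, ((dig p N j : ℤ) * (p : ℤ) ^ ((j : ZMod f) + 0).val -
        (p : ℤ) ^ j * dig p N j) := by
    rw [Finset.sum_sub_distrib, ← hN']
    unfold zsum
    push_cast
    rfl
  rw [e]
  refine Finset.dvd_sum fun j _ => ?_
  have h1 : (j : ℕ) = ((j : ZMod f) + 0).val + f * (j / f) := by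
    rw [add_zero, ZMod.val_natCast, Nat.mod_add_div]
  have h2 : (p : ℤ) ^ f - 1 ∣ ((p : ℤ) ^ f) ^ (j / f) - 1 := by
    simpa using sub_dvd_pow_sub_pow ((p : ℤ) ^ f) 1 (j / f)
  have h3 : (dig p N j : ℤ) * (p : ℤ) ^ ((j : ZMod f) + 0).val - (p : ℤ) ^ j * dig p N j =
      (-(dig p N j : ℤ) * (p : ℤ) ^ ((j : ZMod f) + 0).val) * (((p : ℤ) ^ f) ^ (j / f) - 1) := by
    conv_lhs => rw [show (p : ℤ) ^ j = (p : ℤ) ^ (((j : ZMod f) + 0).val + f * (j / f)) by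
      rw [← h1]]
    rw [pow_add, pow_mul]; ring
  rw [h3]
  exact Dvd.dvd.mul_left h2 _

lemma dvd_zsum (hp : 2 ≤ p) {L N : ℕ} (hN : N < p ^ L) (hd : (p ^ f - 1) ∣ N) (c : ZMod f) :
    ((p : ℤ) ^ f - 1) ∣ zsum p L N c := by
  have hd' : ((p : ℤ) ^ f - 1) ∣ N := by
    have h1 : ((p ^ f - 1 : ℕ) : ℤ) = (p : ℤ) ^ f - 1 := by
      rw [Nat.cast_sub (Nat.one_le_pow _ _ (by omega))]; simp
    rw [← h1]; exact_mod_cast hd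
  refine cyc_ind' (fun c => ((p : ℤ) ^ f - 1) ∣ zsum p L N c) 0 ?_ (fun c hc => ?_) c
  · have := dvd_add (zsum_zero_modEq (f := f) hN) hd'
    rwa [sub_add_cancel] at this
  · have h1 := zsum_rec (p := p) L N c
    have h2 : (zsum p L N (c + 1) : ℤ) = p * zsum p L N c - ((p : ℤ) ^ f - 1) * dcnt p L N c := by
      linarith
    rw [h2]
    exact dvd_sub (Dvd.dvd.mul_left hc _) (Dvd.intro _ rfl)

lemma digits_sum_rec {q : ℕ} (hq : 2 ≤ q) (n : ℕ) :
    (Nat.digits q n).sum = n % q + (Nat.digits q (n / q)).sum := by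
  rcases Nat.eq_zero_or_pos n with h | h
  · subst h; simp
  · rw [Nat.digits_def' (by omega) h, List.sum_cons]

lemma one_lt_pow' (hp : 2 ≤ p) : 2 ≤ p ^ f :=
  le_trans hp (Nat.le_self_pow (NeZero.ne f) p)

/-- The base `p ^ f` digit sum of `k p ^ c` is the twisted digit sum of `k`. -/
lemma digits_sum_eq_zsum (hp : 2 ≤ p) (L : ℕ) : ∀ (k : ℕ) (c : ZMod f), k < p ^ L →
    (Nat.digits (p ^ f) (k * p ^ c.val)).sum = zsum p L k c := by
  have hq := one_lt_pow' (f := f) hp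
  induction L with
  | zero =>
    intro k c hk
    have : k = 0 := by simpa using hk
    subst this
    simp [zsum]
  | succ L ih =>
    intro k c hk
    have hkdiv : k / p < p ^ L := by
      rw [Nat.div_lt_iff_lt_mul (by omega)]; rwa [pow_succ] at hk
    have hz : zsum p (L + 1) k c = k % p * p ^ c.val + zsum p L (k / p) (c + 1) := by
      unfold zsum
      rw [Finset.sum_range_succ', add_comm]
      congr 1
      · simp [dig]
      · refine Finset.sum_congr rfl fun j _ => ?_
        rw [dig_succ]
        congr 3
        push_cast; ring
    rw [hz, ← ih _ _ hkdiv]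
    -- adding the lowest digit produces no carry in base `q`
    have hcarry : (Nat.digits (p ^ f) (k * p ^ c.val)).sum =
        k % p * p ^ c.val + (Nat.digits (p ^ f) (k / p * p ^ (c.val + 1))).sum := by
      have hdec : k * p ^ c.val = k % p * p ^ c.val + k / p * p ^ (c.val + 1) := by
        conv_lhs => rw [← Nat.mod_add_div k p]
        ring
      set x := k % p * p ^ c.val with hx
      set n := k / p * p ^ (c.val + 1) with hn
      have hxlt : x < p ^ (c.val + 1) := by
        rw [hx, pow_succ']
        exact Nat.mul_lt_mul_of_pos_right (Nat.mod_lt _ (by omega)) (Nat.pow_pos (by omega))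
      obtain ⟨t, ht⟩ : p ^ (c.val + 1) ∣ p ^ f := pow_dvd_pow _ (ZMod.val_lt c)
      obtain ⟨s, hs⟩ : p ^ (c.val + 1) ∣ n % p ^ f :=
        (Nat.dvd_mod_iff ⟨t, ht⟩).mpr (Dvd.intro_left _ rfl)
      have hlt : n % p ^ f < p ^ f := Nat.mod_lt _ (by omega)
      have hst : s < t := by
        rw [hs, ht] at hlt
        exact lt_of_mul_lt_mul_left hlt (Nat.zero_le _)
      have hsum : x + n % p ^ f < p ^ f := by
        rw [hs]
        have : p ^ (c.val + 1) * (s + 1) ≤ p ^ f := by rw [ht]; exact Nat.mul_le_mul_left _ hst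
        rw [mul_add, mul_one] at this
        omega
      rw [hdec, digits_sum_rec hq (x + n), digits_sum_rec hq n]
      have hx' : x < p ^ f := by omega
      have e1 : (x + n) % p ^ f = x + n % p ^ f := by
        rw [Nat.add_mod, Nat.mod_eq_of_lt hx', Nat.mod_eq_of_lt hsum]
      have e2 : (x + n) / p ^ f = n / p ^ f := by
        rw [Nat.add_div (by omega), Nat.div_eq_of_lt hx', Nat.mod_eq_of_lt hx', if_neg (by omega)]
        simp
      rw [e1, e2]; ring
    rw [hcarry]
    congr 1
    by_cases hc : c = -1
    · subst hc
      rw [val_neg_one', neg_add_cancel, ZMod.val_zero, pow_zero, mul_one,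
        digits_sum_rec hq, Nat.mul_mod_left, zero_add, Nat.mul_div_cancel _ (by omega)]
    · rw [val_add_one' c hc]

end PS

namespace PS
set_option linter.unusedSectionVars false

/-! ### The unit system attached to an integer -/

section Seq
variable (a : ℕ → ℕ) (L : ℕ)

/-- Partial sums of `a`. -/
def psum (m : ℕ) : ℕ := ∑ j ∈ Finset.range m, a j

/-- The index `m < L` of the block containing `i`, when `[0, psum a L)` is cut into consecutive
blocks of lengths `a 0, a 1, …`. -/
def block (i : ℕ) : ℕ := ((Finset.range L).filter (fun m => psum a (m + 1) ≤ i)).card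

lemma psum_succ (m : ℕ) : psum a (m + 1) = psum a m + a m := Finset.sum_range_succ _ _

lemma psum_mono : Monotone (psum a) := monotone_nat_of_le_succ fun m => by rw [psum_succ]; omega

lemma block_mono : Monotone (block a L) := by
  intro i i' h
  refine Finset.card_le_card fun m hm => ?_
  simp only [Finset.mem_filter] at hm ⊢
  exact ⟨hm.1, hm.2.trans h⟩

lemma block_le_iff {m i : ℕ} (hm : m < L) : block a L i ≤ m ↔ i < psum a (m + 1) := by
  constructor
  · intro h
    by_contra hcon
    have : Finset.range (m + 1) ⊆ (Finset.range L).filter (fun m => psum a (m + 1) ≤ i) := by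
      intro j hj
      have hj' := Finset.mem_range.mp hj
      simp only [Finset.mem_filter, Finset.mem_range]
      exact ⟨by omega, le_trans (psum_mono a (by omega)) (not_lt.mp hcon)⟩
    have := Finset.card_le_card this
    rw [Finset.card_range] at this
    unfold block at h
    omega
  · intro h
    have : (Finset.range L).filter (fun m => psum a (m + 1) ≤ i) ⊆ Finset.range m := by
      intro j hj
      simp only [Finset.mem_filter, Finset.mem_range] at hj ⊢
      by_contra hcon
      have := psum_mono a (show m + 1 ≤ j + 1 by omega)
      omega
    have := Finset.card_le_card this
    rwa [Finset.card_range] at this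

variable {a L}

lemma block_lt {i : ℕ} (hi : i < psum a L) : block a L i < L := by
  cases L with
  | zero => simp [psum] at hi
  | succ L => exact Nat.lt_succ_of_le ((block_le_iff a (L + 1) (Nat.lt_succ_self L)).mpr hi)

lemma le_block_iff {m i : ℕ} (hm : m ≤ L) : m ≤ block a L i ↔ psum a m ≤ i := by
  cases m with
  | zero => simp [psum]
  | succ m =>
    have := block_le_iff a L (i := i) (show m < L by omega)
    rw [Nat.succ_le_iff, ← not_le, this, not_lt]

lemma psum_block_le {i : ℕ} (hi : i < psum a L) : psum a (block a L i) ≤ i :=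
  (le_block_iff (block_lt hi).le).mp le_rfl

lemma lt_psum_block {i : ℕ} (hi : i < psum a L) : i < psum a (block a L i + 1) :=
  (block_le_iff a L (block_lt hi)).mp le_rfl

lemma block_ne_zero {i : ℕ} (hi : i < psum a L) : a (block a L i) ≠ 0 := by
  have h1 := psum_block_le hi
  have h2 := lt_psum_block hi
  rw [psum_succ] at h2
  omega

lemma block_eq {i m : ℕ} (hm : m < L) (h1 : psum a m ≤ i) (h2 : i < psum a (m + 1)) :
    block a L i = m :=
  le_antisymm ((block_le_iff a L hm).mpr h2) ((le_block_iff hm.le).mpr h1)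

/-- How much of the `j`-th block is used by the first `n` points. -/
def part (a : ℕ → ℕ) (n j : ℕ) : ℕ := min n (psum a (j + 1)) - min n (psum a j)

lemma part_le (n j : ℕ) : part a n j ≤ a j := by
  unfold part
  rw [psum_succ]
  omega

lemma part_mono {n n' : ℕ} (h : n ≤ n') (j : ℕ) : part a n j ≤ part a n' j := by
  unfold part
  rw [psum_succ]
  omega

lemma sum_part (n m : ℕ) : ∑ j ∈ Finset.range m, part a n j = min n (psum a m) := by
  induction m with
  | zero => simp [psum]
  | succ m ih =>
    rw [Finset.sum_range_succ, ih]
    have := psum_mono a (Nat.le_succ m)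
    unfold part
    simp only [Nat.succ_eq_add_one] at this
    omega

lemma sum_pow_block (p n : ℕ) {m : ℕ} (hm : m ≤ L) :
    ∑ i ∈ Finset.range (min n (psum a m)), p ^ block a L i =
      ∑ j ∈ Finset.range m, p ^ j * part a n j := by
  induction m with
  | zero => simp [psum]
  | succ m ih =>
    have hmono := psum_mono a (Nat.le_succ m)
    simp only [Nat.succ_eq_add_one] at hmono
    rw [Finset.sum_range_succ, ← ih (by omega),
      ← Finset.sum_range_add_sum_Ico _ (show min n (psum a m) ≤ min n (psum a (m + 1)) by omega)]
    congr 1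
    have h1 : ∀ i ∈ Finset.Ico (min n (psum a m)) (min n (psum a (m + 1))),
        p ^ block a L i = p ^ m := by
      intro i hi
      rw [Finset.mem_Ico] at hi
      rw [block_eq (m := m) (by omega) (by omega) (by omega)]
    rw [Finset.sum_congr rfl h1, Finset.sum_const, Nat.card_Ico, smul_eq_mul, mul_comm]
    rfl

/-- Filling the blocks from the left minimises the weighted sum among all ways of taking `n`
points with at most `a j` of them in block `j`. -/
lemma sum_part_le {p : ℕ} (hp : 1 ≤ p) (b : ℕ → ℕ) (hb : ∀ j, b j ≤ a j) (n : ℕ)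
    (hn : ∑ j ∈ Finset.range L, b j = n) :
    ∑ j ∈ Finset.range L, p ^ j * part a n j ≤ ∑ j ∈ Finset.range L, p ^ j * b j := by
  have key : ∀ m ≤ L, (∑ j ∈ Finset.range m, (p : ℤ) ^ j * part a n j) ≤
      (∑ j ∈ Finset.range m, (p : ℤ) ^ j * b j) +
        (p : ℤ) ^ m * ((min n (psum a m) : ℕ) - (∑ j ∈ Finset.range m, b j : ℕ)) := by
    intro m
    induction m with
    | zero => intro _; simp [psum]
    | succ m ih =>
      intro hm
      have h1 := ih (by omega)
      have h2 : ∑ j ∈ Finset.range (m + 1), b j ≤ min n (psum a (m + 1)) := by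
        refine le_min ?_ (Finset.sum_le_sum fun j _ => hb j)
        rw [← hn]
        exact Finset.sum_le_sum_of_subset (Finset.range_mono hm)
      have h3 := sum_part (a := a) n (m + 1)
      have h4 := sum_part (a := a) n m
      rw [← h3] at h2 ⊢
      rw [← h4] at h1
      rw [Finset.sum_range_succ (fun j => (p : ℤ) ^ j * part a n j),
        Finset.sum_range_succ (fun j => (p : ℤ) ^ j * b j)]
      have h5 : (0 : ℤ) ≤ ((∑ j ∈ Finset.range (m + 1), part a n j : ℕ) : ℤ) -
          (∑ j ∈ Finset.range (m + 1), b j : ℕ) := by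
        have : ((∑ j ∈ Finset.range (m + 1), b j : ℕ) : ℤ) ≤
          (∑ j ∈ Finset.range (m + 1), part a n j : ℕ) := by exact_mod_cast h2
        linarith
      have h6 : (p : ℤ) ^ m ≤ (p : ℤ) ^ (m + 1) :=
        pow_le_pow_right₀ (by exact_mod_cast hp) (by omega)
      have h7 := mul_le_mul_of_nonneg_right h6 h5
      rw [Finset.sum_range_succ (fun j => part a n j), Finset.sum_range_succ b] at h7 ⊢
      push_cast at h1 h7 ⊢
      linarith
  have h1 := key L le_rfl
  have h2 : min n (psum a L) = n :=
    min_eq_left (by rw [← hn]; exact Finset.sum_le_sum fun j _ => hb j)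
  rw [h2, hn, sub_self, mul_zero, add_zero] at h1
  exact_mod_cast h1

end Seq

variable {f p : ℕ} [NeZero f]

/-- The digits of `k` at the positions of color `c`, all other positions being set to `0`. -/
def cdig (p k : ℕ) (c : ZMod f) (j : ℕ) : ℕ := if (j : ZMod f) = -1 - c then dig p k j else 0

lemma psum_cdig (k L : ℕ) (c : ZMod f) : psum (cdig p k c) L = dcnt p L k c := rfl

lemma cdig_lt (hp : 2 ≤ p) (k : ℕ) (c : ZMod f) (j : ℕ) : cdig p k c j ≤ p - 1 := by
  unfold cdig
  have := dig_lt hp k j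
  split_ifs <;> omega

lemma color_of_cdig {k : ℕ} {c : ZMod f} {j : ℕ} (h : cdig p k c j ≠ 0) :
    (j : ZMod f) = -1 - c := by
  by_contra hcon
  exact h (if_neg hcon)

lemma sum_color (g : ZMod f → ℕ) (j : ℕ) :
    ∑ c : ZMod f, (if (j : ZMod f) = -1 - c then g c else 0) = g (-1 - j) := by
  rw [Finset.sum_eq_single (-1 - (j : ZMod f))]
  · simp
  · intro c _ hc
    exact if_neg fun h => hc (by rw [h]; ring)
  · simp

lemma sum_cdig (k j : ℕ) : ∑ c : ZMod f, cdig p k c j = dig p k j :=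
  sum_color (fun _ => dig p k j) j

/-- Within one color, consecutive units `p - 1` apart lie in positions at least `f` apart. -/
lemma block_gap (hp : 2 ≤ p) (k L : ℕ) (c : ZMod f) (i : ℕ)
    (h : i + (p - 1) < psum (cdig p k c) L) :
    block (cdig p k c) L i + f ≤ block (cdig p k c) L (i + (p - 1)) := by
  set a := cdig p k c with ha
  have hi : i < psum a L := by omega
  set m := block a L i with hm
  set m' := block a L (i + (p - 1)) with hm'
  have h1 : psum a m ≤ i := psum_block_le hi
  have h2 : i + (p - 1) < psum a (m' + 1) := lt_psum_block h
  have hc : (m : ZMod f) = -1 - c := color_of_cdig (block_ne_zero hi)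
  by_contra hcon
  -- the positions strictly between `m` and `m + f` have other colors
  have h3 : ∀ s, s < f → psum a (m + 1 + s) = psum a (m + 1) := by
    intro s
    induction s with
    | zero => intro _; rfl
    | succ s ih =>
      intro hs
      rw [← add_assoc, psum_succ, ih (by omega)]
      have : a (m + 1 + s) = 0 := by
        by_contra h0
        have h4 := color_of_cdig h0
        rw [← hc] at h4
        have h5 : ((s + 1 : ℕ) : ZMod f) = 0 := by
          push_cast at h4 ⊢
          linear_combination h4
        rw [ZMod.natCast_eq_zero_iff] at h5
        exact absurd (Nat.le_of_dvd (by omega) h5) (by omega)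
      omega
  have hmm : m ≤ m' := block_mono a L (by omega)
  have h4 := h3 (m' - m) (by omega)
  rw [show m + 1 + (m' - m) = m' + 1 by omega, psum_succ a m] at h4
  have := cdig_lt hp k c m
  rw [← ha] at this
  omega

lemma filter_block (a : ℕ → ℕ) (L J : ℕ) :
    (Finset.range (psum a L)).filter (fun i => block a L i < J) =
      Finset.range (psum a (min J L)) := by
  ext i
  simp only [Finset.mem_filter, Finset.mem_range]
  have h1 := le_block_iff (a := a) (L := L) (i := i) (min_le_right J L)
  have h2 := psum_mono a (min_le_right J L)
  constructor
  · rintro ⟨hi, hJ⟩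
    by_contra hcon
    have h3 := h1.mpr (by omega)
    have h4 := block_lt hi
    omega
  · intro h
    refine ⟨by omega, ?_⟩
    by_contra hcon
    have h3 := h1.mp (by omega)
    omega

/-- The unit system of `k`: a digit `k_j` of `k` in base `p` contributes `k_j` units of
exponent `j`. -/
def kSystem (hp : 2 ≤ p) (k : ℕ) : UnitSystem f p where
  M c := psum (cdig p k c) k
  u c := block (cdig p k c) k
  two_le := hp
  mono c := block_mono _ _
  gap c i h := block_gap hp k k c i h
  color c i h := color_of_cdig (block_ne_zero h)
  small J := by
    have h1 : ∀ c : ZMod f, ∑ i ∈ (Finset.range (psum (cdig p k c) k)).filter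
        (fun i => block (cdig p k c) k i < J), p ^ block (cdig p k c) k i =
        ∑ j ∈ Finset.range (min J k), p ^ j * cdig p k c j := by
      intro c
      rw [filter_block]
      have h2 := sum_pow_block (a := cdig p k c) (L := k) p (psum (cdig p k c) (min J k))
        (min_le_right J k)
      rw [min_self] at h2
      rw [h2]
      refine Finset.sum_congr rfl fun j hj => ?_
      have hj' := Finset.mem_range.mp hj
      have h3 := psum_mono (cdig p k c) (show j + 1 ≤ min J k by omega)
      have h4 := psum_succ (cdig p k c) j
      have : part (cdig p k c) (psum (cdig p k c) (min J k)) j = cdig p k c j := by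
        unfold part; omega
      rw [this]
    have h2 : ∑ c : ZMod f, ∑ i ∈ (Finset.range (psum (cdig p k c) k)).filter
        (fun i => block (cdig p k c) k i < J), p ^ block (cdig p k c) k i < p ^ J := by
      rw [Finset.sum_congr rfl fun c _ => h1 c, Finset.sum_comm]
      simp only [← Finset.mul_sum, sum_cdig]
      exact lt_of_lt_of_le (sum_digits_lt _ (dig_lt hp k) _)
        (Nat.pow_le_pow_right (by omega) (min_le_left _ _))
    exact_mod_cast h2

variable (hp : 2 ≤ p) (k : ℕ)

lemma kSystem_M (c : ZMod f) : (kSystem hp k).M c = dcnt p k k c := rfl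

/-- The digits of the number `costN k y`. -/
def ydig (p k : ℕ) (y : ZMod f → ℤ) (j : ℕ) : ℕ :=
  part (cdig p k (-1 - (j : ZMod f))) (cnt p y (-1 - (j : ZMod f))).toNat j

/-- The cost of `y`, as a natural number given by its base `p` expansion. -/
def costN (p k : ℕ) (y : ZMod f → ℤ) : ℕ := ∑ j ∈ Finset.range k, p ^ j * ydig p k y j

lemma part_cdig_eq (y : ZMod f → ℤ) (c : ZMod f) (j : ℕ) :
    part (cdig p k c) (cnt p y c).toNat j =
      if (j : ZMod f) = -1 - c then ydig p k y j else 0 := by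
  split_ifs with h
  · have : -1 - (j : ZMod f) = c := by rw [h]; ring
    unfold ydig
    rw [this]
  · have h1 := part_le (a := cdig p k c) (cnt p y c).toNat j
    unfold cdig at h1 ⊢
    rw [if_neg h] at h1
    omega

lemma ydig_le (y : ZMod f → ℤ) (j : ℕ) : ydig p k y j ≤ dig p k j := by
  refine (part_le _ _).trans ?_
  unfold cdig
  split_ifs <;> omega

lemma kSystem_phi (c : ZMod f) (n : ℤ) (hn : n ≤ (kSystem hp k).M c) :
    (kSystem hp k).phi c n =
      (∑ j ∈ Finset.range k, p ^ j * part (cdig p k c) n.toNat j : ℕ) := by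
  have h := sum_pow_block (a := cdig p k c) (L := k) p n.toNat le_rfl
  have h1 : n ≤ (psum (cdig p k c) k : ℕ) := hn
  rw [min_eq_left (by omega)] at h
  rw [← h]
  unfold UnitSystem.phi
  push_cast
  rfl

lemma cost_eq (y : ZMod f → ℤ) (hy : (kSystem hp k).Feas y) :
    (kSystem hp k).cost y = costN p k y := by
  unfold UnitSystem.cost costN
  rw [Finset.sum_congr rfl fun c _ => kSystem_phi hp k c _ (hy c).2, ← Nat.cast_sum,
    Finset.sum_comm]
  simp only [← Finset.mul_sum, part_cdig_eq]
  congr 1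
  refine Finset.sum_congr rfl fun j _ => ?_
  rw [sum_color (fun _ => ydig p k y j)]

lemma dig_costN (hp : 2 ≤ p) (y : ZMod f → ℤ) (j : ℕ) : dig p (costN p k y) j = ydig p k y j := by
  unfold costN
  rw [dig_sum hp _ _ (fun j => lt_of_le_of_lt (ydig_le k y j) (dig_lt hp k j))]
  split_ifs with hj
  · rfl
  · have h1 := ydig_le (p := p) k y j
    rw [dig_eq_zero (lt_pow_of_le hp (not_lt.mp hj))] at h1
    omega

lemma costN_dle (hp : 2 ≤ p) (y : ZMod f → ℤ) : Dle p (costN p k y) k := fun j => by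
  rw [dig_costN k hp]; exact ydig_le k y j

lemma costN_mono (hp : 2 ≤ p) (y y' : ZMod f → ℤ) (h : ∀ c, cnt p y c ≤ cnt p y' c) :
    Dle p (costN p k y) (costN p k y') := fun j => by
  rw [dig_costN k hp, dig_costN k hp]
  exact part_mono (Int.toNat_le_toNat (h _)) j

lemma dcnt_costN (y : ZMod f → ℤ) (hy : (kSystem hp k).Feas y) (c : ZMod f) :
    (dcnt p k (costN p k y) c : ℤ) = cnt p y c := by
  have h1 : dcnt p k (costN p k y) c =
      ∑ j ∈ Finset.range k, part (cdig p k c) (cnt p y c).toNat j := by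
    unfold dcnt
    refine Finset.sum_congr rfl fun j _ => ?_
    rw [part_cdig_eq, dig_costN k hp]
  have h2 : cnt p y c ≤ (psum (cdig p k c) k : ℕ) := (hy c).2
  have h3 := (hy c).1
  rw [h1, sum_part, min_eq_left (by omega)]
  omega

lemma qpos (hp : 2 ≤ p) : (0 : ℤ) < (p : ℤ) ^ f - 1 := by
  have h := one_lt_pow' (f := f) hp
  have : (2 : ℤ) ≤ (p : ℤ) ^ f := by exact_mod_cast h
  linarith

lemma zsum_costN (y : ZMod f → ℤ) (hy : (kSystem hp k).Feas y) (c : ZMod f) :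
    (zsum p k (costN p k y) c : ℤ) = ((p : ℤ) ^ f - 1) * y c := by
  have : (fun c : ZMod f => (zsum p k (costN p k y) c : ℤ)) =
      fun c => ((p : ℤ) ^ f - 1) * y c := by
    refine eq_of_cnt hp _ _ fun c => ?_
    have h1 := zsum_rec (p := p) k (costN p k y) c
    rw [dcnt_costN hp k y hy] at h1
    simp only [cnt] at h1 ⊢
    linarith
  exact congrFun this c

lemma cast_q (hp : 2 ≤ p) : ((p ^ f - 1 : ℕ) : ℤ) = (p : ℤ) ^ f - 1 := by
  have h1 := one_lt_pow' (f := f) hp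
  rw [Nat.cast_sub (by omega)]; simp

lemma dvd_costN (y : ZMod f → ℤ) (hy : (kSystem hp k).Feas y) : p ^ f - 1 ∣ costN p k y := by
  have hlt : costN p k y < p ^ k := lt_pow_of_le hp ((costN_dle k hp y).le hp)
  have h1 := zsum_zero_modEq (f := f) hlt
  rw [zsum_costN hp k y hy] at h1
  have h2 := (Dvd.intro (y 0) (rfl : ((p : ℤ) ^ f - 1) * y 0 = _))
  have h3 : ((p : ℤ) ^ f - 1) ∣ (costN p k y : ℤ) := by
    have := dvd_sub h2 h1
    rwa [sub_sub_cancel] at this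
  rw [← cast_q hp] at h3
  exact_mod_cast h3

/-- The vector `Y(N)` of twisted digit sums of `N`, divided by `q - 1`. -/
def yvec (p k N : ℕ) (c : ZMod f) : ℤ := (zsum p k N c : ℤ) / ((p : ℤ) ^ f - 1)

lemma yvec_costN (y : ZMod f → ℤ) (hy : (kSystem hp k).Feas y) : yvec p k (costN p k y) = y := by
  funext c
  unfold yvec
  rw [zsum_costN hp k y hy, Int.mul_ediv_cancel_left _ (qpos hp).ne']

variable {k}

lemma mul_yvec (hp : 2 ≤ p) {N : ℕ} (hN : Dle p N k) (hd : p ^ f - 1 ∣ N) (c : ZMod f) :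
    ((p : ℤ) ^ f - 1) * yvec p k N c = zsum p k N c := by
  unfold yvec
  exact Int.mul_ediv_cancel' (dvd_zsum hp (lt_pow_of_le hp (hN.le hp)) hd c)

lemma cnt_yvec (hp : 2 ≤ p) {N : ℕ} (hN : Dle p N k) (hd : p ^ f - 1 ∣ N) (c : ZMod f) :
    cnt p (yvec p k N) c = dcnt p k N c := by
  have h1 := zsum_rec (p := p) k N c
  rw [← mul_yvec hp hN hd, ← mul_yvec hp hN hd] at h1
  apply mul_left_cancel₀ (qpos (f := f) hp).ne'
  rw [← h1]
  unfold cnt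
  ring

lemma dcnt_mono {N N' : ℕ} (h : Dle p N N') (L : ℕ) (c : ZMod f) :
    dcnt p L N c ≤ dcnt p L N' c := by
  refine Finset.sum_le_sum fun j _ => ?_
  split_ifs
  · exact h j
  · exact le_rfl

lemma feas_yvec {N : ℕ} (hN : Dle p N k) (hd : p ^ f - 1 ∣ N) :
    (kSystem hp k).Feas (yvec (f := f) p k N) := fun c => by
  rw [cnt_yvec hp hN hd, kSystem_M]
  exact ⟨by positivity, by exact_mod_cast dcnt_mono hN k c⟩

/-- The cost of `Y(N)` is at most `N`, since it takes the smallest units with the counts of `N`. -/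
lemma cost_yvec_le {N : ℕ} (hN : Dle p N k) (hd : p ^ f - 1 ∣ N) :
    (kSystem (f := f) hp k).cost (yvec p k N) ≤ N := by
  have hf := feas_yvec (f := f) hp hN hd
  unfold UnitSystem.cost
  rw [Finset.sum_congr rfl fun c _ => kSystem_phi hp k c _ (hf c).2, ← Nat.cast_sum]
  have h1 : ∀ c : ZMod f, ∑ j ∈ Finset.range k,
      p ^ j * part (cdig p k c) (cnt p (yvec p k N) c).toNat j ≤
      ∑ j ∈ Finset.range k, p ^ j * cdig p N c j := by
    intro c
    refine sum_part_le (by omega) _ (fun j => ?_) _ ?_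
    · unfold cdig
      split_ifs
      · exact hN j
      · exact le_rfl
    · rw [cnt_yvec hp hN hd, Int.toNat_natCast]
      rfl
  have h2 := Finset.sum_le_sum fun c (_ : c ∈ Finset.univ) => h1 c
  rw [Finset.sum_comm (f := fun c j => p ^ j * cdig p N c j)] at h2
  simp only [← Finset.mul_sum, sum_cdig] at h2
  rw [sum_dig_eq (lt_pow_of_le hp (hN.le hp))] at h2
  exact_mod_cast h2

lemma zsum_mono {N N' : ℕ} (h : Dle p N N') (L : ℕ) (c : ZMod f) :
    zsum p L N c ≤ zsum p L N' c :=
  Finset.sum_le_sum fun j _ => Nat.mul_le_mul_right _ (h j)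

lemma zsum_lt (hp : 2 ≤ p) {N N' : ℕ} (h : Dle p N N') (hne : N ≠ N') (hk : N' ≤ k) (c : ZMod f) :
    zsum p k N c < zsum p k N' c := by
  have : ∃ j ∈ Finset.range k, dig p N j ≠ dig p N' j := by
    by_contra hcon
    push Not at hcon
    apply hne
    rw [← sum_dig_eq (lt_pow_of_le hp ((h.le hp).trans hk)), ← sum_dig_eq (lt_pow_of_le hp hk)]
    exact Finset.sum_congr rfl fun j hj => by rw [hcon j hj]
  obtain ⟨j, hj, hne⟩ := this
  refine Finset.sum_lt_sum (fun j _ => Nat.mul_le_mul_right _ (h j)) ⟨j, hj, ?_⟩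
  exact Nat.mul_lt_mul_of_pos_right (lt_of_le_of_ne (h j) hne) (Nat.pow_pos (by omega))

lemma yvec_lt (hp : 2 ≤ p) {N N' : ℕ} (h : Dle p N N') (hne : N ≠ N') (hk : Dle p N' k)
    (hd : p ^ f - 1 ∣ N) (hd' : p ^ f - 1 ∣ N') (c : ZMod f) :
    yvec p k N c + 1 ≤ yvec p k N' c := by
  have h1 := zsum_lt hp h hne (hk.le hp) c
  have h2 : (zsum p k N c : ℤ) < zsum p k N' c := by exact_mod_cast h1
  rw [← mul_yvec hp (h.trans hk) hd, ← mul_yvec hp hk hd'] at h2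
  exact lt_of_mul_lt_mul_left h2 (qpos hp).le

lemma yvec_mono (hp : 2 ≤ p) {N N' : ℕ} (h : Dle p N N') (c : ZMod f) :
    yvec p k N c ≤ yvec p k N' c := by
  refine Int.ediv_le_ediv (qpos hp) ?_
  exact_mod_cast zsum_mono h k c

/-- The upper bound for the top of a chain coming from `N ⊑ k`. -/
def topB (p k : ℕ) (c : ZMod f) : ℤ := yvec p k k c + 1

/-- A chain of length `d` below `topB` exists as soon as `d (q - 1)` is at most every twisted
digit sum of `k`. -/
lemma exists_chain (d : ℕ) (h : ∀ c : ZMod f, d * (p ^ f - 1) ≤ zsum p k k c) :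
    ∃ l, l.length = d ∧ (kSystem (f := f) hp k).IsChain (topB p k) l := by
  rcases d with _ | n
  · exact ⟨[], rfl, trivial⟩
  have hle : ∀ c : ZMod f, ((n : ℤ) + 1) ≤ yvec p k k c := by
    intro c
    unfold yvec
    rw [Int.le_ediv_iff_mul_le (qpos hp), ← cast_q hp]
    exact_mod_cast h c
  have hcnt : ∀ c : ZMod f, cnt p (yvec p k k) c ≤ (kSystem (f := f) hp k).M c := by
    intro c
    rw [kSystem_M]
    have hr := zsum_rec (p := p) k k c
    set Q := (p : ℤ) ^ f - 1 with hQ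
    have hQ0 : 0 < Q := qpos hp
    have e1 := Int.mul_ediv_add_emod (zsum p k k c : ℤ) Q
    have e2 := Int.mul_ediv_add_emod (zsum p k k (c + 1) : ℤ) Q
    have r1 := Int.emod_nonneg (zsum p k k c : ℤ) hQ0.ne'
    have r2 := Int.emod_lt_of_pos (zsum p k k (c + 1) : ℤ) hQ0
    have hp' : (0 : ℤ) ≤ p := by positivity
    have r3 := mul_nonneg hp' r1
    unfold cnt yvec
    rw [← hQ]
    by_contra hcon
    have h5 : (dcnt p k k c : ℤ) + 1 ≤
        p * (zsum p k k c / Q) - zsum p k k (c + 1) / Q := by omega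
    have h6 := mul_le_mul_of_nonneg_left h5 hQ0.le
    nlinarith
  obtain ⟨z, hz1, hz2, hz3⟩ := UnitSystem.exists_feas hp (l := (n : ℤ) + 1) (by positivity)
    hle hcnt (fun c => by positivity)
  obtain ⟨b, hb⟩ := (kSystem (f := f) hp k).exists_arg (s := (n : ℤ) + 1) (B := topB p k) (z := z)
    hz3 hz1 (fun c => by unfold topB; have := hz2 c; linarith)
  obtain ⟨l, hl1, hl2⟩ := UnitSystem.IsArg.exists_greedy n hb
  refine ⟨b :: l, by simp [hl1], ?_⟩
  have : (kSystem (f := f) hp k).IsGreedy (topB p k) (b :: l) := ⟨by rw [hl1]; exact hb, hl2⟩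
  exact this.isChain

end PS

namespace PS
set_option linter.unusedSectionVars false

/-! ### Digit paths -/

variable {f p : ℕ} [NeZero f]

/-- Strictly increasing chains `P ⊏ N₁ ⊏ N₂ ⊏ ⋯ ⊑ k` for the digitwise order, all of whose members
`N₁, N₂, …` are multiples of `Q`. -/
def IsPath (p Q k : ℕ) : ℕ → List ℕ → Prop
  | _, [] => True
  | P, N :: l => Dle p P N ∧ Dle p N k ∧ P < N ∧ Q ∣ N ∧ IsPath p Q k N l

/-- The exponent of `X` contributed by a path to the power sum of exponent `k`. -/
def weight (k : ℕ) (l : List ℕ) : ℕ := (l.map (fun N => k - N)).sum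

lemma weight_cons (k N : ℕ) (l : List ℕ) : weight k (N :: l) = k - N + weight k l := by
  simp [weight]

lemma IsPath.mem {Q k : ℕ} : ∀ {l : List ℕ} {P : ℕ}, IsPath p Q k P l →
    ∀ N ∈ l, Dle p N k ∧ Q ∣ N
  | [], _, _, N, hN => by simp at hN
  | M :: l, P, h, N, hN => by
    rcases List.mem_cons.mp hN with rfl | hN
    · exact ⟨h.2.1, h.2.2.2.1⟩
    · exact IsPath.mem h.2.2.2.2 N hN

lemma weight_add_sum (hp : 2 ≤ p) {Q k : ℕ} : ∀ {l : List ℕ} {P : ℕ}, IsPath p Q k P l →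
    weight k l + l.sum = l.length * k
  | [], _, _ => by simp [weight]
  | N :: l, P, h => by
    have h1 := weight_add_sum hp h.2.2.2.2
    have h2 := h.2.1.le hp
    rw [weight_cons, List.sum_cons, List.length_cons, Nat.succ_mul]
    omega

/-- The vectors `Y(N)` along a digit path starting at `P`, read downwards and followed by a chain `acc`
that fits below `Y(P)`, form a chain. -/
lemma IsPath.isChain (hp : 2 ≤ p) {k : ℕ} : ∀ (l : List ℕ) (P : ℕ) (acc : List (ZMod f → ℤ)),
    Dle p P k → p ^ f - 1 ∣ P → IsPath p (p ^ f - 1) k P l →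
    (∀ B' : ZMod f → ℤ, (∀ c, yvec p k P c + 1 ≤ B' c) → (kSystem hp k).IsChain B' acc) →
    (∀ c : ZMod f, (acc.length : ℤ) ≤ yvec p k P c) →
    (kSystem hp k).IsChain (topB p k) ((l.map (yvec p k)).reverse ++ acc)
  | [], P, acc, hP, _, _, hacc, _ => by
    refine hacc _ fun c => ?_
    unfold topB
    have := yvec_mono (k := k) hp hP c
    linarith
  | N :: l, P, acc, hP, hdP, h, hacc, hlen => by
    obtain ⟨h1, h2, h3, h4, h5⟩ := h
    have hlt := yvec_lt (f := f) hp h1 h3.ne h2 hdP h4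
    have := IsPath.isChain hp l N (yvec p k N :: acc) h2 h4 h5
      (fun B' hB' => ⟨feas_yvec hp h2 h4, fun c => (by have := hlt c; have := hlen c; linarith),
        hB', hacc _ hlt⟩)
      (fun c => by have := hlt c; have := hlen c; push_cast [List.length_cons]; linarith)
    simpa using this

lemma IsPath.isChain_zero (hp : 2 ≤ p) {k : ℕ} {l : List ℕ} (h : IsPath p (p ^ f - 1) k 0 l) :
    (kSystem (f := f) hp k).IsChain (topB p k) (l.map (yvec p k)).reverse := by
  have := IsPath.isChain (f := f) hp l 0 [] (Dle.zero p k) (dvd_zero _) h (fun _ _ => trivial)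
    (fun c => by
      simp only [List.length_nil, Nat.cast_zero]
      exact Int.ediv_nonneg (by positivity) (qpos hp).le)
  simpa using this

/-- The length of a digit path is bounded by the twisted digit sums of `k`. -/
lemma IsPath.length_le (hp : 2 ≤ p) {k : ℕ} {l : List ℕ} (h : IsPath p (p ^ f - 1) k 0 l)
    (c : ZMod f) : l.length * (p ^ f - 1) ≤ zsum p k k c := by
  have h1 := h.isChain_zero hp
  have h2 : (l.map (yvec (f := f) p k)).reverse.length = l.length := by simp
  cases hl : (l.map (yvec (f := f) p k)).reverse with
  | nil =>
    rw [hl] at h2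
    simp [← h2]
  | cons y m =>
    rw [hl] at h1 h2
    have h3 := h1.2.1 c
    have h4 := h1.2.2.1 c
    have h5 : (l.length : ℤ) ≤ yvec p k k c := by
      rw [← h2]
      unfold topB at h4
      push_cast [List.length_cons]
      linarith
    unfold yvec at h5
    rw [Int.le_ediv_iff_mul_le (qpos hp), ← cast_q hp] at h5
    exact_mod_cast h5

/-- The costs along a greedy chain, read upwards and followed by a path `m` above them, form a digit path: by
`IsArg.cnt_mono` the counts increase, so the sets of smallest units are nested. -/
lemma isPath_of_greedy (hp : 2 ≤ p) {k : ℕ} : ∀ (l : List (ZMod f → ℤ)) (y B : ZMod f → ℤ)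
    (m : List ℕ), (kSystem hp k).IsGreedy B (y :: l) →
    IsPath p (p ^ f - 1) k (costN p k y) m →
    IsPath p (p ^ f - 1) k 0 (((y :: l).map (costN p k)).reverse ++ m)
  | [], y, B, m, h, hm => by
    have hpos : 0 < costN p k y := by
      rw [Nat.pos_iff_ne_zero]
      intro h0
      have h1 := zsum_costN hp k y h.1.feas 0
      have h2 := h.1.lo 0
      have h3 := qpos (f := f) hp
      rw [h0] at h1
      have h4 : zsum p k 0 (0 : ZMod f) = 0 := by simp [zsum, dig]
      rw [h4] at h1
      simp only [List.length_nil, Nat.cast_zero, zero_add] at h2 h1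
      have := mul_pos h3 (show 0 < y 0 by linarith)
      linarith
    exact ⟨Dle.zero _ _, costN_dle k hp y, hpos, dvd_costN hp k y h.1.feas, hm⟩
  | x :: l, y, B, m, h, hm => by
    have hy := h.1
    have hx := h.2.1
    have hle : Dle p (costN p k x) (costN p k y) := by
      refine costN_mono k hp x y fun c => ?_
      refine UnitSystem.IsArg.cnt_mono (s := (l.length : ℤ) + 1) (B := B) ?_ hx c
      simpa using hy
    have hne : costN p k x ≠ costN p k y := by
      intro he
      have h1 := yvec_costN hp k x hx.feas
      rw [he, yvec_costN hp k y hy.feas] at h1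
      have h2 := hx.hi 0
      rw [h1] at h2
      linarith
    have := isPath_of_greedy hp l x y (costN p k y :: m) h.2
      ⟨hle, costN_dle k hp y, lt_of_le_of_ne (hle.le hp) hne, dvd_costN hp k y hy.feas, hm⟩
    simpa using this

lemma total_eq (hp : 2 ≤ p) {k : ℕ} : ∀ {l : List (ZMod f → ℤ)} {B : ZMod f → ℤ},
    (kSystem hp k).IsChain B l → (kSystem hp k).total l = (l.map (costN p k)).sum
  | [], _, _ => by simp [UnitSystem.total]
  | y :: l, _, h => by
    rw [UnitSystem.total_cons, total_eq hp h.2.2.2, cost_eq hp k y h.1]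
    simp

lemma map_sum_le (g : ℕ → ℕ) : ∀ (l : List ℕ), (∀ N ∈ l, g N ≤ N) →
    (l.map g).sum ≤ l.sum ∧ (l.sum ≤ (l.map g).sum → l.map g = l)
  | [], _ => by simp
  | N :: l, h => by
    have h1 := map_sum_le g l fun M hM => h M (List.mem_cons_of_mem _ hM)
    have h2 := h N List.mem_cons_self
    simp only [List.map_cons, List.sum_cons]
    refine ⟨by omega, fun h3 => ?_⟩
    rw [h1.2 (by omega), show g N = N by omega]

/-- Among the digit paths of a given length there is exactly one of largest weight. -/
theorem exists_optimal_path (hp : 2 ≤ p) {k d : ℕ}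
    (h : ∀ c : ZMod f, d * (p ^ f - 1) ≤ zsum p k k c) :
    ∃ l0, l0.length = d ∧ IsPath p (p ^ f - 1) k 0 l0 ∧
      ∀ l, l.length = d → IsPath p (p ^ f - 1) k 0 l →
        weight k l ≤ weight k l0 ∧ (weight k l = weight k l0 → l = l0) := by
  obtain ⟨m, hm1, hm2, hm3⟩ := UnitSystem.exists_optimal (exists_chain (f := f) (k := k) hp d h)
  have hpath : IsPath p (p ^ f - 1) k 0 (m.map (costN p k)).reverse := by
    cases m with
    | nil => exact trivial
    | cons y m =>
      have := isPath_of_greedy hp m y _ [] hm2 trivial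
      simpa using this
  have hlen : (m.map (costN p k)).reverse.length = d := by simp [hm1]
  refine ⟨_, hlen, hpath, fun l hl1 hl2 => ?_⟩
  have hch := hl2.isChain_zero (f := f) hp
  obtain ⟨h1, h2⟩ := hm3 _ (by simp [hl1]) hch
  have hmc := hm2.isChain
  rw [total_eq hp hmc, total_eq hp hch] at h1 h2
  have e1 := weight_add_sum hp hl2
  have e2 := weight_add_sum hp hpath
  have hg := map_sum_le (fun N => costN p k (yvec (f := f) p k N)) l fun N hN => by
    obtain ⟨h3, h4⟩ := hl2.mem N hN
    have h5 := cost_yvec_le (f := f) hp h3 h4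
    rw [cost_eq hp k _ (feas_yvec hp h3 h4)] at h5
    exact_mod_cast h5
  have e3 : ((l.map (yvec (f := f) p k)).reverse.map (costN p k)) =
      (l.map (fun N => costN p k (yvec (f := f) p k N))).reverse := by
    rw [List.map_reverse, List.map_map]; rfl
  rw [e3, List.sum_reverse] at h1 h2
  rw [hlen, List.sum_reverse] at e2
  rw [hl1] at e1
  have h1' : (m.map (costN p k)).sum ≤
      (l.map (fun N => costN p k (yvec (f := f) p k N))).sum := by exact_mod_cast h1
  refine ⟨by omega, fun hw => ?_⟩
  have h3 := hg.2 (by omega)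
  have h4 := h2 (by rw [h3]; congr 1; have := hg.1; rw [h3] at h1'; omega)
  rw [← h4, e3, List.reverse_reverse, h3]

end PS

namespace PS
set_option linter.unusedSectionVars false

/-! ### Power sums -/

section Power
variable (F : Type) [Field F] [Fintype F]

lemma sum_pow_eq (n : ℕ) :
    ∑ x : F, x ^ n = if n ≠ 0 ∧ Fintype.card F - 1 ∣ n then -1 else 0 := by
  by_cases hn : n = 0
  · subst hn; simp
  have h1 : ∑ x : F, x ^ n = ∑ x : Fˣ, (x ^ n : F) := by
    let φ : Fˣ ↪ F := ⟨fun x ↦ x, Units.val_injective⟩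
    have : Finset.univ.map φ = Finset.univ \ {0} := by
      ext x
      simpa only [Finset.mem_map, Finset.mem_univ, Function.Embedding.coeFn_mk, true_and,
        Finset.mem_sdiff, Finset.mem_singleton, φ] using! isUnit_iff_ne_zero
    calc
      ∑ x : F, x ^ n = ∑ x ∈ Finset.univ \ {(0 : F)}, x ^ n := by
        rw [← Finset.sum_sdiff ({0} : Finset F).subset_univ, Finset.sum_singleton, zero_pow hn,
          add_zero]
      _ = ∑ x : Fˣ, (x ^ n : F) := by simp [φ, ← this, Finset.univ.sum_map φ]
  rw [h1, FiniteField.sum_pow_units F n]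
  simp [hn]

/-- Lucas' theorem as a criterion for the digitwise order. -/
lemma choose_ne_zero_iff {p : ℕ} (hp : p.Prime) [CharP F p] (m i : ℕ) :
    ((m.choose i : ℕ) : F) ≠ 0 ↔ Dle p i m := by
  have : Fact p.Prime := ⟨hp⟩
  have hm : m < p ^ (m + i) := lt_pow_of_le hp.two_le (by omega)
  have hi : i < p ^ (m + i) := lt_pow_of_le hp.two_le (by omega)
  have hl := Choose.choose_modEq_prod_range_choose_nat (p := p) hm hi
  rw [Ne, CharP.cast_eq_zero_iff F p, hl.dvd_iff dvd_rfl,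
    hp.prime.dvd_finsetProd_iff]
  push Not
  constructor
  · intro h j
    by_cases hj : j < m + i
    · by_contra hcon
      apply h j (Finset.mem_range.mpr hj)
      have h0 : (dig p m j).choose (dig p i j) = 0 := Nat.choose_eq_zero_of_lt (not_le.mp hcon)
      exact h0 ▸ dvd_zero p
    · have : i < p ^ j := lt_of_lt_of_le hi (Nat.pow_le_pow_right hp.pos (by omega))
      rw [dig_eq_zero this]
      exact Nat.zero_le _
  · intro h j _ hdvd
    have h1 : p ∣ (dig p m j).factorial := by
      rw [← Nat.choose_mul_factorial_mul_factorial (h j), mul_assoc]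
      exact Dvd.dvd.mul_right hdvd _
    rw [hp.dvd_factorial] at h1
    have := dig_lt hp.two_le m j
    omega

lemma monicPoly_succ (d : ℕ) (x : F) (c : Fin d → F) :
    monicPoly F (d + 1) (Fin.cons x c) = X * monicPoly F d c + C x := by
  unfold monicPoly
  rw [Fin.sum_univ_succ]
  simp only [Fin.cons_zero, Fin.cons_succ, Fin.val_zero, Fin.val_succ, pow_zero, mul_one]
  rw [mul_add, Finset.mul_sum, pow_succ' X d]
  have : ∀ i : Fin d, C (c i) * X ^ ((i : ℕ) + 1) = X * (C (c i) * X ^ (i : ℕ)) := fun i => by ring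
  simp only [this]
  ring

lemma powerSum_zero (m : ℕ) : powerSum F 0 m = 1 := by
  simp [powerSum, monicPoly]

/-- Writing `a = X b + x` and expanding. -/
lemma powerSum_succ (d m : ℕ) : powerSum F (d + 1) m = ∑ i ∈ Finset.range (m + 1),
    X ^ i * powerSum F d i * C (((m.choose i : ℕ) : F) * ∑ x : F, x ^ (m - i)) := by
  unfold powerSum
  rw [← (Fin.consEquiv (fun _ : Fin (d + 1) => F)).sum_comp, Fintype.sum_prod_type]
  simp only [Fin.consEquiv, Equiv.coe_fn_mk, monicPoly_succ]
  simp only [add_pow, mul_pow, map_mul, map_sum, map_pow, map_natCast, Finset.mul_sum,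
    Finset.sum_mul]
  rw [Finset.sum_congr rfl fun x _ => Finset.sum_comm, Finset.sum_comm]
  refine Finset.sum_congr rfl fun i _ => ?_
  refine Finset.sum_congr rfl fun x _ => ?_
  refine Finset.sum_congr rfl fun c _ => ?_
  ring

variable {f p : ℕ} [NeZero f]

/-- A nonzero term of the recursion `powerSum_succ` for `k - P` is a step of a digit path. -/
lemma step_of_ne_zero (hp : p.Prime) [CharP F p] (hF : Fintype.card F = p ^ f) {k P i : ℕ}
    (hP : Dle p P k) (hdP : p ^ f - 1 ∣ P) (hi : i ≤ k - P)
    (h : (((k - P).choose i : ℕ) : F) * ∑ x : F, x ^ (k - P - i) ≠ 0) :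
    Dle p P (k - i) ∧ Dle p (k - i) k ∧ P < k - i ∧ p ^ f - 1 ∣ k - i := by
  have h1 := left_ne_zero_of_mul h
  have h2 := right_ne_zero_of_mul h
  rw [← Nat.choose_symm hi, choose_ne_zero_iff F hp] at h1
  rw [sum_pow_eq, hF] at h2
  have h3 : k - P - i ≠ 0 ∧ p ^ f - 1 ∣ k - P - i := by
    by_contra hcon
    exact h2 (if_neg hcon)
  have hle := hP.le hp.two_le
  have e : P + (k - P - i) = k - i := by omega
  have h4 := Dle.add_of_sub hp.two_le hP h1
  rw [e] at h4
  refine ⟨h4.1, h4.2, by omega, ?_⟩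
  rw [← e]
  exact dvd_add hdP h3.2

lemma ne_zero_of_step (hp : p.Prime) [CharP F p] (hF : Fintype.card F = p ^ f) {k P N : ℕ}
    (hdP : p ^ f - 1 ∣ P) (h1 : Dle p P N) (h2 : Dle p N k) (h3 : P < N) (h4 : p ^ f - 1 ∣ N) :
    (((k - P).choose (k - N) : ℕ) : F) * ∑ x : F, x ^ (k - P - (k - N)) ≠ 0 := by
  have hle := h2.le hp.two_le
  have e : k - P - (k - N) = N - P := by omega
  refine mul_ne_zero ?_ ?_
  · rw [← Nat.choose_symm (show k - N ≤ k - P by omega), e, choose_ne_zero_iff F hp]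
    exact h1.sub_sub hp.two_le h2
  · rw [e, sum_pow_eq, hF, if_pos ⟨by omega, Nat.dvd_sub h4 hdP⟩]
    exact neg_ne_zero.mpr one_ne_zero

/-- Only the weights of digit paths occur as exponents in a power sum. -/
lemma coeff_powerSum_eq_zero (hp : p.Prime) [CharP F p] (hF : Fintype.card F = p ^ f) (k : ℕ) :
    ∀ (d P n : ℕ), Dle p P k → p ^ f - 1 ∣ P →
    (∀ l, l.length = d → IsPath p (p ^ f - 1) k P l → weight k l ≠ n) →
    (powerSum F d (k - P)).coeff n = 0 := by
  intro d
  induction d with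
  | zero =>
    intro P n _ _ h
    have h1 := h [] rfl trivial
    rw [powerSum_zero, coeff_one, if_neg]
    simpa [weight] using h1.symm
  | succ d ih =>
    intro P n hP hdP h
    rw [powerSum_succ, finsetSum_coeff]
    refine Finset.sum_eq_zero fun i hi => ?_
    have hi' : i ≤ k - P := by have := Finset.mem_range.mp hi; omega
    rw [coeff_mul_C, coeff_X_pow_mul']
    by_cases h0 : (((k - P).choose i : ℕ) : F) * ∑ x : F, x ^ (k - P - i) = 0
    · rw [h0, mul_zero]
    obtain ⟨s1, s2, s3, s4⟩ := step_of_ne_zero F hp hF hP hdP hi' h0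
    split_ifs with hin
    · have e : k - (k - i) = i := by omega
      have := ih (k - i) (n - i) s2 s4 fun l hl hpath hw => by
        refine h ((k - i) :: l) (by simp [hl]) ⟨s1, s2, s3, s4, hpath⟩ ?_
        rw [weight_cons, hw]
        omega
      rw [e] at this
      rw [this, zero_mul]
    · rw [zero_mul]

/-- A path which is the only one of its length and weight contributes a nonzero coefficient. -/
lemma coeff_powerSum_ne_zero (hp : p.Prime) [CharP F p] (hF : Fintype.card F = p ^ f) (k : ℕ) :
    ∀ (l0 : List ℕ) (P : ℕ), Dle p P k → p ^ f - 1 ∣ P → IsPath p (p ^ f - 1) k P l0 →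
    (∀ l, l.length = l0.length → IsPath p (p ^ f - 1) k P l → weight k l = weight k l0 → l = l0) →
    (powerSum F l0.length (k - P)).coeff (weight k l0) ≠ 0 := by
  intro l0
  induction l0 with
  | nil =>
    intro P _ _ _ _
    simp [powerSum_zero, weight]
  | cons N l0 ih =>
    intro P hP hdP hpath huniq
    obtain ⟨s1, s2, s3, s4, s5⟩ := hpath
    have hle := s2.le hp.two_le
    rw [List.length_cons, powerSum_succ, finsetSum_coeff, Finset.sum_eq_single (k - N)]
    · rw [coeff_mul_C, weight_cons, coeff_X_pow_mul', if_pos (by omega), Nat.add_sub_cancel_left]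
      refine mul_ne_zero (ih N s2 s4 s5 fun l hl hl' hw => ?_)
        (ne_zero_of_step F hp hF hdP s1 s2 s3 s4)
      have := huniq (N :: l) (by simp [hl]) ⟨s1, s2, s3, s4, hl'⟩ (by simp [weight_cons, hw])
      exact (List.cons.inj this).2
    · intro i hi hne
      have hi' : i ≤ k - P := by have := Finset.mem_range.mp hi; omega
      rw [coeff_mul_C, coeff_X_pow_mul']
      by_cases h0 : (((k - P).choose i : ℕ) : F) * ∑ x : F, x ^ (k - P - i) = 0
      · rw [h0, mul_zero]
      obtain ⟨t1, t2, t3, t4⟩ := step_of_ne_zero F hp hF hP hdP hi' h0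
      split_ifs with hin
      · have e : k - (k - i) = i := by omega
        have := coeff_powerSum_eq_zero F hp hF k l0.length (k - i) (weight k (N :: l0) - i) t2 t4
          fun l hl hl' hw => by
            have := huniq ((k - i) :: l) (by simp [hl]) ⟨t1, t2, t3, t4, hl'⟩
              (by rw [weight_cons, hw]; omega)
            have := (List.cons.inj this).1
            omega
        rw [e] at this
        rw [this, zero_mul]
      · rw [zero_mul]
    · intro h
      exact absurd (Finset.mem_range.mpr (by omega)) h

/-! ### Restricted power sums -/

lemma coeff_monicPoly (d : ℕ) (c : Fin d → F) (i : Fin d) : (monicPoly F d c).coeff i = c i := by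
  unfold monicPoly
  rw [coeff_add, coeff_X_pow, if_neg (by have := i.2; omega), zero_add, finsetSum_coeff,
    Finset.sum_eq_single i]
  · simp
  · intro j _ hj
    rw [coeff_C_mul, coeff_X_pow, if_neg (fun h => hj (Fin.ext h.symm)), mul_zero]
  · simp

lemma monicPoly_injective (d : ℕ) : Function.Injective (monicPoly F d) := fun c c' h => by
  funext i
  rw [← coeff_monicPoly F d c i, h, coeff_monicPoly]

lemma monicPoly_monic (d : ℕ) (c : Fin d → F) : (monicPoly F d c).Monic :=
  monic_X_pow_add (degree_sum_fin_lt c)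

lemma monicPoly_natDegree (d : ℕ) (c : Fin d → F) : (monicPoly F d c).natDegree = d := by
  apply natDegree_eq_of_degree_eq_some
  unfold monicPoly
  rw [degree_add_eq_left_of_degree_lt, degree_X_pow]
  rw [degree_X_pow]
  exact degree_sum_fin_lt c

lemma monicPoly_coeff {d : ℕ} {g : F[X]} (hg : g.Monic) (hd : g.natDegree = d) :
    monicPoly F d (fun i => g.coeff i) = g := by
  conv_rhs => rw [hg.as_sum, hd]
  unfold monicPoly
  rw [Fin.sum_univ_eq_sum_range (fun i => C (g.coeff i) * X ^ i)]

lemma rPowerSum_of_lt {v : F[X]} {d : ℕ} (hd : d < v.natDegree) (k : ℕ) :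
    rPowerSum F v d k = powerSum F d k := by
  unfold rPowerSum powerSum
  refine Finset.sum_congr rfl fun c _ => if_neg fun h => ?_
  have := natDegree_le_of_dvd h (monicPoly_monic F d c).ne_zero
  rw [monicPoly_natDegree] at this
  omega

/-- The multiples of `v` among the monic polynomials of degree `d` are the products `v b` with `b`
monic of degree `d - e`. -/
lemma rPowerSum_of_le {v : F[X]} (hv : v.Monic) {d : ℕ} (hd : v.natDegree ≤ d) (k : ℕ) :
    rPowerSum F v d k = powerSum F d k - v ^ k * powerSum F (d - v.natDegree) k := by
  have h1 : rPowerSum F v d k = powerSum F d k -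
      ∑ c ∈ Finset.univ.filter (fun c => v ∣ monicPoly F d c), monicPoly F d c ^ k := by
    unfold rPowerSum powerSum
    rw [Finset.sum_filter, ← Finset.sum_sub_distrib]
    refine Finset.sum_congr rfl fun c _ => ?_
    split_ifs <;> simp
  rw [h1]
  congr 1
  unfold powerSum
  rw [Finset.mul_sum]
  symm
  have hmon : ∀ c : Fin (d - v.natDegree) → F,
      (v * monicPoly F (d - v.natDegree) c).Monic ∧
      (v * monicPoly F (d - v.natDegree) c).natDegree = d := fun c => by
    refine ⟨hv.mul (monicPoly_monic F _ c), ?_⟩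
    rw [hv.natDegree_mul (monicPoly_monic F _ c), monicPoly_natDegree]
    omega
  refine Finset.sum_bij
    (fun c _ => fun i : Fin d => (v * monicPoly F (d - v.natDegree) c).coeff i) ?_ ?_ ?_ ?_
  · intro c _
    rw [Finset.mem_filter, monicPoly_coeff F (hmon c).1 (hmon c).2]
    exact ⟨Finset.mem_univ _, Dvd.intro _ rfl⟩
  · intro c _ c' _ h
    have h2 := congrArg (monicPoly F d) h
    rw [monicPoly_coeff F (hmon c).1 (hmon c).2, monicPoly_coeff F (hmon c').1 (hmon c').2] at h2
    exact monicPoly_injective F _ (mul_left_cancel₀ hv.ne_zero h2)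
  · intro c hc
    obtain ⟨b, hb⟩ := (Finset.mem_filter.mp hc).2
    have hbm : b.Monic := hv.of_mul_monic_left (hb ▸ monicPoly_monic F d c)
    have hbd : b.natDegree = d - v.natDegree := by
      have h2 := monicPoly_natDegree F d c
      rw [hb, hv.natDegree_mul hbm] at h2
      omega
    refine ⟨fun i => b.coeff i, Finset.mem_univ _, ?_⟩
    apply monicPoly_injective F d
    rw [monicPoly_coeff F (hmon _).1 (hmon _).2, monicPoly_coeff F hbm hbd, hb]
  · intro c _
    rw [monicPoly_coeff F (hmon c).1 (hmon c).2, mul_pow]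

/-! ### Vanishing -/

/-- Without digit paths of length `d` the power sum vanishes. -/
lemma powerSum_eq_zero (hp : p.Prime) [CharP F p] (hF : Fintype.card F = p ^ f) {k d : ℕ}
    (h : ¬ ∀ c : ZMod f, d * (p ^ f - 1) ≤ zsum p k k c) : powerSum F d k = 0 := by
  ext n
  rw [coeff_zero]
  have := coeff_powerSum_eq_zero (f := f) F hp hF k d 0 n (Dle.zero p k) (dvd_zero _)
    fun l hl hpath _ => h fun c => by rw [← hl]; exact hpath.length_le hp.two_le c
  simpa using this

/-- If a path of length `d` exists, the degree of the power sum is the weight of the optimal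
path. -/
lemma powerSum_degree (hp : p.Prime) [CharP F p] (hF : Fintype.card F = p ^ f) {k d : ℕ}
    (h : ∀ c : ZMod f, d * (p ^ f - 1) ≤ zsum p k k c) :
    powerSum F d k ≠ 0 ∧ ∀ l, l.length = d → IsPath p (p ^ f - 1) k 0 l →
      weight k l ≤ (powerSum F d k).natDegree := by
  obtain ⟨l0, hl0, hpath, hopt⟩ := exists_optimal_path hp.two_le h
  have h1 := coeff_powerSum_ne_zero F hp hF k l0 0 (Dle.zero p k) (dvd_zero _) hpath
    fun l hl hl' hw => (hopt l (hl.trans hl0) hl').2 hw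
  rw [hl0, Nat.sub_zero] at h1
  refine ⟨fun h0 => h1 (by rw [h0, coeff_zero]), fun l hl hl' => ?_⟩
  exact (hopt l hl hl').1.trans (le_natDegree_of_ne_zero h1)

lemma IsPath.weaken {Q k : ℕ} : ∀ {l : List ℕ} {P : ℕ}, IsPath p Q k P l → IsPath p Q k 0 l
  | [], _, _ => trivial
  | _ :: _, _, h => ⟨Dle.zero _ _, h.2.1, by have := h.2.2.1; omega, h.2.2.2.1, h.2.2.2.2⟩

/-- Dropping the first `e` members of a path lowers its weight by at most `e (k - 1)`. -/
lemma IsPath.drop (hp : 2 ≤ p) {Q k : ℕ} : ∀ (e : ℕ) {l : List ℕ} {P : ℕ}, e ≤ l.length →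
    IsPath p Q k P l →
    IsPath p Q k 0 (l.drop e) ∧ weight k l + e ≤ e * k + weight k (l.drop e)
  | 0, l, P, _, h => ⟨by simpa using h.weaken, by simp⟩
  | e + 1, [], _, he, _ => by simp at he
  | e + 1, N :: l, P, he, h => by
    have h1 := IsPath.drop hp e (l := l) (by simpa using he) h.2.2.2.2
    have h2 := h.2.1.le hp
    have h3 := h.2.2.1
    rw [List.drop_succ_cons, weight_cons, Nat.succ_mul]
    exact ⟨h1.1, by omega⟩

/-- The degree of `S_d` is too small for it to cancel against `v ^ k S_{d-e}`. -/
lemma rPowerSum_ne_zero (hp : p.Prime) [CharP F p] (hF : Fintype.card F = p ^ f) {k d : ℕ}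
    {v : F[X]} (hv : v.Monic) (hv0 : 0 < v.natDegree) (hd : v.natDegree ≤ d)
    (h : ∀ c : ZMod f, (d - v.natDegree) * (p ^ f - 1) ≤ zsum p k k c) :
    rPowerSum F v d k ≠ 0 := by
  rw [rPowerSum_of_le F hv hd]
  obtain ⟨h0, hdeg⟩ := powerSum_degree F hp hF h
  intro hz
  have heq := sub_eq_zero.mp hz
  have hn : (powerSum F d k).natDegree =
      v.natDegree * k + (powerSum F (d - v.natDegree) k).natDegree := by
    rw [heq, (hv.pow k).natDegree_mul' h0, hv.natDegree_pow, mul_comm]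
  have hne : powerSum F d k ≠ 0 := by
    rw [heq]; exact mul_ne_zero (hv.pow k).ne_zero h0
  have hlead : (powerSum F d k).coeff (powerSum F d k).natDegree ≠ 0 :=
    leadingCoeff_ne_zero.mpr hne
  apply hlead
  have := coeff_powerSum_eq_zero (f := f) F hp hF k d 0 (powerSum F d k).natDegree
    (Dle.zero p k) (dvd_zero _) fun l hl hpath hw => by
      obtain ⟨h1, h2⟩ := IsPath.drop hp.two_le v.natDegree (by omega) hpath
      have h3 := hdeg _ (by simp [hl]) h1
      omega
  simpa using this

end Power

/-- The comparison of `d` with `L_k` in terms of twisted digit sums. -/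
lemma le_Lval_iff {p f : ℕ} [NeZero f] (hp : 2 ≤ p) (k d : ℕ) :
    (d : ℚ) ≤ Lval (p ^ f) p f k ↔ ∀ c : ZMod f, d * (p ^ f - 1) ≤ zsum p k k c := by
  have hq := one_lt_pow' (f := f) hp
  have hq' : (0 : ℚ) < ((p ^ f : ℕ) : ℚ) - 1 := by
    have : (2 : ℚ) ≤ ((p ^ f : ℕ) : ℚ) := by exact_mod_cast hq
    linarith
  have hk : k < p ^ k := lt_pow_of_le hp le_rfl
  have hterm : ∀ c : ZMod f, (d : ℚ) ≤
      ((Nat.digits (p ^ f) (k * p ^ c.val)).sum : ℚ) / (((p ^ f : ℕ) : ℚ) - 1) ↔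
      d * (p ^ f - 1) ≤ zsum p k k c := by
    intro c
    rw [le_div_iff₀ hq', digits_sum_eq_zsum hp k k c hk]
    have : (((p ^ f : ℕ) : ℚ) - 1) = ((p ^ f - 1 : ℕ) : ℚ) := by
      rw [Nat.cast_sub (by omega)]; simp
    rw [this]
    exact_mod_cast Iff.rfl
  refine (Finset.le_inf'_iff (s := Finset.Icc 0 (f - 1)) _ _).trans ?_
  constructor
  · intro h c
    rw [← hterm]
    have := ZMod.val_lt c
    exact h c.val (Finset.mem_Icc.mpr ⟨Nat.zero_le _, by omega⟩)
  · intro h i hi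
    have h1 := (Finset.mem_Icc.mp hi).2
    have h2 : i < f := by have := NeZero.pos f; omega
    have h3 := (hterm (i : ZMod f)).mpr (h i)
    rwa [ZMod.val_natCast, Nat.mod_eq_of_lt h2] at h3

end PS

theorem stmt8 (p f q : ℕ) (hp : p.Prime) (hf : 0 < f) (hq : q = p ^ f)
    (F : Type) [Field F] [Fintype F] (hF : Fintype.card F = q)
    (v : F[X]) (hv : v.Monic) (hirr : Irreducible v)
    (e : ℕ) (he : v.natDegree = e)
    (k d : ℕ) (hk : 0 < k) :
    rPowerSum F v d k = 0 ↔
      (Lval q p f k + (e : ℚ) < (d : ℚ) ∨ (⌊Lval q p f k⌋ < (d : ℤ) ∧ d < e)) := by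
  subst hq he
  have : NeZero f := ⟨hf.ne'⟩
  have : CharP F p := by
    have : Fact p.Prime := ⟨hp⟩
    exact charP_of_card_eq_prime_pow hF
  have hL := PS.le_Lval_iff (f := f) hp.two_le k
  have hL0 : (0 : ℚ) ≤ Lval (p ^ f) p f k := by
    have := (hL 0).mpr (fun c => by simp)
    simpa using this
  have hfloor : ⌊Lval (p ^ f) p f k⌋ < (d : ℤ) ↔ ¬ ((d : ℚ) ≤ Lval (p ^ f) p f k) := by
    rw [Int.floor_lt, not_le, Int.cast_natCast]
  rcases lt_or_ge d v.natDegree with hd | hd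
  · rw [PS.rPowerSum_of_lt F hd, hfloor]
    have h1 : ¬ (Lval (p ^ f) p f k + (v.natDegree : ℚ) < (d : ℚ)) := by
      have : (d : ℚ) < v.natDegree := by exact_mod_cast hd
      linarith
    constructor
    · intro h
      exact Or.inr ⟨fun h2 => (PS.powerSum_degree F hp hF ((hL d).mp h2)).1 h, hd⟩
    · rintro (h | h)
      · exact absurd h h1
      · exact PS.powerSum_eq_zero F hp hF fun h2 => h.1 ((hL d).mpr h2)
  · have hcast : ((d - v.natDegree : ℕ) : ℚ) = (d : ℚ) - v.natDegree := by
      rw [Nat.cast_sub hd]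
    constructor
    · intro h
      left
      by_contra hcon
      refine PS.rPowerSum_ne_zero F hp hF hv hirr.natDegree_pos hd ((hL _).mp ?_) h
      rw [hcast]
      linarith
    · rintro (h | h)
      · have h1 : ¬ ((d - v.natDegree : ℕ) : ℚ) ≤ Lval (p ^ f) p f k := by
          rw [hcast]; linarith
        have h2 : ¬ (d : ℚ) ≤ Lval (p ^ f) p f k := by
          have : (0 : ℚ) ≤ v.natDegree := by positivity
          linarith
        rw [PS.rPowerSum_of_le F hv hd, PS.powerSum_eq_zero F hp hF (fun h3 => h2 ((hL d).mpr h3)),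
          PS.powerSum_eq_zero F hp hF (fun h3 => h1 ((hL _).mpr h3))]
        simp
      · omega
end

section
/- Let q = p^f be a power of a prime p, let v ∈ F_q[t] be a monic irreducible polynomial of degree e, let r > 1 and let s_1,…,s_r be negative integers. Suppose that either (1) there exists 1 ≤ i ≤ r with r−i > L_{−s_i} + e, or (2) there exist 1 ≤ j < i ≤ r with e > r−i > L_{−s_i} and i−j > L_{−s_j}. Then ζ_v(s_1,…,s_r) = 0; indeed, the product S̃_{d_1}(s_1)···S̃_{d_r}(s_r) vanishes for every tuple of integers d_1 > d_2 > … > d_r ≥ 0. -/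
/-!
The full power sum `S_d(-k)` vanishes as soon as `d > L_k` (`powerSum_eq_zero_of_Lval_lt`). Choose
`i` with `l(k p^i) < (q - 1) d` and put `K = k p^i`. Since `S_d(-k)^(p^i) = S_d(-K)` in
characteristic `p`, it is enough that `S_d(-K) = 0`. Write `K = ∑ n_j q^j` in base `q`. For a monic
`a = t^d + ∑ c_i t^i` the power `a^(q^j) = t^(d q^j) + ∑ c_i t^(i q^j)` is affine in the
coefficients `c`, because `c_i^q = c_i`; hence `a^K = ∏ (a^(q^j))^(n_j)` is a polynomial in `c` of
total degree at most `l(K)` (`exists_mvPolynomial_eval_eq`). As `l(K) < (q - 1) d`, the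
Chevalley-Warning argument shows that its sum over all `c` is zero.

The monic multiples of `v` of degree `d ≥ e` are the `v b` with `b` monic of degree `d - e`, so
`S̃_d(-k) = S_d(-k) - v^k S_{d-e}(-k)`, and `S̃_d(-k) = S_d(-k)` for `d < e`. Therefore `S̃_d(-k)`
vanishes if `d > L_k + e`, and also if `e > d > L_k`. Along a strictly decreasing tuple of naturals
`d_i ≥ r - i` and `d_j ≥ d_i + (i - j)`. In the first case of the theorem the `i`-th factor is zero.
In the second case the `i`-th factor is zero if `d_i < e`, and the `j`-th factor is zero otherwise.
-/

open Polynomial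

open scoped Classical

/-! ### Vanishing of the full power sums -/

/-- The Chevalley-Warning vanishing of sums over all points of `F^σ`, for a polynomial whose
coefficients lie in `F[X]` rather than in `F`. -/
lemma sum_eval_C_eq_zero {F : Type} [Field F] [Fintype F] {σ : Type} [Fintype σ]
    [DecidableEq σ] (P : MvPolynomial σ F[X])
    (h : P.totalDegree < (Fintype.card F - 1) * Fintype.card σ) :
    ∑ c : σ → F, MvPolynomial.eval (fun i => C (c i)) P = 0 := by
  simp only [MvPolynomial.eval_eq']
  rw [Finset.sum_comm]
  refine Finset.sum_eq_zero fun m hm => ?_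
  have key : ∑ c : σ → F, ∏ i, c i ^ m i = 0 := by
    have h1 : (MvPolynomial.monomial m (1 : F)).totalDegree
        < (Fintype.card F - 1) * Fintype.card σ := by
      rw [MvPolynomial.totalDegree_monomial _ one_ne_zero]
      exact lt_of_le_of_lt (MvPolynomial.le_totalDegree hm) h
    have h2 := MvPolynomial.sum_eval_eq_zero _ h1
    simpa [MvPolynomial.eval_monomial, Finsupp.prod_fintype] using h2
  rw [← Finset.mul_sum]
  have : ∑ c : σ → F, ∏ i, (C (c i) : F[X]) ^ m i = C (∑ c : σ → F, ∏ i, c i ^ m i) := by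
    simp
  rw [this, key]
  simp

/-- The `q^j`-th power of a monic polynomial is affine in its coefficients. -/
lemma monicPoly_pow_card_pow {p f : ℕ} (hp : p.Prime) {F : Type} [Field F] [Fintype F]
    [CharP F p] (hF : Fintype.card F = p ^ f) (d j : ℕ) (c : Fin d → F) :
    monicPoly F d c ^ ((p ^ f) ^ j) =
      X ^ (d * (p ^ f) ^ j) + ∑ i : Fin d, C (c i) * X ^ ((i : ℕ) * (p ^ f) ^ j) := by
  have : Fact p.Prime := ⟨hp⟩
  have hc : ∀ a : F, a ^ (p ^ f) ^ j = a := fun a => by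
    rw [← hF]; exact FiniteField.pow_card_pow j a
  unfold monicPoly
  rw [← pow_mul p f j, add_pow_char_pow, sum_pow_char_pow, pow_mul p f j, ← pow_mul]
  congr 1
  refine Finset.sum_congr rfl fun i _ => ?_
  rw [mul_pow, ← C_pow, hc, ← pow_mul]

/-- If `L` is a list of base-`q` digits of `K`, then `a^(q^j K)` is a polynomial in the coefficients
of the monic polynomial `a`, of total degree at most the digit sum. -/
lemma exists_mvPolynomial_eval_eq {p f : ℕ} (hp : p.Prime) {F : Type} [Field F] [Fintype F]
    [CharP F p] (hF : Fintype.card F = p ^ f) (d : ℕ) (L : List ℕ) :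
    ∀ j : ℕ, ∃ P : MvPolynomial (Fin d) F[X], P.totalDegree ≤ L.sum ∧
      ∀ c : Fin d → F, MvPolynomial.eval (fun i => C (c i)) P =
        monicPoly F d c ^ ((p ^ f) ^ j * Nat.ofDigits (p ^ f) L) := by
  induction L with
  | nil => exact fun j => ⟨1, by simp, by simp⟩
  | cons n t ih =>
    intro j
    obtain ⟨P, hP, hPe⟩ := ih (j + 1)
    let A : MvPolynomial (Fin d) F[X] := MvPolynomial.C (X ^ (d * (p ^ f) ^ j)) +
      ∑ i : Fin d, MvPolynomial.X i * MvPolynomial.C (X ^ ((i : ℕ) * (p ^ f) ^ j))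
    have hA : A.totalDegree ≤ 1 := by
      refine (MvPolynomial.totalDegree_add _ _).trans (max_le ?_ ?_)
      · rw [MvPolynomial.totalDegree_C]
        exact zero_le_one
      refine MvPolynomial.totalDegree_finsetSum_le fun i _ => ?_
      refine (MvPolynomial.totalDegree_mul _ _).trans ?_
      rw [MvPolynomial.totalDegree_C, MvPolynomial.totalDegree_X]
    have hAe : ∀ c : Fin d → F, MvPolynomial.eval (fun i => C (c i)) A =
        monicPoly F d c ^ ((p ^ f) ^ j) := fun c => by
      rw [monicPoly_pow_card_pow hp hF]
      simp [A]
    refine ⟨A ^ n * P, ?_, fun c => ?_⟩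
    · refine (MvPolynomial.totalDegree_mul _ _).trans ?_
      rw [List.sum_cons]
      refine add_le_add ((MvPolynomial.totalDegree_pow _ _).trans ?_) hP
      simpa using Nat.mul_le_mul_left n hA
    · rw [map_mul, map_pow, hAe, hPe, Nat.ofDigits_cons, ← pow_mul, ← pow_add]
      congr 1
      ring

lemma powerSum_eq_zero_of_digits_sum_lt {p f : ℕ} (hp : p.Prime) {F : Type} [Field F] [Fintype F]
    [CharP F p] (hF : Fintype.card F = p ^ f) {d K : ℕ}
    (h : (Nat.digits (p ^ f) K).sum < (p ^ f - 1) * d) : powerSum F d K = 0 := by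
  obtain ⟨P, hP, hPe⟩ := exists_mvPolynomial_eval_eq hp hF d (Nat.digits (p ^ f) K) 0
  have := sum_eval_C_eq_zero P (by simpa [hF] using hP.trans_lt h)
  simpa [hPe, Nat.ofDigits_digits, powerSum] using this

lemma powerSum_eq_zero_of_Lval_lt {p f : ℕ} (hp : p.Prime) {F : Type} [Field F] [Fintype F]
    (hF : Fintype.card F = p ^ f) {d k : ℕ} (h : Lval (p ^ f) p f k < d) :
    powerSum F d k = 0 := by
  have : Fact p.Prime := ⟨hp⟩
  have : CharP F p := charP_of_card_eq_prime_pow hF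
  have hq : 1 < p ^ f := hF ▸ Fintype.one_lt_card
  obtain ⟨i, -, hi⟩ := (Finset.inf'_lt_iff _).1 h
  have hq' : (0 : ℚ) < ((p ^ f : ℕ) : ℚ) - 1 := by
    have : (1 : ℚ) < ((p ^ f : ℕ) : ℚ) := by exact_mod_cast hq
    linarith
  rw [div_lt_iff₀ hq'] at hi
  have hlt : (Nat.digits (p ^ f) (k * p ^ i)).sum < (p ^ f - 1) * d := by
    have h1 : ((p ^ f - 1 : ℕ) : ℚ) = ((p ^ f : ℕ) : ℚ) - 1 := by
      rw [Nat.cast_sub hq.le, Nat.cast_one]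
    rw [← h1, mul_comm (d : ℚ)] at hi
    exact_mod_cast hi
  have h0 := powerSum_eq_zero_of_digits_sum_lt hp hF hlt
  have hpow : powerSum F d k ^ p ^ i = powerSum F d (k * p ^ i) := by
    simp only [powerSum, sum_pow_char_pow, pow_mul]
  rw [h0] at hpow
  exact eq_zero_of_pow_eq_zero hpow

/-! ### Removing the multiples of `v` -/

lemma degree_lower_lt {F : Type} [Field F] (d : ℕ) (c : Fin d → F) :
    (∑ i : Fin d, C (c i) * X ^ (i : ℕ) : F[X]).degree < d :=
  degree_sum_fin_lt c

lemma monicPoly_monic {F : Type} [Field F] (d : ℕ) (c : Fin d → F) : (monicPoly F d c).Monic :=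
  monic_X_pow_add (degree_lower_lt d c)

lemma monicPoly_natDegree {F : Type} [Field F] (d : ℕ) (c : Fin d → F) :
    (monicPoly F d c).natDegree = d := by
  apply natDegree_eq_of_degree_eq_some
  unfold monicPoly
  rw [degree_add_eq_left_of_degree_lt, degree_X_pow]
  rw [degree_X_pow]
  exact degree_lower_lt d c

lemma monicPoly_coeff {F : Type} [Field F] (d : ℕ) (c : Fin d → F) (i : Fin d) :
    (monicPoly F d c).coeff i = c i := by
  have : (i : ℕ) ≠ d := i.2.ne
  simp [monicPoly, coeff_X_pow, this, finsetSum_coeff, Fin.val_inj]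

lemma monicPoly_of_monic {F : Type} [Field F] {d : ℕ} {a : F[X]} (ha : a.Monic)
    (hd : a.natDegree = d) : monicPoly F d (fun i => a.coeff i) = a := by
  subst hd
  conv_rhs => rw [ha.as_sum]
  unfold monicPoly
  rw [Finset.sum_range]

/-- Multiplication by `v` is a bijection from the monic polynomials of degree `d` to the monic
multiples of `v` of degree `d + e`. -/
lemma sum_multiples {F : Type} [Field F] [Fintype F] {v : F[X]} (hv : v.Monic) (d k : ℕ) :
    (∑ c : Fin (d + v.natDegree) → F, if v ∣ monicPoly F (d + v.natDegree) c then
      monicPoly F (d + v.natDegree) c ^ k else 0) = v ^ k * powerSum F d k := by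
  have hm : ∀ b : Fin d → F, (v * monicPoly F d b).Monic := fun b => hv.mul (monicPoly_monic d b)
  have hn : ∀ b : Fin d → F, (v * monicPoly F d b).natDegree = d + v.natDegree := fun b => by
    rw [hv.natDegree_mul (monicPoly_monic d b), monicPoly_natDegree, add_comm]
  rw [← Finset.sum_filter, powerSum, Finset.mul_sum]
  symm
  refine Finset.sum_nbij (fun b i => (v * monicPoly F d b).coeff i) ?_ ?_ ?_ ?_
  · intro b _
    simp [monicPoly_of_monic (hm b) (hn b)]
  · intro b _ b' _ hbb
    have h1 := congrArg (monicPoly F (d + v.natDegree)) hbb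
    simp only [monicPoly_of_monic (hm _) (hn _)] at h1
    have h2 := mul_left_cancel₀ hv.ne_zero h1
    funext i
    rw [← monicPoly_coeff d b, h2, monicPoly_coeff]
  · intro c hc
    obtain ⟨b, hb⟩ : v ∣ monicPoly F (d + v.natDegree) c := by simpa using hc
    have hbm : b.Monic := hv.of_mul_monic_left (hb ▸ monicPoly_monic _ c)
    have hbd : b.natDegree = d := by
      have h1 := congrArg natDegree hb
      rw [monicPoly_natDegree, hv.natDegree_mul hbm] at h1
      omega
    refine ⟨fun i => b.coeff i, by simp, ?_⟩
    funext i
    simp only [monicPoly_of_monic hbm hbd, ← hb, monicPoly_coeff]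
  · intro b _
    rw [monicPoly_of_monic (hm b) (hn b), mul_pow]

lemma rPowerSum_add {F : Type} [Field F] [Fintype F] {v : F[X]} (hv : v.Monic) (d k : ℕ) :
    rPowerSum F v (d + v.natDegree) k =
      powerSum F (d + v.natDegree) k - v ^ k * powerSum F d k := by
  rw [← sum_multiples hv, rPowerSum, powerSum, ← Finset.sum_sub_distrib]
  refine Finset.sum_congr rfl fun c _ => ?_
  split_ifs <;> simp

lemma rPowerSum_of_lt {F : Type} [Field F] [Fintype F] {v : F[X]} {d : ℕ}
    (hd : d < v.natDegree) (k : ℕ) : rPowerSum F v d k = powerSum F d k := by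
  refine Finset.sum_congr rfl fun c _ => if_neg fun hdvd => ?_
  have := natDegree_le_of_dvd hdvd (monicPoly_monic d c).ne_zero
  rw [monicPoly_natDegree] at this
  omega

lemma rPowerSum_eq_zero_of_Lval_add_lt {p f : ℕ} (hp : p.Prime) {F : Type} [Field F] [Fintype F]
    (hF : Fintype.card F = p ^ f) {v : F[X]} (hv : v.Monic) {d k : ℕ}
    (h : Lval (p ^ f) p f k + (v.natDegree : ℚ) < d) (hd : v.natDegree ≤ d) :
    rPowerSum F v d k = 0 := by
  obtain ⟨d, rfl⟩ := Nat.exists_eq_add_of_le' hd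
  push_cast at h
  have h1 : Lval (p ^ f) p f k < d := by linarith
  have h2 : Lval (p ^ f) p f k < ((d + v.natDegree : ℕ) : ℚ) := by
    push_cast
    have : (0 : ℚ) ≤ v.natDegree := Nat.cast_nonneg _
    linarith
  rw [rPowerSum_add hv, powerSum_eq_zero_of_Lval_lt hp hF h1, powerSum_eq_zero_of_Lval_lt hp hF h2]
  simp

lemma Lval_nonneg {q p f k : ℕ} (hq : 1 ≤ q) : 0 ≤ Lval q p f k := by
  refine (Finset.le_inf'_iff _ _).2 fun i _ => div_nonneg (Nat.cast_nonneg _) ?_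
  have : (1 : ℚ) ≤ q := by exact_mod_cast hq
  linarith

/-! ### Strictly decreasing tuples -/

lemma StrictAnti.add_sub_le {r : ℕ} {d : Fin r → ℕ} (hd : StrictAnti d) (j : Fin r) :
    ∀ (n : ℕ) (hn : (j : ℕ) + n < r), d ⟨j + n, hn⟩ + n ≤ d j := by
  intro n
  induction n with
  | zero => intro hn; simp
  | succ n ih =>
    intro hn
    have h1 := ih (by omega)
    have h2 : d ⟨j + (n + 1), hn⟩ < d ⟨j + n, by omega⟩ := hd (by simp [Fin.lt_def])
    omega

theorem stmt9 (p f q : ℕ) (hp : p.Prime) (hf : 0 < f) (hq : q = p ^ f)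
    (F : Type) [Field F] [Fintype F] (hF : Fintype.card F = q)
    (v : F[X]) (hv : v.Monic) (hirr : Irreducible v)
    (e : ℕ) (he : v.natDegree = e)
    (r : ℕ) (hr : 1 < r) (s : Fin r → ℤ) (hs : ∀ i, s i < 0)
    (h : (∃ i : Fin r,
            Lval q p f (-(s i)).toNat + (e : ℚ) < ((r - 1 - (i : ℕ) : ℕ) : ℚ)) ∨
         (∃ i j : Fin r, j < i ∧
            (r - 1 - (i : ℕ) : ℕ) < e ∧
            Lval q p f (-(s i)).toNat < ((r - 1 - (i : ℕ) : ℕ) : ℚ) ∧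
            Lval q p f (-(s j)).toNat < (((i : ℕ) - (j : ℕ) : ℕ) : ℚ))) :
    zetaV F v s = 0 ∧
      ∀ d : Fin r → ℕ, StrictAnti d →
        (∏ i, rPowerSum F v (d i) (-(s i)).toNat) = 0 := by
  subst hq he
  have hprod : ∀ d : Fin r → ℕ, StrictAnti d →
      (∏ i, rPowerSum F v (d i) (-(s i)).toNat) = 0 := by
    intro d hd
    have hge : ∀ i : Fin r, r - 1 - (i : ℕ) ≤ d i := fun i => by
      have := hd.add_sub_le i (r - 1 - i) (by omega)
      omega
    rcases h with ⟨i, hi⟩ | ⟨i, j, hji, hie, hi, hj⟩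
    · refine Finset.prod_eq_zero (Finset.mem_univ i) ?_
      have hdi : ((r - 1 - (i : ℕ) : ℕ) : ℚ) ≤ d i := by exact_mod_cast hge i
      have hlt := hi.trans_le hdi
      have h0 : 0 ≤ Lval (p ^ f) p f (-(s i)).toNat := Lval_nonneg (Nat.pow_pos hp.pos)
      refine rPowerSum_eq_zero_of_Lval_add_lt hp hF hv hlt ?_
      have : (v.natDegree : ℚ) ≤ d i := by linarith
      exact_mod_cast this
    · by_cases hde : d i < v.natDegree
      · refine Finset.prod_eq_zero (Finset.mem_univ i) ?_
        rw [rPowerSum_of_lt hde]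
        have hdi : ((r - 1 - (i : ℕ) : ℕ) : ℚ) ≤ d i := by exact_mod_cast hge i
        exact powerSum_eq_zero_of_Lval_lt hp hF (hi.trans_le hdi)
      · refine Finset.prod_eq_zero (Finset.mem_univ j) ?_
        have hlt' : (j : ℕ) < i := hji
        have h1 : d i + ((i : ℕ) - j) ≤ d j := by
          have h2 := hd.add_sub_le j (i - j) (by omega)
          have h3 : (⟨(j : ℕ) + (i - j), by omega⟩ : Fin r) = i := Fin.ext (by simp; omega)
          rwa [h3] at h2
        have h4 : ((((i : ℕ) - (j : ℕ) : ℕ) : ℚ)) + (v.natDegree : ℚ) ≤ d j := by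
          have : ((i : ℕ) - (j : ℕ)) + v.natDegree ≤ d j := by omega
          exact_mod_cast this
        exact rPowerSum_eq_zero_of_Lval_add_lt hp hF hv (by linarith) (by omega)
  exact ⟨finsum_mem_eq_zero_of_forall_eq_zero fun d hd => hprod d hd, hprod⟩
end

section
/- Let q = p^f be a power of a prime p, let d ≥ 1 and k > 0, and take the prime v = t. Then in F_q[t] one has Σ_{a monic of degree d, t ∤ a} a^k = (-1)^d · Σ_{(m_0,…,m_d)} multinomial(k; m_0,…,m_d) · t^{d·m_0 + (d-1)·m_1 + … + 1·m_{d-1}}, where the sum on the right runs over all (d+1)-tuples (m_0,…,m_d) of nonnegative integers such that m_0 + … + m_d = k with no carrying of base-p digits, m_i > 0 and (q-1) | m_i for all 1 ≤ i ≤ d−1, and (q-1) | m_d (with m_d ≥ 0 allowed to be zero), and where the multinomial coefficients are reduced modulo p. -/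
/-!
Write a monic polynomial of degree `d` as `∑ i, b i * X ^ (d - i)` with `b 0 = 1`, and expand its
`k`-th power by the multinomial theorem. Summing over the coefficients `b 1, …, b d` separately
turns the coefficient of `multinomial m * X ^ wt m` into a product of power sums over `F`:
`∑ x, x ^ n` for the inner coefficients, which is `-1` if `0 < n` and `q - 1 ∣ n` and `0` otherwise
(`sum_pow_field`), and `∑ x ≠ 0, x ^ n` for the constant coefficient, which is `-1` if `q - 1 ∣ n`
and `0` otherwise (`sum_pow_nonzero`). Hence exactly the tuples satisfying the divisibility
conditions survive, each with sign `(-1) ^ d`.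

The tuples whose sum involves a carry contribute nothing, because their multinomial coefficient
vanishes modulo `p` (`noCarry_of_not_dvd`): by Legendre's formula its `p`-adic valuation is
`∑ j ≥ 1, (⌊k / p ^ j⌋ - ∑ i, ⌊m i / p ^ j⌋)`, a sum of nonnegative terms; if it is zero, then all
these floors add up exactly, and so do the digits, which are determined by the floors.
-/

open Polynomial

open scoped Classical

/-- Floors of quotients are superadditive. -/
lemma sum_div_le {n : ℕ} (m : Fin n → ℕ) (a : ℕ) (ha : 0 < a) :
    ∑ i, m i / a ≤ (∑ i, m i) / a := by
  rw [Nat.le_div_iff_mul_le ha, Finset.sum_mul]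
  exact Finset.sum_le_sum fun i _ => Nat.div_mul_le_self _ _

/-- One direction of Kummer's theorem for multinomial coefficients. -/
lemma noCarry_of_not_dvd {p : ℕ} (hp : p.Prime) {n : ℕ} (m : Fin n → ℕ) (k : ℕ)
    (hm : ∑ i, m i = k) (h : ¬ p ∣ Nat.multinomial Finset.univ m) : NoCarry p m k := by
  have : Fact p.Prime := ⟨hp⟩
  refine ⟨hm, fun j => ?_⟩
  -- The bound `b` is chosen large enough for Legendre's formula for every factorial involved
  -- and to contain the exponents `j` and `j + 1`.
  set b := Nat.log p k + j + 2 with hb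
  have hle : ∀ i, m i ≤ k := fun i => by
    rw [← hm]; exact Finset.single_le_sum (fun _ _ => Nat.zero_le _) (Finset.mem_univ i)
  have key : ∑ l ∈ Finset.Ico 1 b, ∑ i, m i / p ^ l = ∑ l ∈ Finset.Ico 1 b, k / p ^ l := by
    have hspec := Nat.multinomial_spec (Finset.univ : Finset (Fin n)) m
    rw [hm] at hspec
    have hv := congrArg (padicValNat p) hspec
    rw [padicValNat.mul (Finset.prod_ne_zero_iff.2 fun i _ => Nat.factorial_ne_zero _)
      (Nat.multinomial_pos _ _).ne', padicValNat.eq_zero_of_not_dvd h, add_zero,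
      padicValNat_factorial (b := b) (by omega)] at hv
    rw [← hv, Finset.sum_comm]
    have hprod : ∀ s : Finset (Fin n), padicValNat p (∏ i ∈ s, (m i).factorial) =
        ∑ i ∈ s, padicValNat p (m i).factorial := by
      intro s
      induction s using Finset.induction_on with
      | empty => simp
      | insert a s ha ih =>
        rw [Finset.prod_insert ha, Finset.sum_insert ha, padicValNat.mul
          (Nat.factorial_ne_zero _)
          (Finset.prod_ne_zero_iff.2 fun i _ => Nat.factorial_ne_zero _), ih]
    rw [hprod]
    refine Finset.sum_congr rfl fun i _ => ?_
    rw [padicValNat_factorial (b := b)]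
    have := Nat.log_mono_right (b := p) (hle i)
    omega
  have hfloor : ∀ l, l < b → ∑ i, m i / p ^ l = k / p ^ l := by
    intro l hl
    rcases Nat.eq_zero_or_pos l with rfl | hl0
    · simpa using hm
    · refine (Finset.sum_eq_sum_iff_of_le fun l _ => ?_).1 key l (Finset.mem_Ico.2 ⟨hl0, hl⟩)
      rw [← hm]
      exact sum_div_le m _ (pow_pos hp.pos _)
  have hdigit : ∀ a : ℕ, a / p ^ j = a / p ^ j % p + p * (a / p ^ (j + 1)) := fun a => by
    rw [pow_succ, ← Nat.div_div_eq_div_mul, Nat.mod_add_div]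
  simp only [Nat.getD_digits _ _ hp.two_le]
  have h1 := hfloor j (by omega)
  have h2 := hfloor (j + 1) (by omega)
  rw [Finset.sum_congr rfl fun i _ => hdigit (m i), Finset.sum_add_distrib, ← Finset.mul_sum,
    h2] at h1
  have h3 := hdigit k
  omega

lemma sum_pow_nonzero (F : Type) [Field F] [Fintype F] (n : ℕ) :
    ∑ x : F, (if x = 0 then 0 else x ^ n) = if Fintype.card F - 1 ∣ n then -1 else 0 := by
  rw [← FiniteField.sum_pow_units F n, ← Finset.sum_filter_add_sum_filter_not Finset.univ
    (fun x : F => x = 0)]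
  rw [Finset.sum_eq_zero (s := Finset.univ.filter (fun x : F => x = 0)), zero_add]
  · symm
    refine Finset.sum_bij (fun (u : Fˣ) _ => (u : F)) ?_ ?_ ?_ ?_
    · intro u _; simp
    · intro u _ v _ h; exact Units.ext h
    · intro x hx
      exact ⟨Units.mk0 x (by simpa using hx), Finset.mem_univ _, rfl⟩
    · intro u _; simp
  · intro x hx
    simp [(Finset.mem_filter.1 hx).2]

lemma sum_pow_field (F : Type) [Field F] [Fintype F] (n : ℕ) :
    ∑ x : F, x ^ n = if 0 < n ∧ Fintype.card F - 1 ∣ n then -1 else 0 := by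
  rcases Nat.eq_zero_or_pos n with rfl | hn
  · simp
  · simp only [hn, true_and]
    rw [← sum_pow_nonzero F n]
    refine Finset.sum_congr rfl fun x _ => ?_
    split_ifs with hx
    · rw [hx, zero_pow hn.ne']
    · rfl

/-- The multinomial expansion of a power of a monic polynomial, indexed so that `m i` is the
exponent attached to the coefficient of `X ^ (d - i)`. -/
lemma monicPoly_pow (F : Type) [Field F] (d k : ℕ) (c : Fin d → F) :
    monicPoly F d c ^ k = ∑ m ∈ Finset.piAntidiag (Finset.univ : Finset (Fin (d + 1))) k,
      (Nat.multinomial Finset.univ m : F[X]) * X ^ wt m * C (∏ i : Fin d, c i ^ m i.rev.succ) := by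
  have h : monicPoly F d c =
      ∑ i : Fin (d + 1), C (Fin.cons (α := fun _ => F) 1 (fun j : Fin d => c j.rev) i) *
        X ^ (d - (i : ℕ)) := by
    rw [Fin.sum_univ_succ]
    simp only [Fin.cons_zero, Fin.cons_succ, map_one, one_mul, Fin.val_zero, Nat.sub_zero,
      Fin.val_succ, monicPoly]
    congr 1
    refine Fintype.sum_equiv Fin.revPerm _ _ fun i => ?_
    simp only [Fin.revPerm_apply, Fin.rev_rev, Fin.val_rev]
    congr 2
    omega
  rw [h, Finset.sum_pow_eq_sum_piAntidiag]
  refine Finset.sum_congr rfl fun m _ => ?_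
  rw [mul_assoc]
  congr 1
  simp only [mul_pow, Finset.prod_mul_distrib, ← pow_mul]
  rw [Finset.prod_pow_eq_pow_sum, mul_comm, wt]
  congr 1
  simp only [← C_pow, ← map_prod]
  congr 1
  rw [Fin.prod_univ_succ]
  simp only [Fin.cons_zero, Fin.cons_succ, one_pow, one_mul]
  exact Fintype.prod_equiv Fin.revPerm _ _ fun i => by simp

lemma X_dvd_monicPoly (F : Type) [Field F] (e : ℕ) (c : Fin (e + 1) → F) :
    X ∣ monicPoly F (e + 1) c ↔ c 0 = 0 := by
  rw [X_dvd_iff, monicPoly, Fin.sum_univ_succ]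
  simp [coeff_X_pow, mul_coeff_zero]

/-- The sum over all admissible lower coefficients factors into one-variable power sums. -/
lemma sum_prod_pow (F : Type) [Field F] [Fintype F] (e : ℕ) (m : Fin (e + 1 + 1) → ℕ) :
    ∑ c : Fin (e + 1) → F, (if c 0 = 0 then 0 else ∏ i, c i ^ m i.rev.succ) =
      if (∀ i : Fin (e + 1 + 1), 0 < (i : ℕ) → (i : ℕ) < e + 1 →
          0 < m i ∧ (Fintype.card F - 1) ∣ m i) ∧ (Fintype.card F - 1) ∣ m (Fin.last (e + 1))
      then (-1) ^ (e + 1) else 0 := by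
  have hsum : ∑ c : Fin (e + 1) → F, (if c 0 = 0 then 0 else ∏ i, c i ^ m i.rev.succ) =
      ∏ i : Fin (e + 1), ∑ x : F,
        (if i = 0 then (if x = 0 then 0 else x ^ m i.rev.succ) else x ^ m i.rev.succ) := by
    rw [Finset.prod_univ_sum, Fintype.piFinset_univ]
    refine Finset.sum_congr rfl fun c _ => ?_
    rw [Fin.prod_univ_succ, Fin.prod_univ_succ]
    simp only [if_true, Fin.succ_ne_zero, if_false]
    split_ifs <;> simp
  rw [hsum, Fin.prod_univ_succ]
  simp only [if_true, Fin.succ_ne_zero, if_false, sum_pow_nonzero, sum_pow_field, Fin.rev_zero,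
    Fin.succ_last]
  have hiff : (∀ i : Fin (e + 1 + 1), 0 < (i : ℕ) → (i : ℕ) < e + 1 →
      0 < m i ∧ (Fintype.card F - 1) ∣ m i) ↔
      ∀ i : Fin e, 0 < m i.succ.rev.succ ∧ (Fintype.card F - 1) ∣ m i.succ.rev.succ := by
    constructor
    · intro h i
      refine h _ (by simp) ?_
      simp only [Fin.val_succ, Fin.val_rev]
      omega
    · intro h i h0 h1
      have := h ⟨e - i, by omega⟩
      have hi : (⟨e - i, by omega⟩ : Fin e).succ.rev.succ = i := by
        ext
        simp only [Fin.val_succ, Fin.val_rev]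
        omega
      rwa [hi] at this
  simp only [hiff]
  by_cases hA : ∀ i : Fin e, 0 < m i.succ.rev.succ ∧ (Fintype.card F - 1) ∣ m i.succ.rev.succ
  · rw [Finset.prod_congr rfl fun i _ => if_pos (hA i)]
    by_cases hB : (Fintype.card F - 1) ∣ m (Fin.last (e + 1))
    · rw [if_pos hB, if_pos ⟨hA, hB⟩]
      simp [pow_succ]
    · rw [if_neg hB, if_neg fun h => hB h.2, zero_mul]
  · obtain ⟨i, hi⟩ := not_forall.1 hA
    rw [Finset.prod_eq_zero (Finset.mem_univ i) (if_neg hi), mul_zero, if_neg fun h => hA h.1]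

theorem stmt10 (p f q : ℕ) (hp : p.Prime) (hf : 0 < f) (hq : q = p ^ f)
    (F : Type) [Field F] [Fintype F] (hF : Fintype.card F = q)
    (d k : ℕ) (hd : 1 ≤ d) (hk : 0 < k) :
    rPowerSum F X d k =
      (-1 : F[X]) ^ d *
        ∑ᶠ m ∈ Wset p q d k, (Nat.multinomial Finset.univ m : F[X]) * X ^ wt m := by
  subst hF
  obtain ⟨e, rfl⟩ : ∃ e, d = e + 1 := ⟨d - 1, by omega⟩
  have : Fact p.Prime := ⟨hp⟩
  have : CharP F p := by
    obtain ⟨r, hr⟩ := CharP.exists F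
    obtain ⟨n, hr', hn⟩ := FiniteField.card F r
    have hrp : r = p := by
      refine (Nat.prime_dvd_prime_iff_eq hr' hp).1 (hr'.dvd_of_dvd_pow (n := f) ?_)
      rw [← hq, hn]
      exact dvd_pow_self r n.ne_zero
    exact hrp ▸ hr
  have hW : Wset p (Fintype.card F) (e + 1) k =
      ↑((Finset.piAntidiag (Finset.univ : Finset (Fin (e + 1 + 1))) k).filter
        (· ∈ Wset p (Fintype.card F) (e + 1) k)) := by
    ext m
    simp only [Finset.coe_filter, Finset.mem_piAntidiag, Set.mem_ofPred_eq]
    exact ⟨fun h => ⟨⟨h.1.1, fun i _ => Finset.mem_univ i⟩, h⟩, fun h => h.2⟩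
  rw [hW, finsum_mem_coe_finset, Finset.sum_filter, Finset.mul_sum, rPowerSum]
  simp only [X_dvd_monicPoly, monicPoly_pow]
  have hswap : ∀ c : Fin (e + 1) → F, (if c 0 = 0 then (0 : F[X]) else
      ∑ m ∈ Finset.piAntidiag (Finset.univ : Finset (Fin (e + 1 + 1))) k,
        (Nat.multinomial Finset.univ m : F[X]) * X ^ wt m * C (∏ i, c i ^ m i.rev.succ)) =
      ∑ m ∈ Finset.piAntidiag (Finset.univ : Finset (Fin (e + 1 + 1))) k,
        (Nat.multinomial Finset.univ m : F[X]) * X ^ wt m *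
          C (if c 0 = 0 then 0 else ∏ i, c i ^ m i.rev.succ) := fun c => by
    split_ifs <;> simp
  simp only [hswap]
  rw [Finset.sum_comm]
  refine Finset.sum_congr rfl fun m hm => ?_
  rw [← Finset.mul_sum, ← map_sum, sum_prod_pow]
  by_cases hmult : p ∣ Nat.multinomial Finset.univ m
  · have h0 : (Nat.multinomial Finset.univ m : F[X]) = 0 := (CharP.cast_eq_zero_iff F[X] p _).2 hmult
    simp [h0]
  · have hnc := noCarry_of_not_dvd hp m k (Finset.mem_piAntidiag.1 hm).1 hmult
    have hmem : m ∈ Wset p (Fintype.card F) (e + 1) k ↔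
        ((∀ i : Fin (e + 1 + 1), 0 < (i : ℕ) → (i : ℕ) < e + 1 →
          0 < m i ∧ (Fintype.card F - 1) ∣ m i) ∧
          (Fintype.card F - 1) ∣ m (Fin.last (e + 1))) := ⟨fun h => h.2, fun h => ⟨hnc, h⟩⟩
    by_cases h : m ∈ Wset p (Fintype.card F) (e + 1) k
    · rw [if_pos h, if_pos (hmem.1 h), map_pow, map_neg, map_one, mul_comm]
    · rw [if_neg h, if_neg (mt hmem.2 h), map_zero, mul_zero, mul_zero]
end
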